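/- Let j ≥ −1, k ∈ {−1,0,1}, l ≥ 0, and let m be an integer with 0 ≤ m < j. Suppose 1 ≤ p ≤ q and 1/p + 1/q ≤ 1. Then there is a constant C (independent of j, l, m, g) such that ‖ φ_{k,l}(r,t) 𝒰_t 𝒫_{j,m} g ‖_{L^q(ℝ²×[1,2], dr dx₃ dt)} ≤ C · 2^{−j/2} 2^{l/q} 2^{(2/q)(m/2 − l) + ((j−m)/2)(1 − 1/p − 1/q) + (3j/2)(1/p − 1/q)} ‖g‖_{L^p}. -/

import Mathlib

open MeasureTheory Real Set
open scoped ENNReal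

noncomputable section

/-- Euclidean norm on `ℝ²` (the product norm on `ℝ × ℝ` is the sup norm, so we
spell out the Euclidean one). -/
def enorm2 (ξ : ℝ × ℝ) : ℝ := Real.sqrt (ξ.1 ^ 2 + ξ.2 ^ 2)

/-- Fourier transform on `ℝ²` (nonunitary convention). -/
def ft2 (g : ℝ × ℝ → ℂ) (ξ : ℝ × ℝ) : ℂ :=
  ∫ y : ℝ × ℝ, Complex.exp (-(Complex.I) * ((y.1 * ξ.1 + y.2 * ξ.2 : ℝ) : ℂ)) * g y

/-- Fourier transform of the arclength measure `dσ` on the unit circle in `ℝ²`. -/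
def sigmaHat (ξ : ℝ × ℝ) : ℂ :=
  ∫ θ in Set.Ioc (0:ℝ) (2 * π),
    Complex.exp (-(Complex.I) * ((ξ.1 * Real.cos θ + ξ.2 * Real.sin θ : ℝ) : ℂ))

/-- The operator `𝒜_t g(r,x₃) = (2π)⁻² ∫ e^{i(((r²+t²)/2)ξ₁+x₃ξ₂)} \widehat{dσ}(trξ) ĝ(ξ) dξ`. -/
def Aop (g : ℝ × ℝ → ℂ) (t r x₃ : ℝ) : ℂ :=
  (((2 * π) ^ (-2 : ℤ) : ℝ) : ℂ) *
    ∫ ξ : ℝ × ℝ,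
      Complex.exp (Complex.I * ((((r ^ 2 + t ^ 2) / 2) * ξ.1 + x₃ * ξ.2 : ℝ) : ℂ)) *
        sigmaHat (t * r * ξ.1, t * r * ξ.2) * ft2 g ξ

/-- A Littlewood–Paley bump: nonnegative, smooth, supported in `[1−10⁻³, 2+10⁻³]`,
with `∑_{j∈ℤ} φ(2^{−j}s) = 1` for all `s > 0`. -/
def IsLPBump (φ : ℝ → ℝ) : Prop :=
  ContDiff ℝ (⊤ : ℕ∞) φ ∧ (∀ s, 0 ≤ φ s) ∧
    Function.support φ ⊆ Set.Icc (1 - 1/1000) (2 + 1/1000) ∧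
    ∀ s : ℝ, 0 < s → HasSum (fun j : ℤ => φ ((2:ℝ) ^ (-j) * s)) 1

/-- The Littlewood–Paley projection `𝒫_j`, defined via its multiplier `φ(2^{−j}|ξ|)`. -/
def proj (φ : ℝ → ℝ) (j : ℤ) (g : ℝ × ℝ → ℂ) (x : ℝ × ℝ) : ℂ :=
  (((2 * π) ^ (-2 : ℤ) : ℝ) : ℂ) *
    ∫ ξ : ℝ × ℝ,
      Complex.exp (Complex.I * ((x.1 * ξ.1 + x.2 * ξ.2 : ℝ) : ℂ)) *
        ((φ ((2:ℝ) ^ (-j) * enorm2 ξ) : ℝ) : ℂ) * ft2 g ξ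

/-- `φ_{<ℓ}(s) = ∑_{j<ℓ} φ(2^{−j} s)`. -/
def philt (φ : ℝ → ℝ) (l : ℤ) (s : ℝ) : ℝ :=
  ∑' j : ℤ, if j < l then φ ((2:ℝ) ^ (-j) * s) else 0

/-- The projection `𝒫_{<ℓ}`, with multiplier `φ_{<ℓ}(|ξ|)`. -/
def projLt (φ : ℝ → ℝ) (l : ℤ) (g : ℝ × ℝ → ℂ) (x : ℝ × ℝ) : ℂ :=
  (((2 * π) ^ (-2 : ℤ) : ℝ) : ℂ) *
    ∫ ξ : ℝ × ℝ,
      Complex.exp (Complex.I * ((x.1 * ξ.1 + x.2 * ξ.2 : ℝ) : ℂ)) *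
        ((philt φ l (enorm2 ξ) : ℝ) : ℂ) * ft2 g ξ

/-- The operator `𝒰_t g(r,x₃) = ∫ e^{i(((r²+t²)/2)ξ₁+x₃ξ₂+tr|ξ|)} |rξ|^{−1/2} ĝ(ξ) dξ`. -/
def Uop (g : ℝ × ℝ → ℂ) (t r x₃ : ℝ) : ℂ :=
  ∫ ξ : ℝ × ℝ,
    Complex.exp (Complex.I *
        ((((r ^ 2 + t ^ 2) / 2) * ξ.1 + x₃ * ξ.2 + t * r * enorm2 ξ : ℝ) : ℂ)) *
      (((|r| * enorm2 ξ) ^ (-(1:ℝ)/2) : ℝ) : ℂ) * ft2 g ξ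

/-- The angular cutoff `ψ_m(ξ) = φ(2^m |ξ₁/|ξ| + 1|)`. -/
def psiA (φ : ℝ → ℝ) (m : ℤ) (ξ : ℝ × ℝ) : ℝ :=
  φ ((2:ℝ) ^ m * |ξ.1 / enorm2 ξ + 1|)

/-- The projection `𝒫_{j,m}` with multiplier `φ_j(|ξ|) ψ_m(ξ)`. -/
def projJM (φ : ℝ → ℝ) (j m : ℤ) (g : ℝ × ℝ → ℂ) (x : ℝ × ℝ) : ℂ :=
  (((2 * π) ^ (-2 : ℤ) : ℝ) : ℂ) *
    ∫ ξ : ℝ × ℝ,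
      Complex.exp (Complex.I * ((x.1 * ξ.1 + x.2 * ξ.2 : ℝ) : ℂ)) *
        ((φ ((2:ℝ) ^ (-j) * enorm2 ξ) * psiA φ m ξ : ℝ) : ℂ) * ft2 g ξ

/-- `φ_{k,l}(r,t) = φ_k(r) φ(2^l |r−t|)`. -/
def phikl (φ : ℝ → ℝ) (k l : ℤ) (r t : ℝ) : ℝ :=
  φ ((2:ℝ) ^ (-k) * r) * φ ((2:ℝ) ^ l * |r - t|)

/-!
Write `λ = 2 ^ j` and `M = 2 ^ (m / 2)`. After the dilation `ξ = λ ω`, the kernel of the localized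
operator is, up to translation and a factor `λ²`, an oscillatory integral
`∫ e^{i λ u (c - v · (cos θ, sin θ))} f(u) χ(θ) du dθ` in polar coordinates, with `c = t r` and the
angular cutoff `χ` supported in `|θ| ≲ M⁻¹`. It is concentrated in a `λ⁻¹ × M⁻¹` neighbourhood of
`(±c, 0)` on the circle `|v| = c`: multiplication by `λ (|v|² - c²)` or by `M v₂` amounts, after
integration by parts, to a bounded change of the profiles `f` and `χ`, so the `L²` bounds given by
Plancherel's theorem persist with these weights. Cauchy-Schwarz then bounds the kernel in `L¹`, and
the decay of the radial integral bounds it uniformly.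

The gain in `L²` comes from slicing the tube `|r - t| ≲ 2 ^ (-l)` along `r = t + w`: for fixed `w`
the phase is `t (t + w) (ξ₁ + |ξ|) + x₃ ξ₂` up to a term independent of `(t, x₃)`, and the change of
variables `ξ ↦ (ξ₁ + |ξ|, ξ₂)` has Jacobian `1 + ξ₁ / |ξ| ∼ M⁻²`. Hence each slice costs `M²`, and
the thickness of the tube gains `2 ^ (-l)`. For `2 < q < ∞` the theorem follows by a real
interpolation argument: at each height the input is split according to its size, the `L²` bound is
used on the large part and the kernel bounds on the small one.
-/

/-! ### Plancherel's theorem and oscillatory integrals in `L²` -/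

lemma sq_lintegral_mul_le {X : Type*} [MeasurableSpace X] {μ : Measure X} {f g : X → ℝ≥0∞}
    (hf : AEMeasurable f μ) (hg : AEMeasurable g μ) :
    (∫⁻ x, f x * g x ∂μ) ^ 2 ≤ (∫⁻ x, f x ^ 2 ∂μ) * ∫⁻ x, g x ^ 2 ∂μ := by
  have h := ENNReal.rpow_le_rpow
    (ENNReal.lintegral_mul_le_Lp_mul_Lq μ Real.HolderConjugate.two_two hf hg) zero_le_two
  rw [ENNReal.mul_rpow_of_nonneg _ _ zero_le_two, ← ENNReal.rpow_mul, ← ENNReal.rpow_mul] at h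
  simpa using h

lemma sq_lintegral_le_mul_of_weight {X : Type*} [MeasurableSpace X] {μ : Measure X} {w : X → ℝ}
    {f : X → ℝ≥0∞} (hw : ∀ x, 0 < w x) (hwm : Measurable w) (hf : AEMeasurable f μ) :
    (∫⁻ x, f x ∂μ) ^ 2 ≤
      (∫⁻ x, ENNReal.ofReal (w x)⁻¹ ∂μ) * ∫⁻ x, ENNReal.ofReal (w x) * f x ^ 2 ∂μ := by
  have hsqrt (x : X) : 0 < √(w x) := Real.sqrt_pos.2 (hw x)
  calc (∫⁻ x, f x ∂μ) ^ 2
      = (∫⁻ x, ENNReal.ofReal (√(w x))⁻¹ * (ENNReal.ofReal √(w x) * f x) ∂μ) ^ 2 := by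
        congr 1
        refine lintegral_congr fun x => ?_
        rw [← mul_assoc, ← ENNReal.ofReal_mul (inv_pos.2 (hsqrt x)).le,
          inv_mul_cancel₀ (hsqrt x).ne', ENNReal.ofReal_one, one_mul]
    _ ≤ (∫⁻ x, ENNReal.ofReal (√(w x))⁻¹ ^ 2 ∂μ) * ∫⁻ x, (ENNReal.ofReal √(w x) * f x) ^ 2 ∂μ :=
        sq_lintegral_mul_le (by fun_prop) (by fun_prop)
    _ = _ := by
        simp only [mul_pow, ← ENNReal.ofReal_pow (hsqrt _).le,
          ← ENNReal.ofReal_pow (inv_pos.2 (hsqrt _)).le, inv_pow, Real.sq_sqrt (hw _).le]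

lemma eLpNorm_two_sq {X E : Type*} [MeasurableSpace X] [NormedAddCommGroup E] {μ : Measure X}
    (f : X → E) : eLpNorm f 2 μ ^ 2 = ∫⁻ x, ‖f x‖ₑ ^ 2 ∂μ := by
  simpa using eLpNorm_nnreal_pow_eq_lintegral (μ := μ) (f := f) (p := 2) two_ne_zero

section Plancherel

open FourierTransform SchwartzMap
open scoped InnerProductSpace

variable {V : Type*} [NormedAddCommGroup V] [InnerProductSpace ℝ V] [FiniteDimensional ℝ V]
  [MeasurableSpace V] [BorelSpace V]

lemma fourier_toLp_ae_eq {F : Type*} [NormedAddCommGroup F] [InnerProductSpace ℂ F]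
    [CompleteSpace F] {f : V → F} (hf : Integrable f) (hf₂ : MemLp f 2) :
    ⇑(𝓕 (hf₂.toLp f) : Lp F 2 (volume : Measure V)) =ᵐ[volume] 𝓕 f := by
  have hcont : Continuous (𝓕 f) := VectorFourier.fourierIntegral_continuous
    continuous_fourierChar continuous_inner hf
  refine ae_eq_of_integral_contDiff_smul_eq
    ((Lp.memLp (𝓕 (hf₂.toLp f) : Lp F 2 (volume : Measure V))).locallyIntegrable one_le_two)
    hcont.locallyIntegrable
    fun χ χ_smooth χ_supp => ?_
  have χ_smooth' : ContDiff ℝ (⊤ : ℕ∞) (Complex.ofRealCLM ∘ χ) := by fun_prop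
  have χ_supp' : HasCompactSupport (Complex.ofRealCLM ∘ χ) := χ_supp.comp_left rfl
  set χ' : 𝓢(V, ℂ) := χ_supp'.toSchwartzMap χ_smooth' with hχ'
  calc ∫ x, χ x • (𝓕 (hf₂.toLp f) : Lp F 2 (volume : Measure V)) x
      = Lp.toTemperedDistribution (𝓕 (hf₂.toLp f)) χ' := by simp [hχ']
    _ = Lp.toTemperedDistribution (hf₂.toLp f) (𝓕 χ') := by
        rw [← Lp.fourier_toTemperedDistribution_eq, TemperedDistribution.fourier_apply]
    _ = ∫ x, (𝓕 χ') x • f x := by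
        rw [Lp.toTemperedDistribution_apply]
        exact integral_congr_ae (hf₂.coeFn_toLp.mono fun x hx => by simp only [hx])
    _ = ∫ x, χ' x • 𝓕 f x := by
        rw [fourier_coe]
        exact (VectorFourier.integral_fourierIntegral_smul_eq_flip (L := innerₗ V)
          continuous_fourierChar continuous_inner χ'.integrable hf).trans (by rw [flip_innerₗ]; rfl)
    _ = ∫ x, χ x • 𝓕 f x := by simp [hχ']

lemma eLpNorm_fourier_eq {F : Type*} [NormedAddCommGroup F] [InnerProductSpace ℂ F]
    [CompleteSpace F] {f : V → F} (hf : Integrable f) (hf₂ : MemLp f 2) :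
    eLpNorm (𝓕 f) 2 volume = eLpNorm f 2 volume := by
  rw [← eLpNorm_congr_ae (fourier_toLp_ae_eq hf hf₂), ← eLpNorm_congr_ae hf₂.coeFn_toLp,
    ← Lp.enorm_def, ← Lp.enorm_def, ← ofReal_norm, ← ofReal_norm, Lp.norm_fourier_eq]

variable {X : Type*} [MeasurableSpace X] {μ : Measure X} {Φ : X → V} {h : X → ℂ}

lemma continuous_integral_fourierChar_smul (hΦ : Measurable Φ) (hh : Integrable h μ) :
    Continuous fun x => ∫ ξ, 𝐞 (-⟪Φ ξ, x⟫_ℝ) • h ξ ∂μ := by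
  refine continuous_of_dominated (bound := fun ξ => ‖h ξ‖) (fun x => ?_)
    (fun x => .of_forall fun ξ => (Circle.norm_smul _ _).le) hh.norm (.of_forall fun ξ => ?_)
  · exact (continuous_fourierChar.comp_aestronglyMeasurable
      (Measurable.aestronglyMeasurable (by fun_prop))).fun_smul hh.1
  · exact (continuous_fourierChar.comp (by fun_prop)).smul continuous_const

lemma integral_mul_integral_fourierChar_smul [SFinite μ] (hΦ : Measurable Φ) (hh : Integrable h μ)
    {F : V → ℂ} (hF : Integrable F) :
    ∫ x, F x * ∫ ξ, 𝐞 (-⟪Φ ξ, x⟫_ℝ) • h ξ ∂μ = ∫ ξ, h ξ * 𝓕 F (Φ ξ) ∂μ := by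
  have hint : Integrable (fun p : V × X => F p.1 * (𝐞 (-⟪Φ p.2, p.1⟫_ℝ) • h p.2))
      (volume.prod μ) := by
    refine (hF.mul_prod hh).mono ?_ (.of_forall fun p => by simp [Circle.norm_smul])
    refine hF.1.comp_fst.mul (AEStronglyMeasurable.fun_smul ?_ hh.1.comp_snd)
    exact continuous_fourierChar.comp_aestronglyMeasurable
      (Measurable.aestronglyMeasurable (by fun_prop))
  simp only [← integral_const_mul, fourier_eq]
  rw [integral_integral_swap hint]
  refine integral_congr_ae (.of_forall fun ξ => integral_congr_ae (.of_forall fun x => ?_))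
  simp only [Circle.smul_def, smul_eq_mul, real_inner_comm x]
  ring

lemma enorm_integral_mul_integral_fourierChar_smul_sq_le [SFinite μ] (hΦ : Measurable Φ)
    {M : ℝ≥0∞} (hM : μ.map Φ ≤ M • volume) (hh : Integrable h μ) {F : V → ℂ} (hF : Integrable F)
    (hF₂ : MemLp F 2) :
    ‖∫ x, F x * ∫ ξ, 𝐞 (-⟪Φ ξ, x⟫_ℝ) • h ξ ∂μ‖ₑ ^ 2 ≤
      M * (∫⁻ ξ, ‖h ξ‖ₑ ^ 2 ∂μ) * ∫⁻ x, ‖F x‖ₑ ^ 2 := by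
  have h𝓕F : Measurable fun y => ‖𝓕 F y‖ₑ := (VectorFourier.fourierIntegral_continuous
    continuous_fourierChar continuous_inner hF).measurable.enorm
  calc ‖∫ x, F x * ∫ ξ, 𝐞 (-⟪Φ ξ, x⟫_ℝ) • h ξ ∂μ‖ₑ ^ 2
      ≤ (∫⁻ ξ, ‖h ξ * 𝓕 F (Φ ξ)‖ₑ ∂μ) ^ 2 := by
        rw [integral_mul_integral_fourierChar_smul hΦ hh hF]
        gcongr
        exact enorm_integral_le_lintegral_enorm _
    _ ≤ (∫⁻ ξ, ‖h ξ‖ₑ ^ 2 ∂μ) * ∫⁻ ξ, ‖𝓕 F (Φ ξ)‖ₑ ^ 2 ∂μ := by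
        simp only [enorm_mul]
        exact sq_lintegral_mul_le hh.1.enorm (h𝓕F.comp hΦ).aemeasurable
    _ = (∫⁻ ξ, ‖h ξ‖ₑ ^ 2 ∂μ) * ∫⁻ y, ‖𝓕 F y‖ₑ ^ 2 ∂μ.map Φ := by
        rw [lintegral_map (h𝓕F.pow_const 2) hΦ]
    _ ≤ (∫⁻ ξ, ‖h ξ‖ₑ ^ 2 ∂μ) * ∫⁻ y, ‖𝓕 F y‖ₑ ^ 2 ∂(M • volume) := by gcongr
    _ = M * (∫⁻ ξ, ‖h ξ‖ₑ ^ 2 ∂μ) * ∫⁻ x, ‖F x‖ₑ ^ 2 := by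
        rw [lintegral_smul_measure, smul_eq_mul, ← eLpNorm_two_sq (𝓕 F), eLpNorm_fourier_eq hF hF₂,
          eLpNorm_two_sq F]
        ring

-- Test against the conjugate of `I`, cut off to the compact set.
lemma setLIntegral_enorm_sq_le_of_forall_integral_mul {I : V → ℂ} (hI : Continuous I) {A : ℝ≥0∞}
    (hA : ∀ F : V → ℂ, Integrable F → MemLp F 2 →
      ‖∫ x, F x * I x‖ₑ ^ 2 ≤ A * ∫⁻ x, ‖F x‖ₑ ^ 2) {s : Set V} (hs : IsCompact s) :
    ∫⁻ x in s, ‖I x‖ₑ ^ 2 ≤ A := by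
  set F : V → ℂ := s.indicator fun x => starRingEnd ℂ (I x) with hF
  set S := ∫⁻ x in s, ‖I x‖ₑ ^ 2 with hS
  have hFmem (p : ℝ≥0∞) : MemLp F p := by
    obtain ⟨C, hC⟩ := hs.exists_bound_of_continuousOn (Complex.continuous_conj.comp hI).continuousOn
    have : IsFiniteMeasure (volume.restrict s) := ⟨by simpa using hs.measure_lt_top⟩
    exact (memLp_indicator_iff_restrict hs.measurableSet).2 <| .of_bound
      (Complex.continuous_conj.comp hI).aestronglyMeasurable C
      (ae_restrict_of_forall_mem hs.measurableSet hC)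
  have hFsq : ∫⁻ x, ‖F x‖ₑ ^ 2 = S := by
    rw [hS, ← lintegral_indicator hs.measurableSet]
    refine lintegral_congr fun x => ?_
    by_cases hx : x ∈ s <;> simp [hF, hx]
  have hS_ne_top : S ≠ ⊤ := by
    rw [← hFsq, ← eLpNorm_two_sq]
    exact ENNReal.pow_ne_top (hFmem 2).eLpNorm_lt_top.ne
  have hpair : ∫ x, F x * I x = (S.toReal : ℂ) := by
    have hprod (x : V) : F x * I x = ((s.indicator (fun x => ‖I x‖ ^ 2) x : ℝ) : ℂ) := by
      by_cases hx : x ∈ s <;> simp [hF, hx, Complex.conj_mul']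
    simp only [hprod, integral_complex_ofReal, integral_indicator hs.measurableSet]
    rw [integral_eq_lintegral_of_nonneg_ae (.of_forall fun x => sq_nonneg _)
      (hI.norm.pow 2).aestronglyMeasurable]
    simp [hS, ENNReal.ofReal_pow]
  have hSsq : S * S ≤ A * S := by
    have := hA F (memLp_one_iff_integrable.1 (hFmem 1)) (hFmem 2)
    rwa [hpair, hFsq, ← ofReal_norm, Complex.norm_real, norm_of_nonneg ENNReal.toReal_nonneg,
      ENNReal.ofReal_toReal hS_ne_top, sq] at this
  rcases eq_or_ne S 0 with hS0 | hS0
  · simp [hS0]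
  · exact (ENNReal.mul_le_mul_iff_left hS0 hS_ne_top).1 hSsq

lemma lintegral_integral_fourierChar_smul_sq_le [SFinite μ] (hΦ : Measurable Φ) {M : ℝ≥0∞}
    (hM : μ.map Φ ≤ M • volume) (hh : Integrable h μ) :
    ∫⁻ x, ‖∫ ξ, 𝐞 (-⟪Φ ξ, x⟫_ℝ) • h ξ ∂μ‖ₑ ^ 2 ≤ M * ∫⁻ ξ, ‖h ξ‖ₑ ^ 2 ∂μ := by
  have hcont := continuous_integral_fourierChar_smul hΦ hh
  have hcover : AECover (volume : Measure V) Filter.atTop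
      fun n : ℕ => Metric.closedBall (0 : V) n := aecover_closedBall tendsto_natCast_atTop_atTop
  refine le_of_tendsto' (hcover.lintegral_tendsto_of_countably_generated
    (hcont.enorm.measurable.pow_const 2).aemeasurable) fun n => ?_
  exact setLIntegral_enorm_sq_le_of_forall_integral_mul hcont
    (fun F hF hF₂ => enorm_integral_mul_integral_fourierChar_smul_sq_le hΦ hM hh hF hF₂)
    (isCompact_closedBall 0 (n : ℝ))

end Plancherel

lemma lintegral_comp_smul {E : Type*} [NormedAddCommGroup E] [NormedSpace ℝ E]
    [FiniteDimensional ℝ E] [MeasurableSpace E] [BorelSpace E] (μ : Measure E) [μ.IsAddHaarMeasure]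
    {a : ℝ} (ha : a ≠ 0) {F : E → ℝ≥0∞} (hF : Measurable F) :
    ∫⁻ x, F (a • x) ∂μ = ENNReal.ofReal |(a ^ Module.finrank ℝ E)⁻¹| * ∫⁻ x, F x ∂μ := by
  rw [← lintegral_map hF (measurable_const_smul a), Measure.map_addHaar_smul μ ha,
    lintegral_smul_measure, smul_eq_mul]

/-- The exponential `e^{ix}`, the building block of all the oscillatory integrals here. -/
def osc (x : ℝ) : ℂ := Complex.exp (Complex.I * (x : ℂ))

lemma osc_add (x y : ℝ) : osc (x + y) = osc x * osc y := by
  simp [osc, mul_add, Complex.exp_add]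

lemma norm_osc (x : ℝ) : ‖osc x‖ = 1 := by
  rw [osc, mul_comm]; exact Complex.norm_exp_ofReal_mul_I x

lemma enorm_osc (x : ℝ) : ‖osc x‖ₑ = 1 := by
  rw [← ofReal_norm, norm_osc, ENNReal.ofReal_one]

lemma continuous_osc : Continuous osc := by unfold osc; fun_prop

lemma measurable_osc : Measurable osc := continuous_osc.measurable

lemma osc_eq_fourierChar (x : ℝ) : osc x = Real.fourierChar (x / (2 * π)) := by
  rw [osc, Real.fourierChar_apply]
  congr 1
  push_cast
  field_simp

lemma lintegral_oscillatory_sq_le {X : Type*} [MeasurableSpace X] (μ : Measure X)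
    [SFinite μ] {Φ : X → ℝ × ℝ} (hΦ : Measurable Φ) {h : X → ℂ} (hh : Integrable h μ)
    {M : ℝ≥0∞} (hM : ∀ f : ℝ × ℝ → ℝ≥0∞, Measurable f → ∫⁻ ξ, f (Φ ξ) ∂μ ≤ M * ∫⁻ x, f x) :
    ∫⁻ x : ℝ × ℝ, ‖∫ ξ, osc (x.1 * (Φ ξ).1 + x.2 * (Φ ξ).2) * h ξ ∂μ‖ₑ ^ 2 ≤
      ENNReal.ofReal ((2 * π) ^ 2) * M * ∫⁻ ξ, ‖h ξ‖ₑ ^ 2 ∂μ := by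
  set Ψ : X → ℂ := fun ξ => Complex.measurableEquivRealProd.symm (Φ ξ)
  have hΨm : Measurable Ψ := by fun_prop
  have hΨM : μ.map Ψ ≤ M • volume := by
    refine Measure.le_iff.2 fun s hs => ?_
    have hs' := Complex.measurableEquivRealProd.symm.measurable hs
    have := hM _ (measurable_one.indicator hs')
    rw [lintegral_indicator_one hs', Complex.volume_preserving_equiv_real_prod.symm.measure_preimage
      hs.nullMeasurableSet] at this
    rw [Measure.map_apply hΨm hs, Measure.smul_apply, smul_eq_mul,
      ← lintegral_indicator_one (hΨm hs)]
    exact this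
  set K : ℂ → ℝ≥0∞ := fun y => ‖∫ ξ, Real.fourierChar (-inner ℝ (Ψ ξ) y) • h ξ ∂μ‖ₑ ^ 2
  have hK : Measurable K :=
    (continuous_integral_fourierChar_smul hΨm hh).enorm.measurable.pow_const 2
  have hosc (y : ℂ) : ‖∫ ξ, osc (y.re * (Φ ξ).1 + y.im * (Φ ξ).2) * h ξ ∂μ‖ₑ ^ 2 =
      K (-(2 * π)⁻¹ • y) := by
    have hΨ' (ξ : X) : Ψ ξ = ⟨(Φ ξ).1, (Φ ξ).2⟩ := rfl
    simp only [K, Circle.smul_def, smul_eq_mul, osc_eq_fourierChar, hΨ', Complex.inner]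
    congr! 6 with ξ
    refine congrArg (fun t => (Real.fourierChar t : ℂ)) ?_
    simp
    ring
  calc _ = ∫⁻ y : ℂ, ‖∫ ξ, osc (y.re * (Φ ξ).1 + y.im * (Φ ξ).2) * h ξ ∂μ‖ₑ ^ 2 := by
        rw [← Complex.volume_preserving_equiv_real_prod.lintegral_comp_emb
          Complex.measurableEquivRealProd.measurableEmbedding]
        rfl
    _ = ENNReal.ofReal ((2 * π) ^ 2) * ∫⁻ y, K y := by
        simp only [hosc]
        rw [lintegral_comp_smul _ (neg_ne_zero.2 (inv_ne_zero two_pi_pos.ne')) hK,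
          Complex.finrank_real_complex, neg_sq, inv_pow, inv_inv, abs_of_pos (by positivity)]
    _ ≤ _ := by
        rw [mul_assoc]
        gcongr
        exact lintegral_integral_fourierChar_smul_sq_le hΨm hΨM hh

/-! ### Interpolation between an `L²` bound and kernel bounds -/

lemma lintegral_comp_le_of_deriv_ge {s : Set ℝ} (hs : MeasurableSet s) {ψ ψ' : ℝ → ℝ}
    (hψ : ∀ x ∈ s, HasDerivAt ψ (ψ' x) x) (hinj : InjOn ψ s) {M : ℝ} (hM : 0 < M)
    (hψ' : ∀ x ∈ s, M⁻¹ ≤ |ψ' x|) (f : ℝ → ℝ≥0∞) :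
    ∫⁻ x in s, f (ψ x) ≤ ENNReal.ofReal M * ∫⁻ y, f y := by
  calc ∫⁻ x in s, f (ψ x) ≤ ∫⁻ x in s, ENNReal.ofReal M * (ENNReal.ofReal |ψ' x| * f (ψ x)) := by
        refine setLIntegral_mono' hs fun x hx => ?_
        rw [← mul_assoc, ← ENNReal.ofReal_mul hM.le]
        refine le_mul_of_one_le_left zero_le (ENNReal.one_le_ofReal.2 ?_)
        exact (inv_le_iff_one_le_mul₀' hM).1 (hψ' x hx)
    _ = ENNReal.ofReal M * ∫⁻ x in s, ENNReal.ofReal |ψ' x| * f (ψ x) :=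
        lintegral_const_mul' _ _ ENNReal.ofReal_ne_top
    _ = ENNReal.ofReal M * ∫⁻ y in ψ '' s, f y := by
        rw [lintegral_image_eq_lintegral_abs_deriv_mul hs (fun x hx => (hψ x hx).hasDerivWithinAt)
          hinj]
    _ ≤ ENNReal.ofReal M * ∫⁻ y, f y := by gcongr; exact Measure.restrict_le_self

lemma lintegral_mul_rpow_le {X : Type*} [MeasurableSpace X] {μ : Measure X} {k f : X → ℝ≥0∞}
    (hk : Measurable k) (hf : Measurable f) {p σ : ℝ} (hσ0 : 0 ≤ σ)
    (hσ1 : σ ≤ 1) {N₁ N₂ : ℝ≥0∞} (hN₁ : ∫⁻ x, k x ∂μ ≤ N₁) (hN₂ : ∀ x, k x ≤ N₂) :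
    ∫⁻ x, k x * f x ^ (p * σ) ∂μ ≤ N₁ ^ (1 - σ) * N₂ ^ σ * (∫⁻ x, f x ^ p ∂μ) ^ σ := by
  have hsplit (x : X) : k x * f x ^ (p * σ) = k x ^ (1 - σ) * (k x * f x ^ p) ^ σ := by
    rw [ENNReal.mul_rpow_of_nonneg _ _ hσ0, ← ENNReal.rpow_mul, ← mul_assoc,
      ← ENNReal.rpow_add_of_nonneg _ _ (by linarith) hσ0]
    simp
  calc ∫⁻ x, k x * f x ^ (p * σ) ∂μ
      ≤ (∫⁻ x, k x ∂μ) ^ (1 - σ) * (∫⁻ x, k x * f x ^ p ∂μ) ^ σ := by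
        simp_rw [hsplit]
        exact ENNReal.lintegral_mul_norm_pow_le hk.aemeasurable (by fun_prop) (by linarith) hσ0
          (by ring)
    _ ≤ N₁ ^ (1 - σ) * (N₂ * ∫⁻ x, f x ^ p ∂μ) ^ σ := by
        refine mul_le_mul' (ENNReal.rpow_le_rpow hN₁ (by linarith)) (ENNReal.rpow_le_rpow ?_ hσ0)
        rw [← lintegral_const_mul _ (by fun_prop)]
        exact lintegral_mono fun x => mul_le_mul_left (hN₂ x) _
    _ = _ := by rw [ENNReal.mul_rpow_of_nonneg _ _ hσ0, mul_assoc]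

lemma lintegral_mul_enorm_le_of_rpow_le {X : Type*} [MeasurableSpace X] {μ : Measure X}
    {k : X → ℝ≥0∞} (hk : Measurable k) {g : X → ℂ} (hg : Measurable g) {p σ : ℝ} (hσ0 : 0 ≤ σ)
    (hσ1 : σ ≤ 1) {N₁ N₂ : ℝ≥0∞} (hN₁ : ∫⁻ x, k x ∂μ ≤ N₁) (hN₂ : ∀ x, k x ≤ N₂) {c : ℝ}
    (hc : 0 ≤ c) (hgc : ∀ x, g x ≠ 0 → ‖g x‖ ^ (1 - p * σ) ≤ c) :
    ∫⁻ x, k x * ‖g x‖ₑ ∂μ ≤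
      ENNReal.ofReal c * (N₁ ^ (1 - σ) * N₂ ^ σ * (∫⁻ x, ‖g x‖ₑ ^ p ∂μ) ^ σ) := by
  have hpointwise (x : X) : ‖g x‖ₑ ≤ ENNReal.ofReal c * ‖g x‖ₑ ^ (p * σ) := by
    rcases eq_or_ne (g x) 0 with hgx | hgx
    · simp [hgx]
    have hpos : 0 < ‖g x‖ := norm_pos_iff.2 hgx
    rw [← ofReal_norm, ENNReal.ofReal_rpow_of_pos hpos, ← ENNReal.ofReal_mul hc]
    refine ENNReal.ofReal_le_ofReal ?_
    calc ‖g x‖ = ‖g x‖ ^ (1 - p * σ) * ‖g x‖ ^ (p * σ) := by simp [← Real.rpow_add hpos]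
      _ ≤ c * ‖g x‖ ^ (p * σ) := by gcongr; exact hgc x hgx
  calc ∫⁻ x, k x * ‖g x‖ₑ ∂μ ≤ ∫⁻ x, ENNReal.ofReal c * (k x * ‖g x‖ₑ ^ (p * σ)) ∂μ := by
        refine lintegral_mono fun x => ?_
        rw [mul_left_comm]
        gcongr
        exact hpointwise x
    _ = ENNReal.ofReal c * ∫⁻ x, k x * ‖g x‖ₑ ^ (p * σ) ∂μ :=
        lintegral_const_mul _ (by fun_prop)
    _ ≤ _ := by
        gcongr
        exact lintegral_mul_rpow_le hk hg.enorm hσ0 hσ1 hN₁ hN₂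

lemma meas_lt_norm_add_le {Z E : Type*} [MeasurableSpace Z] [NormedAddCommGroup E] {ν : Measure Z}
    {a b : Z → E} (ha : AEStronglyMeasurable a ν) {τ : ℝ} (hτ : 0 < τ)
    (hb : ∀ z, ‖b z‖ ≤ τ / 2) :
    ν {z | τ < ‖a z + b z‖} ≤ ENNReal.ofReal (τ ^ 2)⁻¹ * (4 * ∫⁻ z, ‖a z‖ₑ ^ 2 ∂ν) := by
  have hsub : {z | τ < ‖a z + b z‖} ⊆ {z | ENNReal.ofReal (τ ^ 2 / 4) ≤ ‖a z‖ₑ ^ 2} := by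
    intro z hz
    have hza : τ / 2 ≤ ‖a z‖ := by
      have : τ < ‖a z + b z‖ := hz
      linarith [norm_add_le (a z) (b z), hb z]
    simp only [mem_ofPred_eq]
    rw [← ofReal_norm, ← ENNReal.ofReal_pow (norm_nonneg _)]
    exact ENNReal.ofReal_le_ofReal (by nlinarith)
  calc ν {z | τ < ‖a z + b z‖} ≤ ν {z | ENNReal.ofReal (τ ^ 2 / 4) ≤ ‖a z‖ₑ ^ 2} :=
        measure_mono hsub
    _ = ENNReal.ofReal (τ ^ 2)⁻¹ * (4 * (ENNReal.ofReal (τ ^ 2 / 4) *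
          ν {z | ENNReal.ofReal (τ ^ 2 / 4) ≤ ‖a z‖ₑ ^ 2})) := by
        rw [← ENNReal.ofReal_ofNat 4, ← mul_assoc, ← mul_assoc,
          ← ENNReal.ofReal_mul (by positivity), ← ENNReal.ofReal_mul (by positivity),
          show (τ ^ 2)⁻¹ * 4 * (τ ^ 2 / 4) = 1 by field_simp, ENNReal.ofReal_one, one_mul]
    _ ≤ _ := by
        gcongr
        exact mul_meas_ge_le_lintegral₀ (ha.enorm.pow_const 2) _

lemma lintegral_Ioc_rpow {s R : ℝ} (hs : -1 < s) (hR : 0 ≤ R) :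
    ∫⁻ t in Ioc 0 R, ENNReal.ofReal (t ^ s) = ENNReal.ofReal (R ^ (s + 1) / (s + 1)) := by
  rw [← ofReal_integral_eq_lintegral_ofReal
    ((intervalIntegrable_iff_integrableOn_Ioc_of_le hR).1
      (intervalIntegral.intervalIntegrable_rpow' hs))
    ((ae_restrict_mem measurableSet_Ioc).mono fun t ht => Real.rpow_nonneg ht.1.le _),
    ← intervalIntegral.integral_of_le hR, integral_rpow (Or.inl hs),
    Real.zero_rpow (by linarith), sub_zero]

lemma lintegral_Ioi_setLIntegral_superlevel {X : Type*} [MeasurableSpace X] {μ : Measure X}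
    [SFinite μ] {F : X → ℝ≥0∞} (hF : Measurable F) {w : X → ℝ} (hw : Measurable w)
    (hw0 : ∀ x, 0 ≤ w x) {s : ℝ} (hs : -1 < s) :
    ∫⁻ t in Ioi (0 : ℝ), (∫⁻ x in {x | t ≤ w x}, F x ∂μ) * ENNReal.ofReal (t ^ s) =
      ∫⁻ x, F x * ENNReal.ofReal (w x ^ (s + 1) / (s + 1)) ∂μ := by
  set J : ℝ × X → ℝ≥0∞ :=
    {z : ℝ × X | z.1 ≤ w z.2}.indicator fun z => F z.2 * ENNReal.ofReal (z.1 ^ s)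
  have hJ : Measurable J :=
    Measurable.indicator (by fun_prop) (measurableSet_le measurable_fst (by fun_prop))
  have hinner (t : ℝ) : (∫⁻ x in {x | t ≤ w x}, F x ∂μ) * ENNReal.ofReal (t ^ s) =
      ∫⁻ x, J (t, x) ∂μ := by
    have hlevel : MeasurableSet {x | t ≤ w x} := measurableSet_le measurable_const hw
    rw [← lintegral_indicator hlevel, ← lintegral_mul_const _ (hF.indicator hlevel)]
    refine lintegral_congr fun x => ?_
    by_cases hx : t ≤ w x <;> simp [J, indicator, hx]
  have houter (x : X) : ∫⁻ t in Ioi (0 : ℝ), J (t, x) =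
      F x * ENNReal.ofReal (w x ^ (s + 1) / (s + 1)) := by
    have hJx (t : ℝ) : J (t, x) =
        (Iic (w x)).indicator (fun t => F x * ENNReal.ofReal (t ^ s)) t := rfl
    simp_rw [hJx]
    rw [lintegral_indicator measurableSet_Iic, Measure.restrict_restrict measurableSet_Iic,
      Iic_inter_Ioi, lintegral_const_mul _ (by fun_prop), lintegral_Ioc_rpow hs (hw0 x)]
  simp_rw [hinner]
  rw [lintegral_lintegral_swap (f := fun t x => J (t, x)) hJ.aemeasurable]
  exact lintegral_congr houter

lemma lintegral_rpow_le_of_meas_lt_le {X Z : Type*} [MeasurableSpace X] [MeasurableSpace Z]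
    {μ : Measure X} [SFinite μ] {ν : Measure Z} {F : X → ℝ≥0∞} (hF : Measurable F) {w : X → ℝ}
    (hw : Measurable w) (hw0 : ∀ x, 0 ≤ w x) {u : Z → ℂ} (hu : AEMeasurable u ν) {A : ℝ≥0∞}
    {q : ℝ} (hq : 2 < q) (hA : ∀ t, 0 < t → ν {z | t < ‖u z‖} ≤
      ENNReal.ofReal (t ^ 2)⁻¹ * (A * ∫⁻ x in {x | t ≤ w x}, F x ∂μ)) :
    ∫⁻ z, ‖u z‖ₑ ^ q ∂ν ≤ ENNReal.ofReal q * (A *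
      ∫⁻ x, F x * ENNReal.ofReal (w x ^ (q - 2) / (q - 2)) ∂μ) := by
  have hq0 : 0 < q := by linarith
  calc ∫⁻ z, ‖u z‖ₑ ^ q ∂ν
      = ∫⁻ z, ENNReal.ofReal (‖u z‖ ^ q) ∂ν := lintegral_congr fun z => by
        rw [← ofReal_norm, ENNReal.ofReal_rpow_of_nonneg (norm_nonneg _) hq0.le]
    _ = ENNReal.ofReal q *
          ∫⁻ t in Ioi 0, ν {z | t < ‖u z‖} * ENNReal.ofReal (t ^ (q - 1)) :=
        lintegral_rpow_eq_lintegral_meas_lt_mul ν (.of_forall fun z => norm_nonneg _) hu.norm hq0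
    _ ≤ ENNReal.ofReal q * ∫⁻ t in Ioi (0 : ℝ), A *
          ((∫⁻ x in {x | t ≤ w x}, F x ∂μ) * ENNReal.ofReal (t ^ (q - 3))) := by
        gcongr ENNReal.ofReal q * ?_
        refine setLIntegral_mono' measurableSet_Ioi fun t (ht : 0 < t) => ?_
        have hpow : t ^ (q - 3) = (t ^ 2)⁻¹ * t ^ (q - 1) := by
          rw [← Real.rpow_natCast, ← Real.rpow_neg ht.le, ← Real.rpow_add ht]
          congr 1
          push_cast
          ring
        refine (mul_le_mul_left (hA t ht) _).trans_eq ?_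
        rw [hpow, ENNReal.ofReal_mul (by positivity)]
        ring
    _ = ENNReal.ofReal q * (A * ∫⁻ x, F x * ENNReal.ofReal (w x ^ (q - 2) / (q - 2)) ∂μ) := by
        have hlevel : Measurable fun t : ℝ => ∫⁻ x in {x | t ≤ w x}, F x ∂μ :=
          Antitone.measurable fun t t' htt' => lintegral_mono_set fun x hx => htt'.trans hx
        rw [lintegral_const_mul _ (by fun_prop),
          lintegral_Ioi_setLIntegral_superlevel hF hw hw0 (by linarith),
          show q - 3 + 1 = q - 2 by ring]

lemma ae_eq_zero_of_lintegral_enorm_rpow_eq_zero {X : Type*} [MeasurableSpace X] {μ : Measure X}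
    {g : X → ℂ} (hgm : Measurable g) {p : ℝ} (hp : 0 < p)
    (h : ∫⁻ x, ‖g x‖ₑ ^ p ∂μ = 0) : g =ᵐ[μ] 0 := by
  rw [lintegral_eq_zero_iff (by fun_prop)] at h
  filter_upwards [h] with x hx
  simpa [hp, hp.not_gt, ENNReal.rpow_eq_zero_iff] using hx

lemma enorm_sq_mul_ofReal_rpow_div (x : ℂ) {M β p q : ℝ} (hM : 0 ≤ M) (hp : 0 < p) (hq : 2 < q)
    (hβ : p = 2 + β * (q - 2)) :
    ‖x‖ₑ ^ 2 * ENNReal.ofReal ((M * ‖x‖ ^ β) ^ (q - 2) / (q - 2)) =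
      ENNReal.ofReal (M ^ (q - 2) / (q - 2)) * ‖x‖ₑ ^ p := by
  have : 0 < q - 2 := by linarith
  rcases eq_or_ne x 0 with hx | hx
  · simp [hx, hp]
  have hpos : 0 < ‖x‖ := norm_pos_iff.2 hx
  rw [← ofReal_norm, ENNReal.ofReal_rpow_of_pos hpos, ← ENNReal.ofReal_pow hpos.le,
    ← ENNReal.ofReal_mul (by positivity), ← ENNReal.ofReal_mul (by positivity),
    Real.mul_rpow hM (by positivity), ← Real.rpow_mul hpos.le, hβ, Real.rpow_add hpos,
    Real.rpow_two]
  congr 1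
  ring

lemma rpow_interpolation_constants {c A N₁ N₂ p q σ : ℝ} (hc : 0 ≤ c) (hA : 0 ≤ A) (hN₁ : 0 ≤ N₁)
    (hN₂ : 0 ≤ N₂) (hp : 0 < p) (hq : 0 < q) (hσ : p * σ * (q - 2) = q - p) :
    (c * A * (N₁ ^ (1 - σ) * N₂ ^ σ) ^ (q - 2)) ^ q⁻¹ =
      c ^ q⁻¹ * (A ^ q⁻¹ * N₁ ^ (1 - p⁻¹ - q⁻¹) * N₂ ^ (p⁻¹ - q⁻¹)) := by
  have hexp₁ : (1 - σ) * (q - 2) * q⁻¹ = 1 - p⁻¹ - q⁻¹ := by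
    field_simp
    linear_combination -hσ
  have hexp₂ : σ * (q - 2) * q⁻¹ = p⁻¹ - q⁻¹ := by
    field_simp
    linear_combination hσ
  rw [Real.mul_rpow (by positivity) (by positivity), Real.mul_rpow hc hA,
    ← Real.rpow_mul (by positivity), Real.mul_rpow (by positivity) (by positivity),
    ← Real.rpow_mul hN₁, ← Real.rpow_mul hN₂, ← mul_assoc (1 - σ), ← mul_assoc σ, hexp₁, hexp₂]
  ring

lemma mul_mul_rpow_rpow_mul_self {a b n p q σ : ℝ} (ha : 0 ≤ a) (hb : 0 ≤ b) (hn : 0 < n)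
    (hp : p ≠ 0) (hσ : p * σ * (q - 2) = q - p) :
    (a * b * n ^ σ) ^ (q - 2) * n = a ^ (q - 2) * b ^ (q - 2) * n ^ (q / p) := by
  rw [show q / p = 1 + σ * (q - 2) by field_simp; linarith, Real.rpow_add hn,
    Real.rpow_mul hn.le, Real.mul_rpow (by positivity) (by positivity), Real.mul_rpow ha hb,
    Real.rpow_one]
  ring

lemma toReal_inv_add_toReal_inv_le_one {p q : ℝ≥0∞} (hp : p ≠ 0) (hq : q ≠ 0)
    (hpq : p⁻¹ + q⁻¹ ≤ 1) : p.toReal⁻¹ + q.toReal⁻¹ ≤ 1 := by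
  have hle := ENNReal.toReal_mono ENNReal.one_ne_top hpq
  rwa [ENNReal.toReal_add (by simpa using hp) (by simpa using hq), ENNReal.toReal_inv,
    ENNReal.toReal_inv, ENNReal.toReal_one] at hle

section KernelDomination

variable {X Z : Type*} [MeasurableSpace X] [MeasurableSpace Z] {μ : Measure X} {ν : Measure Z}
  {T : (X → ℂ) → Z → ℂ} {k : Z → X → ℝ≥0∞} {N₁ N₂ A : ℝ} {g : X → ℂ}

/-- An additive operator `T` on integrable functions whose kernel is dominated by `k`, together with
a Schur-type bound `N₁` and a supremum bound `N₂` for `k`, and an `L²` bound for `T` with constant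
`A ^ (1 / 2)`. These are the endpoint estimates between which `T` is interpolated. -/
structure IsKernelDominated (T : (X → ℂ) → Z → ℂ) (k : Z → X → ℝ≥0∞) (μ : Measure X)
    (ν : Measure Z) (N₁ N₂ A : ℝ) : Prop where
  schur_pos : 0 < N₁
  sup_pos : 0 < N₂
  sq_pos : 0 < A
  map_add : ∀ f g, Integrable f μ → Integrable g μ → T (f + g) = T f + T g
  aemeasurable : ∀ g, Integrable g μ → AEMeasurable (T g) ν
  measurable_kernel : ∀ z, Measurable (k z)
  lintegral_kernel_le : ∀ z, ∫⁻ x, k z x ∂μ ≤ ENNReal.ofReal N₁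
  kernel_le : ∀ z x, k z x ≤ ENNReal.ofReal N₂
  enorm_le : ∀ g, Integrable g μ → ∀ z, ‖T g z‖ₑ ≤ ∫⁻ x, k z x * ‖g x‖ₑ ∂μ
  lintegral_sq_le : ∀ g, Integrable g μ →
    ∫⁻ z, ‖T g z‖ₑ ^ 2 ∂ν ≤ ENNReal.ofReal A * ∫⁻ x, ‖g x‖ₑ ^ 2 ∂μ

namespace IsKernelDominated

lemma norm_le_of_rpow_le (hT : IsKernelDominated T k μ ν N₁ N₂ A) {p σ D n : ℝ} (hσ0 : 0 ≤ σ)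
    (hσ1 : σ ≤ 1) (hD : 0 ≤ D) (hn : 0 < n) (hg : Integrable g μ) (hgm : Measurable g)
    (hgp : ∫⁻ x, ‖g x‖ₑ ^ p ∂μ ≤ ENNReal.ofReal n)
    (hgD : ∀ x, g x ≠ 0 → ‖g x‖ ^ (1 - p * σ) ≤ D) (z : Z) :
    ‖T g z‖ ≤ D * (N₁ ^ (1 - σ) * N₂ ^ σ * n ^ σ) := by
  have := hT.schur_pos
  have := hT.sup_pos
  rw [← ENNReal.ofReal_le_ofReal_iff (by positivity), ofReal_norm]
  calc _ ≤ _ := (hT.enorm_le g hg z).trans (lintegral_mul_enorm_le_of_rpow_le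
          (hT.measurable_kernel z) hgm hσ0 hσ1 (hT.lintegral_kernel_le z) (hT.kernel_le z) hD hgD)
    _ ≤ ENNReal.ofReal D * (ENNReal.ofReal N₁ ^ (1 - σ) * ENNReal.ofReal N₂ ^ σ *
          ENNReal.ofReal n ^ σ) := by gcongr
    _ = _ := by
        rw [ENNReal.ofReal_rpow_of_pos hT.schur_pos, ENNReal.ofReal_rpow_of_pos hT.sup_pos,
          ENNReal.ofReal_rpow_of_pos hn, ← ENNReal.ofReal_mul (by positivity),
          ← ENNReal.ofReal_mul (by positivity), ← ENNReal.ofReal_mul hD]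

-- Split `g` at the height where the kernel bounds give `‖T g‖ ≤ τ / 2` for the small part; the
-- `L²` bound with Chebyshev's inequality controls the large part.
lemma meas_lt_norm_le (hT : IsKernelDominated T k μ ν N₁ N₂ A) {p σ : ℝ} (hp : 0 < p)
    (hσ0 : 0 ≤ σ) (hσ1 : σ ≤ 1) (hg : Integrable g μ) (hgm : Measurable g) {n : ℝ} (hn : 0 < n)
    (hgp : ∫⁻ x, ‖g x‖ₑ ^ p ∂μ ≤ ENNReal.ofReal n) {τ : ℝ} (hτ : 0 < τ) :
    ν {z | τ < ‖T g z‖} ≤ ENNReal.ofReal (τ ^ 2)⁻¹ * (4 * ENNReal.ofReal A *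
      ∫⁻ x in {x | τ ≤ 2 * (N₁ ^ (1 - σ) * N₂ ^ σ) * n ^ σ * ‖g x‖ ^ (1 - p * σ)},
        ‖g x‖ₑ ^ 2 ∂μ) := by
  have := hT.schur_pos
  have := hT.sup_pos
  set M : ℝ := 2 * (N₁ ^ (1 - σ) * N₂ ^ σ) * n ^ σ with hM
  have hM0 : 0 < M := by positivity
  set G : Set X := {x | τ ≤ M * ‖g x‖ ^ (1 - p * σ)}
  have hGm : MeasurableSet G := measurableSet_le measurable_const (by fun_prop)
  have hsmall (z : Z) : ‖T (Gᶜ.indicator g) z‖ ≤ τ / 2 := by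
    have hGc (x : X) (hx : Gᶜ.indicator g x ≠ 0) :
        ‖Gᶜ.indicator g x‖ ^ (1 - p * σ) ≤ τ / M := by
      have hxG : x ∈ Gᶜ := mem_of_indicator_ne_zero hx
      rw [indicator_of_mem hxG, le_div_iff₀' hM0]
      exact (not_le.1 (show ¬τ ≤ M * ‖g x‖ ^ (1 - p * σ) from hxG)).le
    have hmono : ∫⁻ x, ‖Gᶜ.indicator g x‖ₑ ^ p ∂μ ≤ ENNReal.ofReal n := by
      refine le_trans (lintegral_mono fun x => ?_) hgp
      exact ENNReal.rpow_le_rpow (enorm_indicator_le_enorm_self _ _) hp.le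
    refine (hT.norm_le_of_rpow_le hσ0 hσ1 (by positivity) hn (hg.indicator hGm.compl)
      (hgm.indicator hGm.compl) hmono hGc z).trans_eq ?_
    rw [hM]
    field_simp
  have hsplit : T g = T (G.indicator g) + T (Gᶜ.indicator g) := by
    rw [← hT.map_add _ _ (hg.indicator hGm) (hg.indicator hGm.compl), indicator_self_add_compl]
  calc ν {z | τ < ‖T g z‖} = ν {z | τ < ‖T (G.indicator g) z + T (Gᶜ.indicator g) z‖} := by
        rw [hsplit]; rfl
    _ ≤ ENNReal.ofReal (τ ^ 2)⁻¹ * (4 * ∫⁻ z, ‖T (G.indicator g) z‖ₑ ^ 2 ∂ν) :=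
        meas_lt_norm_add_le (hT.aemeasurable _ (hg.indicator hGm)).aestronglyMeasurable hτ hsmall
    _ ≤ ENNReal.ofReal (τ ^ 2)⁻¹ * (4 * (ENNReal.ofReal A * ∫⁻ x, ‖G.indicator g x‖ₑ ^ 2 ∂μ)) := by
        gcongr
        exact hT.lintegral_sq_le _ (hg.indicator hGm)
    _ = _ := by
        rw [← lintegral_indicator hGm, mul_assoc]
        refine congrArg (fun S => _ * (4 * (ENNReal.ofReal A * S))) (lintegral_congr fun x => ?_)
        by_cases hx : x ∈ G <;> simp [hx]

lemma eq_zero_of_lintegral_rpow_eq_zero (hT : IsKernelDominated T k μ ν N₁ N₂ A) {p : ℝ}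
    (hp : 0 < p) (hg : Integrable g μ) (hgm : Measurable g) (hgp : ∫⁻ x, ‖g x‖ₑ ^ p ∂μ = 0) :
    T g = 0 := by
  funext z
  refine enorm_eq_zero.1 (le_antisymm ((hT.enorm_le g hg z).trans_eq ?_) zero_le)
  rw [lintegral_congr_ae (g := 0) ?_]
  · simp
  filter_upwards [ae_eq_zero_of_lintegral_enorm_rpow_eq_zero hgm hp hgp] with x hx
  simp [hx]

lemma lintegral_rpow_le [SFinite μ] (hT : IsKernelDominated T k μ ν N₁ N₂ A) {p q σ : ℝ}
    (hp : 0 < p) (hq : 2 < q) (hσ0 : 0 ≤ σ) (hσ1 : σ ≤ 1) (hpq : p * σ * (q - 2) = q - p)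
    (hg : Integrable g μ) (hgm : Measurable g) (hgp : ∫⁻ x, ‖g x‖ₑ ^ p ∂μ ≠ ⊤) :
    ∫⁻ z, ‖T g z‖ₑ ^ q ∂ν ≤
      ENNReal.ofReal (4 * q / (q - 2) * 2 ^ (q - 2) * A * (N₁ ^ (1 - σ) * N₂ ^ σ) ^ (q - 2)) *
        (∫⁻ x, ‖g x‖ₑ ^ p ∂μ) ^ (q / p) := by
  have := hT.schur_pos
  have := hT.sup_pos
  have := hT.sq_pos
  have hq0 : 0 < q := by linarith
  have : 0 < q - 2 := by linarith
  rcases eq_or_ne (∫⁻ x, ‖g x‖ₑ ^ p ∂μ) 0 with hN0 | hN0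
  · simp [hT.eq_zero_of_lintegral_rpow_eq_zero hp hg hgm hN0, hq0]
  set B : ℝ := N₁ ^ (1 - σ) * N₂ ^ σ
  have hB : 0 < B := by positivity
  set n : ℝ := (∫⁻ x, ‖g x‖ₑ ^ p ∂μ).toReal
  have hn0 : 0 < n := ENNReal.toReal_pos hN0 hgp
  have hNn : ∫⁻ x, ‖g x‖ₑ ^ p ∂μ = ENNReal.ofReal n := (ENNReal.ofReal_toReal hgp).symm
  set M : ℝ := 2 * B * n ^ σ
  have hM0 : 0 < M := by positivity
  calc ∫⁻ z, ‖T g z‖ₑ ^ q ∂ν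
      ≤ ENNReal.ofReal q * (4 * ENNReal.ofReal A * ∫⁻ x, ‖g x‖ₑ ^ 2 *
          ENNReal.ofReal ((M * ‖g x‖ ^ (1 - p * σ)) ^ (q - 2) / (q - 2)) ∂μ) :=
        lintegral_rpow_le_of_meas_lt_le (by fun_prop) (by fun_prop) (fun x => by positivity)
          (hT.aemeasurable g hg) hq fun t ht => hT.meas_lt_norm_le hp hσ0 hσ1 hg hgm hn0 hNn.le ht
    _ = ENNReal.ofReal A * ENNReal.ofReal (q * (4 * (M ^ (q - 2) / (q - 2) * n))) := by
        simp_rw [fun x => enorm_sq_mul_ofReal_rpow_div (g x) hM0.le hp hq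
          (show p = 2 + (1 - p * σ) * (q - 2) by linarith)]
        rw [lintegral_const_mul _ (by fun_prop), hNn, ← ENNReal.ofReal_mul (by positivity),
          ENNReal.ofReal_mul hq0.le, ENNReal.ofReal_mul zero_le_four, ENNReal.ofReal_ofNat]
        ring
    _ = ENNReal.ofReal A *
          ENNReal.ofReal (4 * q / (q - 2) * 2 ^ (q - 2) * B ^ (q - 2) * n ^ (q / p)) := by
        congr 2
        rw [mul_assoc _ (B ^ _), mul_assoc _ (2 ^ (q - 2)), ← mul_assoc (2 ^ _),
          ← mul_mul_rpow_rpow_mul_self zero_le_two hB.le hn0 hp.ne' hpq]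
        ring
    _ = _ := by
        rw [hNn, ENNReal.ofReal_rpow_of_pos hn0, ← ENNReal.ofReal_mul (by positivity),
          ← ENNReal.ofReal_mul (by positivity)]
        congr 1
        ring

lemma enorm_le_mul_eLpNorm (hT : IsKernelDominated T k μ ν N₁ N₂ A) {p : ℝ≥0∞} (hp : 1 ≤ p)
    (hg : Integrable g μ) (hgm : Measurable g) (z : Z) :
    ‖T g z‖ₑ ≤
      ENNReal.ofReal (N₁ ^ (1 - p.toReal⁻¹) * N₂ ^ p.toReal⁻¹) * eLpNorm g p μ := by
  have := hT.schur_pos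
  have := hT.sup_pos
  refine (hT.enorm_le g hg z).trans ?_
  rcases eq_or_ne p ⊤ with rfl | hp'
  · rw [eLpNorm_exponent_top]
    calc ∫⁻ x, k z x * ‖g x‖ₑ ∂μ ≤ ∫⁻ x, k z x * eLpNormEssSup g μ ∂μ := by
          refine lintegral_mono_ae ?_
          filter_upwards [ae_le_eLpNormEssSup (f := g) (μ := μ)] with x hx
          gcongr
      _ = (∫⁻ x, k z x ∂μ) * eLpNormEssSup g μ := lintegral_mul_const _ (hT.measurable_kernel z)
      _ ≤ ENNReal.ofReal N₁ * eLpNormEssSup g μ := by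
          gcongr
          exact hT.lintegral_kernel_le z
      _ = _ := by simp
  · have hp1 : 1 ≤ p.toReal := by
      simpa using ENNReal.toReal_mono hp' hp
    calc ∫⁻ x, k z x * ‖g x‖ₑ ∂μ = ∫⁻ x, k z x * ‖g x‖ₑ ^ (p.toReal * p.toReal⁻¹) ∂μ := by
          rw [mul_inv_cancel₀ (by positivity)]
          simp only [ENNReal.rpow_one]
      _ ≤ _ := lintegral_mul_rpow_le (hT.measurable_kernel z) hgm.enorm (by positivity)
          (inv_le_one_of_one_le₀ hp1) (hT.lintegral_kernel_le z) (hT.kernel_le z)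
      _ = _ := by
          rw [eLpNorm_eq_lintegral_rpow_enorm_toReal (by positivity) hp', one_div,
            ENNReal.ofReal_rpow_of_pos hT.schur_pos, ENNReal.ofReal_rpow_of_pos hT.sup_pos,
            ← ENNReal.ofReal_mul (by positivity)]

lemma eLpNorm_two_le (hT : IsKernelDominated T k μ ν N₁ N₂ A) (hg : Integrable g μ) :
    eLpNorm (T g) 2 ν ≤ ENNReal.ofReal (A ^ (2⁻¹ : ℝ)) * eLpNorm g 2 μ := by
  simp only [eLpNorm_eq_lintegral_rpow_enorm_toReal two_ne_zero ENNReal.ofNat_ne_top,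
    ENNReal.toReal_ofNat, ENNReal.rpow_ofNat, one_div]
  rw [← ENNReal.ofReal_rpow_of_pos hT.sq_pos, ← ENNReal.mul_rpow_of_nonneg _ _ (by norm_num)]
  exact ENNReal.rpow_le_rpow (hT.lintegral_sq_le g hg) (by norm_num)

lemma eLpNorm_le_of_two_lt [SFinite μ] (hT : IsKernelDominated T k μ ν N₁ N₂ A) {p q : ℝ}
    (hp : 1 ≤ p) (hpq : p ≤ q) (hq : 2 < q) (hpq1 : p⁻¹ + q⁻¹ ≤ 1) (hg : Integrable g μ)
    (hgm : Measurable g) (hgp : eLpNorm g (ENNReal.ofReal p) μ ≠ ⊤) :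
    eLpNorm (T g) (ENNReal.ofReal q) ν ≤
      ENNReal.ofReal ((4 * q / (q - 2) * 2 ^ (q - 2)) ^ q⁻¹ *
        (A ^ q⁻¹ * N₁ ^ (1 - p⁻¹ - q⁻¹) * N₂ ^ (p⁻¹ - q⁻¹))) *
          eLpNorm g (ENNReal.ofReal p) μ := by
  have := hT.schur_pos
  have := hT.sup_pos
  have := hT.sq_pos
  have hp0 : 0 < p := by linarith
  have hq0 : 0 < q := by linarith
  have hq2 : 0 < q - 2 := by linarith
  obtain ⟨σ, hσ⟩ : ∃ σ, σ = (q - p) / (p * (q - 2)) := ⟨_, rfl⟩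
  have hσ0 : 0 ≤ σ := hσ ▸ div_nonneg (by linarith) (by positivity)
  have hσ1 : σ ≤ 1 := by
    rw [hσ, div_le_one (by positivity)]
    field_simp at hpq1
    linarith
  have hσpq : p * σ * (q - 2) = q - p := by rw [hσ]; field_simp
  simp only [eLpNorm_eq_lintegral_rpow_enorm_toReal (ENNReal.ofReal_pos.2 hp0).ne'
    ENNReal.ofReal_ne_top, eLpNorm_eq_lintegral_rpow_enorm_toReal (ENNReal.ofReal_pos.2 hq0).ne'
    ENNReal.ofReal_ne_top, ENNReal.toReal_ofReal hp0.le, ENNReal.toReal_ofReal hq0.le,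
    one_div] at hgp ⊢
  have hgp' : ∫⁻ x, ‖g x‖ₑ ^ p ∂μ ≠ ⊤ := fun h => hgp (by
    rw [h, ENNReal.top_rpow_of_pos (by positivity)])
  calc (∫⁻ z, ‖T g z‖ₑ ^ q ∂ν) ^ q⁻¹
      ≤ (ENNReal.ofReal (4 * q / (q - 2) * 2 ^ (q - 2) * A *
          (N₁ ^ (1 - σ) * N₂ ^ σ) ^ (q - 2)) * (∫⁻ x, ‖g x‖ₑ ^ p ∂μ) ^ (q / p)) ^ q⁻¹ := by
        gcongr
        exact hT.lintegral_rpow_le hp0 hq hσ0 hσ1 hσpq hg hgm hgp'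
    _ = _ := by
        rw [ENNReal.mul_rpow_of_nonneg _ _ (by positivity), ← ENNReal.rpow_mul,
          show q / p * q⁻¹ = p⁻¹ by field_simp, ENNReal.ofReal_rpow_of_pos (by positivity),
          rpow_interpolation_constants (by positivity) (by positivity) (by positivity)
            (by positivity) hp0 hq0 hσpq]

theorem exists_eLpNorm_le [SFinite μ] {p q : ℝ≥0∞} (hp : 1 ≤ p) (hpq : p ≤ q)
    (hpq1 : p⁻¹ + q⁻¹ ≤ 1) :
    ∃ C : ℝ, 0 < C ∧ ∀ {T : (X → ℂ) → Z → ℂ} {k : Z → X → ℝ≥0∞} {N₁ N₂ A : ℝ},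
      IsKernelDominated T k μ ν N₁ N₂ A → ∀ {g : X → ℂ}, Integrable g μ → Measurable g →
      eLpNorm g p μ ≠ ⊤ →
      eLpNorm (T g) q ν ≤ ENNReal.ofReal (C * (A ^ q.toReal⁻¹ *
        N₁ ^ (1 - p.toReal⁻¹ - q.toReal⁻¹) * N₂ ^ (p.toReal⁻¹ - q.toReal⁻¹))) *
          eLpNorm g p μ := by
  rcases eq_or_ne q ⊤ with rfl | hq
  · refine ⟨1, one_pos, fun hT g hg hgm _ => ?_⟩
    rw [eLpNorm_exponent_top]
    refine essSup_le_of_ae_le _ (.of_forall fun z => ?_)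
    simpa using hT.enorm_le_mul_eLpNorm hp hg hgm z
  have hp' : p ≠ ⊤ := ne_top_of_le_ne_top hq hpq
  have hp1 : 1 ≤ p.toReal := by simpa using ENNReal.toReal_mono hp' hp
  have hpq' : p.toReal ≤ q.toReal := ENNReal.toReal_mono hq hpq
  have hsum : p.toReal⁻¹ + q.toReal⁻¹ ≤ 1 :=
    toReal_inv_add_toReal_inv_le_one (zero_lt_one.trans_le hp).ne'
      (zero_lt_one.trans_le (hp.trans hpq)).ne' hpq1
  have hmul : q.toReal + p.toReal ≤ p.toReal * q.toReal := by
    have : 0 < p.toReal := by linarith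
    have : 0 < q.toReal := by linarith
    field_simp at hsum
    linarith
  have hq2 : 2 ≤ q.toReal := by nlinarith
  rcases hq2.eq_or_lt with hq2 | hq2
  · have hp2 : p.toReal = 2 := by
      rw [← hq2] at hmul hpq'
      linarith
    obtain rfl : p = 2 := by rw [← ENNReal.ofReal_toReal hp', hp2]; simp
    obtain rfl : q = 2 := by rw [← ENNReal.ofReal_toReal hq, ← hq2]; simp
    refine ⟨1, one_pos, fun hT g hg _ _ => (hT.eLpNorm_two_le hg).trans_eq ?_⟩
    norm_num
  · have : 0 < q.toReal - 2 := by linarith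
    refine ⟨(4 * q.toReal / (q.toReal - 2) * 2 ^ (q.toReal - 2)) ^ q.toReal⁻¹, by positivity,
      fun hT g hg hgm hgp => ?_⟩
    have hbound := hT.eLpNorm_le_of_two_lt hp1 hpq' hq2 hsum hg hgm
    rw [ENNReal.ofReal_toReal hp', ENNReal.ofReal_toReal hq] at hbound
    exact hbound hgp

end IsKernelDominated

end KernelDomination

/-! ### Bump functions and angular cutoffs -/

/-- Smooth functions supported in `[1 - 10⁻³, 2 + 10⁻³]`, the profiles of all radial and angular
localizations. -/
structure IsBump {F : Type*} [NormedAddCommGroup F] [NormedSpace ℝ F] (f : ℝ → F) : Prop where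
  contDiff : ContDiff ℝ (⊤ : ℕ∞) f
  eq_zero : ∀ u ∉ Icc (1 - 1 / 1000 : ℝ) (2 + 1 / 1000), f u = 0

namespace IsBump

variable {F : Type*} [NormedAddCommGroup F] [NormedSpace ℝ F] {f : ℝ → F}

lemma continuous (hf : IsBump f) : Continuous f := hf.contDiff.continuous

lemma hasDerivAt (hf : IsBump f) (u : ℝ) : HasDerivAt f (deriv f u) u :=
  (hf.contDiff.differentiable (by simp)).differentiableAt.hasDerivAt

lemma exists_norm_le (hf : IsBump f) : ∃ C, ∀ u, ‖f u‖ ≤ C :=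
  (HasCompactSupport.intro isCompact_Icc hf.eq_zero).exists_bound_of_continuous hf.continuous

lemma eventuallyEq_zero (hf : IsBump f) {u : ℝ}
    (hu : u ∉ Icc (1 - 1 / 1000 : ℝ) (2 + 1 / 1000)) : f =ᶠ[nhds u] 0 := by
  filter_upwards [isClosed_Icc.isOpen_compl.mem_nhds hu] with x hx using hf.eq_zero x hx

lemma deriv (hf : IsBump f) : IsBump (deriv f) where
  contDiff := (contDiff_infty_iff_deriv.1 hf.contDiff).2
  eq_zero u hu := by simp [(hf.eventuallyEq_zero hu).deriv_eq]

lemma smul {𝕜 : Type*} [NormedField 𝕜] [NormedAlgebra ℝ 𝕜] [NormedSpace 𝕜 F] [IsScalarTower ℝ 𝕜 F]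
    (hf : IsBump f) {a : ℝ → 𝕜} (ha : ∀ u ≠ 0, ContDiffAt ℝ (⊤ : ℕ∞) a u) :
    IsBump fun u => a u • f u where
  contDiff := contDiff_iff_contDiffAt.2 fun u => by
    rcases eq_or_ne u 0 with rfl | hu
    · refine (contDiffAt_const (c := (0 : F))).congr_of_eventuallyEq ?_
      filter_upwards [hf.eventuallyEq_zero (u := 0) (by norm_num)] with x hx
      simp [hx]
    · exact (ha u hu).smul hf.contDiff.contDiffAt
  eq_zero u hu := by simp [hf.eq_zero u hu]

lemma ofReal {f : ℝ → ℝ} (hf : IsBump f) : IsBump fun u => (f u : ℂ) where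
  contDiff := Complex.ofRealCLM.contDiff.comp hf.contDiff
  eq_zero u hu := by simp [hf.eq_zero u hu]

end IsBump

lemma IsLPBump.isBump {φ : ℝ → ℝ} (hφ : IsLPBump φ) : IsBump φ :=
  ⟨hφ.1, fun _ hu => Function.notMem_support.1 fun h => hu (hφ.2.2.1 h)⟩

/-- Angular cutoffs `χ M θ`, localized to `|θ| ≲ M⁻¹` and varying at that scale. The constructors
are those that make the class stable under `M⁻¹ ∂_θ`. -/
inductive IsAngularCutoff : (ℝ → ℝ → ℝ) → Prop
  | bump {h : ℝ → ℝ} : IsBump h → IsAngularCutoff fun M θ => h (M ^ 2 * (1 - cos θ))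
  | add {χ₁ χ₂ : ℝ → ℝ → ℝ} : IsAngularCutoff χ₁ → IsAngularCutoff χ₂ →
      IsAngularCutoff fun M θ => χ₁ M θ + χ₂ M θ
  | mul_sin {χ : ℝ → ℝ → ℝ} : IsAngularCutoff χ → IsAngularCutoff fun M θ => M * sin θ * χ M θ
  | mul_cos {χ : ℝ → ℝ → ℝ} : IsAngularCutoff χ → IsAngularCutoff fun M θ => cos θ * χ M θ
  | mul_neg_inv_sq {χ : ℝ → ℝ → ℝ} : IsAngularCutoff χ →
      IsAngularCutoff fun M θ => -(M ^ 2)⁻¹ * χ M θ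

namespace IsAngularCutoff

variable {χ : ℝ → ℝ → ℝ}

lemma exists_hasDerivAt (hχ : IsAngularCutoff χ) :
    ∃ χ', IsAngularCutoff χ' ∧ ∀ M θ, 0 < M → HasDerivAt (χ M) (M * χ' M θ) θ := by
  induction hχ with
  | @bump h hh =>
    refine ⟨_, (bump hh.deriv).mul_sin, fun M θ _ => ?_⟩
    have hinner : HasDerivAt (fun θ : ℝ => M ^ 2 * (1 - cos θ)) (M ^ 2 * sin θ) θ := by
      simpa using ((Real.hasDerivAt_cos θ).const_sub 1).const_mul (M ^ 2)
    exact ((hh.hasDerivAt _).comp θ hinner).congr_deriv (by ring)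
  | add _ _ ih₁ ih₂ =>
    obtain ⟨χ₁', hχ₁', hd₁⟩ := ih₁
    obtain ⟨χ₂', hχ₂', hd₂⟩ := ih₂
    exact ⟨_, hχ₁'.add hχ₂', fun M θ hM => ((hd₁ M θ hM).add (hd₂ M θ hM)).congr_deriv (by ring)⟩
  | mul_sin hχ ih =>
    obtain ⟨χ', hχ', hd⟩ := ih
    exact ⟨_, hχ.mul_cos.add hχ'.mul_sin, fun M θ hM =>
      (((Real.hasDerivAt_sin θ).const_mul M).mul (hd M θ hM)).congr_deriv (by ring)⟩
  | mul_cos hχ ih =>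
    obtain ⟨χ', hχ', hd⟩ := ih
    exact ⟨_, hχ.mul_sin.mul_neg_inv_sq.add hχ'.mul_cos, fun M θ hM =>
      ((Real.hasDerivAt_cos θ).mul (hd M θ hM)).congr_deriv (by field_simp)⟩
  | mul_neg_inv_sq _ ih =>
    obtain ⟨χ', hχ', hd⟩ := ih
    exact ⟨_, hχ'.mul_neg_inv_sq, fun M θ hM =>
      ((hd M θ hM).const_mul (-(M ^ 2)⁻¹)).congr_deriv (by ring)⟩

lemma continuous (hχ : IsAngularCutoff χ) {M : ℝ} (hM : 0 < M) : Continuous (χ M) := by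
  obtain ⟨χ', -, hd⟩ := hχ.exists_hasDerivAt
  exact continuous_iff_continuousAt.2 fun θ => (hd M θ hM).continuousAt

lemma apply_neg_pi (hχ : IsAngularCutoff χ) (M : ℝ) : χ M (-π) = χ M π := by
  induction hχ with
  | bump _ => simp
  | add _ _ ih₁ ih₂ => simp [ih₁, ih₂]
  | mul_sin _ _ => simp
  | mul_cos _ ih => simp [ih]
  | mul_neg_inv_sq _ ih => simp [ih]

lemma eq_zero (hχ : IsAngularCutoff χ) {M θ : ℝ} (hθ : 2 + 1 / 1000 < M ^ 2 * (1 - cos θ)) :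
    χ M θ = 0 := by
  induction hχ with
  | bump hh => exact hh.eq_zero _ fun h => hθ.not_ge h.2
  | add _ _ ih₁ ih₂ => simp [ih₁, ih₂]
  | mul_sin _ ih => simp [ih]
  | mul_cos _ ih => simp [ih]
  | mul_neg_inv_sq _ ih => simp [ih]

lemma abs_mul_sin_le {M θ : ℝ} (hθ : M ^ 2 * (1 - cos θ) ≤ 2 + 1 / 1000) : |M * sin θ| ≤ 3 := by
  refine abs_le_of_sq_le_sq ?_ (by norm_num)
  calc (M * sin θ) ^ 2 = M ^ 2 * (1 - cos θ) * (1 + cos θ) := by rw [mul_pow, sin_sq]; ring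
    _ ≤ (2 + 1 / 1000) * 2 := by
        gcongr
        · linarith [neg_one_le_cos θ]
        · linarith [cos_le_one θ]
    _ ≤ 3 ^ 2 := by norm_num

lemma exists_abs_le (hχ : IsAngularCutoff χ) : ∃ C, ∀ M θ, 1 ≤ M → |χ M θ| ≤ C := by
  induction hχ with
  | bump hh =>
    obtain ⟨C, hC⟩ := hh.exists_norm_le
    exact ⟨C, fun M θ _ => hC _⟩
  | add _ _ ih₁ ih₂ =>
    obtain ⟨C₁, hC₁⟩ := ih₁
    obtain ⟨C₂, hC₂⟩ := ih₂
    exact ⟨C₁ + C₂, fun M θ hM =>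
      (abs_add_le _ _).trans (add_le_add (hC₁ M θ hM) (hC₂ M θ hM))⟩
  | @mul_sin χ hχ ih =>
    obtain ⟨C, hC⟩ := ih
    have hC0 : 0 ≤ C := (abs_nonneg _).trans (hC 1 0 le_rfl)
    refine ⟨3 * C, fun M θ hM => ?_⟩
    rcases lt_or_ge (2 + 1 / 1000) (M ^ 2 * (1 - cos θ)) with hθ | hθ
    · simpa [hχ.eq_zero hθ] using hC0
    · rw [abs_mul]
      exact mul_le_mul (abs_mul_sin_le hθ) (hC M θ hM) (abs_nonneg _) (by norm_num)
  | mul_cos _ ih =>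
    obtain ⟨C, hC⟩ := ih
    refine ⟨C, fun M θ hM => ?_⟩
    rw [abs_mul]
    exact (mul_le_of_le_one_left (abs_nonneg _) (abs_cos_le_one θ)).trans (hC M θ hM)
  | mul_neg_inv_sq _ ih =>
    obtain ⟨C, hC⟩ := ih
    refine ⟨C, fun M θ hM => ?_⟩
    rw [abs_mul, abs_neg, abs_of_nonneg (by positivity)]
    exact (mul_le_of_le_one_left (abs_nonneg _)
      (inv_le_one_of_one_le₀ (one_le_pow₀ hM))).trans (hC M θ hM)

end IsAngularCutoff

/-! ### Integration by parts in polar coordinates -/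

@[fun_prop]
lemma continuous_osc_comp {X : Type*} [TopologicalSpace X] {g : X → ℝ} (hg : Continuous g) :
    Continuous fun x => osc (g x) := continuous_osc.comp hg

lemma hasDerivAt_osc_comp {g : ℝ → ℝ} {g' x : ℝ} (hg : HasDerivAt g g' x) :
    HasDerivAt (fun y => osc (g y)) ((g' : ℂ) * (Complex.I * osc (g x))) x := by
  have h : HasDerivAt (fun y => Complex.I * ((g y : ℝ) : ℂ)) (Complex.I * (g' : ℂ)) x :=
    hg.ofReal_comp.const_mul Complex.I
  exact h.cexp.congr_deriv (by simp only [osc]; ring)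

lemma integral_osc_mul_deriv {a b : ℝ} (hab : a ≤ b) {ψ ψ' : ℝ → ℝ} {F F' : ℝ → ℂ}
    (hψ : ∀ x, HasDerivAt ψ (ψ' x) x) (hψ' : Continuous ψ') (hF : ∀ x, HasDerivAt F (F' x) x)
    (hF' : Continuous F') (hbdry : osc (ψ a) * F a = osc (ψ b) * F b) :
    ∫ x in Ioc a b, osc (ψ x) * ((ψ' x : ℂ) * F x) =
      Complex.I * ∫ x in Ioc a b, osc (ψ x) * F' x := by
  have hψc : Continuous ψ := continuous_iff_continuousAt.2 fun x => (hψ x).continuousAt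
  have hFc : Continuous F := continuous_iff_continuousAt.2 fun x => (hF x).continuousAt
  have hparts : (∫ x in a..b, (ψ' x : ℂ) * (Complex.I * osc (ψ x)) * F x) +
      ∫ x in a..b, osc (ψ x) * F' x = 0 := by
    rw [← intervalIntegral.integral_add (Continuous.intervalIntegrable (by fun_prop) _ _)
        (Continuous.intervalIntegrable (by fun_prop) _ _),
      intervalIntegral.integral_deriv_mul_eq_sub (u := fun x => osc (ψ x)) (v := F)
        (fun x _ => hasDerivAt_osc_comp (hψ x)) (fun x _ => hF x)
        (Continuous.intervalIntegrable (by fun_prop) _ _) (hF'.intervalIntegrable _ _),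
      hbdry, sub_self]
  have hpull : ∫ x in a..b, (ψ' x : ℂ) * (Complex.I * osc (ψ x)) * F x =
      Complex.I * ∫ x in a..b, osc (ψ x) * ((ψ' x : ℂ) * F x) := by
    rw [← intervalIntegral.integral_const_mul]
    exact intervalIntegral.integral_congr fun x _ => by ring
  rw [hpull] at hparts
  rw [← intervalIntegral.integral_of_le hab, ← intervalIntegral.integral_of_le hab]
  linear_combination (-Complex.I) * hparts +
    (∫ x in a..b, osc (ψ x) * ((ψ' x : ℂ) * F x)) * Complex.I_sq

/-- The phase `c - v · (cos θ, sin θ)`, at unit radius, of the polar oscillatory integrals. -/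
def polarPhase (c : ℝ) (v : ℝ × ℝ) (θ : ℝ) : ℝ := c - (v.1 * cos θ + v.2 * sin θ)

/-- The angular derivative of `polarPhase`. -/
def polarPhaseDeriv (v : ℝ × ℝ) (θ : ℝ) : ℝ := v.1 * sin θ - v.2 * cos θ

lemma hasDerivAt_polarPhase (c : ℝ) (v : ℝ × ℝ) (θ : ℝ) :
    HasDerivAt (polarPhase c v) (polarPhaseDeriv v θ) θ :=
  ((((Real.hasDerivAt_cos θ).const_mul v.1).add
    ((Real.hasDerivAt_sin θ).const_mul v.2)).const_sub c).congr_deriv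
      (by simp only [polarPhaseDeriv]; ring)

lemma hasDerivAt_polarPhaseDeriv (c : ℝ) (v : ℝ × ℝ) (θ : ℝ) :
    HasDerivAt (polarPhaseDeriv v) (c - polarPhase c v θ) θ :=
  (((Real.hasDerivAt_sin θ).const_mul v.1).sub
    ((Real.hasDerivAt_cos θ).const_mul v.2)).congr_deriv (by simp only [polarPhase]; ring)

@[fun_prop]
lemma continuous_polarPhase (c : ℝ) (v : ℝ × ℝ) : Continuous (polarPhase c v) := by
  unfold polarPhase; fun_prop

@[fun_prop]
lemma continuous_polarPhaseDeriv (v : ℝ × ℝ) : Continuous (polarPhaseDeriv v) := by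
  unfold polarPhaseDeriv; fun_prop

lemma normSq_sub_sq_eq_polarPhase (c : ℝ) (v : ℝ × ℝ) (θ : ℝ) :
    v.1 ^ 2 + v.2 ^ 2 - c ^ 2 =
      polarPhase c v θ * polarPhase c v θ - 2 * c * polarPhase c v θ +
        polarPhaseDeriv v θ * polarPhaseDeriv v θ := by
  simp only [polarPhase, polarPhaseDeriv]
  linear_combination (-(v.1 ^ 2 + v.2 ^ 2)) * sin_sq_add_cos_sq θ

lemma snd_eq_polarPhase (c : ℝ) (v : ℝ × ℝ) (θ : ℝ) :
    v.2 = c * sin θ - polarPhase c v θ * sin θ - polarPhaseDeriv v θ * cos θ := by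
  simp only [polarPhase, polarPhaseDeriv]
  linear_combination (-v.2) * sin_sq_add_cos_sq θ

/-- The measure `du dθ` in polar coordinates, on a box `[1/2, 3] × (-π, π]` containing the supports
of all bump functions. -/
def polarMeasure : Measure (ℝ × ℝ) :=
  (volume.restrict (Ioc (1 / 2 : ℝ) 3)).prod (volume.restrict (Ioc (-π) π))

instance : IsFiniteMeasure polarMeasure := by unfold polarMeasure; infer_instance

lemma integrable_polarMeasure {F : ℝ × ℝ → ℂ} (hF : Continuous F) : Integrable F polarMeasure := by
  have hbox : polarMeasure = volume.restrict (Ioc (1 / 2 : ℝ) 3 ×ˢ Ioc (-π) π) := by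
    rw [polarMeasure, Measure.prod_restrict, Measure.volume_eq_prod]
  rw [hbox]
  exact (hF.continuousOn.integrableOn_compact (isCompact_Icc.prod isCompact_Icc)).mono_set
    (prod_mono Ioc_subset_Icc_self Ioc_subset_Icc_self)

/-- The oscillatory integral `∫ e^{i λ u (c - v · (cos θ, sin θ))} f(u) χ(θ) du dθ`, with radial
profile `f` and angular profile `χ`. -/
def oscInt (f : ℝ → ℂ) (χ : ℝ → ℂ) (c lam : ℝ) (v : ℝ × ℝ) : ℂ :=
  ∫ z, osc (lam * z.1 * polarPhase c v z.2) * (f z.1 * χ z.2) ∂polarMeasure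

lemma oscInt_add {f χ₁ χ₂ : ℝ → ℂ} (hf : Continuous f) (h₁ : Continuous χ₁)
    (h₂ : Continuous χ₂) (c lam : ℝ) (v : ℝ × ℝ) :
    oscInt f (fun θ => χ₁ θ + χ₂ θ) c lam v = oscInt f χ₁ c lam v + oscInt f χ₂ c lam v := by
  unfold oscInt
  rw [← integral_add (integrable_polarMeasure (by fun_prop))
    (integrable_polarMeasure (by fun_prop))]
  exact integral_congr_ae (.of_forall fun z => by ring)

lemma oscInt_const_mul (f χ : ℝ → ℂ) (a : ℂ) (c lam : ℝ) (v : ℝ × ℝ) :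
    oscInt f (fun θ => a * χ θ) c lam v = a * oscInt f χ c lam v := by
  unfold oscInt
  rw [← integral_const_mul]
  exact integral_congr_ae (.of_forall fun z => by ring)

/-- The radial profile produced by a radial integration by parts. -/
def radialDeriv (f : ℝ → ℂ) (u : ℝ) : ℂ := Complex.I * deriv f u

/-- The radial profile produced by an angular integration by parts. The value at `u = 0` is
immaterial, since bump functions vanish near `0`. -/
def radialDiv (f : ℝ → ℂ) (u : ℝ) : ℂ := Complex.I * (u : ℂ)⁻¹ * f u

lemma IsBump.radialDeriv {f : ℝ → ℂ} (hf : IsBump f) : IsBump (radialDeriv f) :=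
  hf.deriv.smul (a := fun _ => Complex.I) fun _ _ => contDiffAt_const

lemma IsBump.radialDiv {f : ℝ → ℂ} (hf : IsBump f) : IsBump (radialDiv f) :=
  hf.smul (a := fun u : ℝ => Complex.I * (u : ℂ)⁻¹) fun u hu =>
    contDiffAt_const.mul (Complex.ofRealCLM.contDiff.contDiffAt.inv (by simpa using hu))

lemma integral_osc_mul_radialDeriv {f : ℝ → ℂ} (hf : IsBump f) {lam : ℝ} (hlam : lam ≠ 0)
    (s : ℝ) :
    ∫ u in Ioc (1 / 2 : ℝ) 3, osc (lam * u * s) * ((s : ℂ) * f u) =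
      (lam : ℂ)⁻¹ * ∫ u in Ioc (1 / 2 : ℝ) 3, osc (lam * u * s) * radialDeriv f u := by
  have hparts := integral_osc_mul_deriv (a := 1 / 2) (b := 3) (by norm_num)
    (ψ := fun u => lam * u * s) (ψ' := fun _ => lam * s)
    (fun u => by simpa [mul_right_comm] using (hasDerivAt_id u).const_mul (lam * s))
    continuous_const hf.hasDerivAt hf.deriv.continuous
    (by rw [hf.eq_zero (1 / 2) (by norm_num), hf.eq_zero 3 (by norm_num)]; simp)
  rw [eq_inv_mul_iff_mul_eq₀ (by exact_mod_cast hlam)]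
  calc (lam : ℂ) * ∫ u in Ioc (1 / 2 : ℝ) 3, osc (lam * u * s) * ((s : ℂ) * f u)
      = ∫ u in Ioc (1 / 2 : ℝ) 3, osc (lam * u * s) * (((lam * s : ℝ) : ℂ) * f u) := by
        rw [← integral_const_mul]
        exact integral_congr_ae (.of_forall fun u => by push_cast; ring)
    _ = _ := hparts
    _ = _ := by
        rw [← integral_const_mul]
        exact integral_congr_ae (.of_forall fun u => by simp only [radialDeriv]; ring)

lemma integral_osc_mul_polarPhaseDeriv {χ χ' : ℝ → ℂ} (hχ : ∀ θ, HasDerivAt χ (χ' θ) θ)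
    (hχ' : Continuous χ') (hper : χ (-π) = χ π) (c : ℝ) {a : ℝ} (ha : a ≠ 0) (v : ℝ × ℝ) :
    ∫ θ in Ioc (-π) π, osc (a * polarPhase c v θ) * ((polarPhaseDeriv v θ : ℂ) * χ θ) =
      Complex.I * (a : ℂ)⁻¹ * ∫ θ in Ioc (-π) π, osc (a * polarPhase c v θ) * χ' θ := by
  have hparts := integral_osc_mul_deriv (a := -π) (b := π) (by linarith [pi_pos])
    (fun θ => (hasDerivAt_polarPhase c v θ).const_mul a) (by fun_prop) hχ hχ'
    (by simp [polarPhase, hper])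
  have hpull : ∫ θ in Ioc (-π) π,
      osc (a * polarPhase c v θ) * (((a * polarPhaseDeriv v θ : ℝ) : ℂ) * χ θ) =
      a * ∫ θ in Ioc (-π) π, osc (a * polarPhase c v θ) * ((polarPhaseDeriv v θ : ℂ) * χ θ) := by
    rw [← integral_const_mul]
    exact integral_congr_ae (.of_forall fun θ => by push_cast; ring)
  have ha' : (a : ℂ) ≠ 0 := by exact_mod_cast ha
  rw [hpull, ← eq_inv_mul_iff_mul_eq₀ ha'] at hparts
  rw [hparts]
  ring

lemma oscInt_polarPhase_mul {f χ : ℝ → ℂ} (hf : IsBump f) (hχ : Continuous χ) (c : ℝ) {lam : ℝ}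
    (hlam : lam ≠ 0) (v : ℝ × ℝ) :
    oscInt f (fun θ => (polarPhase c v θ : ℂ) * χ θ) c lam v =
      (lam : ℂ)⁻¹ * oscInt (radialDeriv f) χ c lam v := by
  have hfc := hf.continuous
  have hfd := hf.radialDeriv.continuous
  unfold oscInt polarMeasure
  rw [integral_prod_symm _ (integrable_polarMeasure (by fun_prop)),
    integral_prod_symm _ (integrable_polarMeasure (by fun_prop)), ← integral_const_mul]
  refine integral_congr_ae (.of_forall fun θ => ?_)
  dsimp only
  set s := polarPhase c v θ
  calc ∫ u in Ioc (1 / 2 : ℝ) 3, osc (lam * u * s) * (f u * ((s : ℂ) * χ θ))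
      = (∫ u in Ioc (1 / 2 : ℝ) 3, osc (lam * u * s) * ((s : ℂ) * f u)) * χ θ := by
        rw [← integral_mul_const]
        exact integral_congr_ae (.of_forall fun u => by ring)
    _ = (lam : ℂ)⁻¹ *
          ((∫ u in Ioc (1 / 2 : ℝ) 3, osc (lam * u * s) * radialDeriv f u) * χ θ) := by
        rw [integral_osc_mul_radialDeriv hf hlam, mul_assoc]
    _ = (lam : ℂ)⁻¹ *
          ∫ u in Ioc (1 / 2 : ℝ) 3, osc (lam * u * s) * (radialDeriv f u * χ θ) := by
        rw [← integral_mul_const]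
        congr 1
        exact integral_congr_ae (.of_forall fun u => by ring)

lemma oscInt_polarPhaseDeriv_mul {f : ℝ → ℂ} (hf : IsBump f) {χ χ' : ℝ → ℂ}
    (hχ : ∀ θ, HasDerivAt χ (χ' θ) θ) (hχ' : Continuous χ') (hper : χ (-π) = χ π) (c : ℝ)
    {lam : ℝ} (hlam : lam ≠ 0) (v : ℝ × ℝ) :
    oscInt f (fun θ => (polarPhaseDeriv v θ : ℂ) * χ θ) c lam v =
      (lam : ℂ)⁻¹ * oscInt (radialDiv f) χ' c lam v := by
  have hfc := hf.continuous
  have hfd := hf.radialDiv.continuous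
  have hχc : Continuous χ := continuous_iff_continuousAt.2 fun θ => (hχ θ).continuousAt
  unfold oscInt polarMeasure
  rw [integral_prod _ (integrable_polarMeasure (by fun_prop)),
    integral_prod _ (integrable_polarMeasure (by fun_prop)), ← integral_const_mul]
  refine setIntegral_congr_fun measurableSet_Ioc fun u hu => ?_
  have hu0 : u ≠ 0 := (lt_trans (by norm_num) hu.1).ne'
  dsimp only
  calc ∫ θ in Ioc (-π) π, osc (lam * u * polarPhase c v θ) *
          (f u * ((polarPhaseDeriv v θ : ℂ) * χ θ))
      = f u * ∫ θ in Ioc (-π) π, osc (lam * u * polarPhase c v θ) *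
          ((polarPhaseDeriv v θ : ℂ) * χ θ) := by
        rw [← integral_const_mul]
        exact integral_congr_ae (.of_forall fun θ => by ring)
    _ = (lam : ℂ)⁻¹ * (radialDiv f u *
          ∫ θ in Ioc (-π) π, osc (lam * u * polarPhase c v θ) * χ' θ) := by
        rw [integral_osc_mul_polarPhaseDeriv hχ hχ' hper c (mul_ne_zero hlam hu0), radialDiv]
        push_cast
        ring
    _ = (lam : ℂ)⁻¹ * ∫ θ in Ioc (-π) π, osc (lam * u * polarPhase c v θ) *
          (radialDiv f u * χ' θ) := by
        rw [← integral_const_mul]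
        congr 1
        exact integral_congr_ae (.of_forall fun θ => by ring)

lemma normSq_sub_sq_mul_oscInt {f : ℝ → ℂ} (hf : IsBump f) {χ χ' χ'' : ℝ → ℂ}
    (hχ : ∀ θ, HasDerivAt χ (χ' θ) θ) (hχ' : ∀ θ, HasDerivAt χ' (χ'' θ) θ)
    (hχ'' : Continuous χ'') (hper : χ (-π) = χ π) (hper' : χ' (-π) = χ' π) (c : ℝ) {lam : ℝ}
    (hlam : lam ≠ 0) (v : ℝ × ℝ) :
    ((v.1 ^ 2 + v.2 ^ 2 - c ^ 2 : ℝ) : ℂ) * oscInt f χ c lam v =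
      (lam : ℂ)⁻¹ * ((lam : ℂ)⁻¹ * oscInt (radialDeriv (radialDeriv f)) χ c lam v -
        2 * c * oscInt (radialDeriv f) χ c lam v + c * oscInt (radialDiv f) χ c lam v -
        (lam : ℂ)⁻¹ * oscInt (radialDeriv (radialDiv f)) χ c lam v +
        (lam : ℂ)⁻¹ * oscInt (radialDiv (radialDiv f)) χ'' c lam v) := by
  have hfc := hf.continuous
  have hIc := hf.radialDiv.continuous
  have hχc : Continuous χ := continuous_iff_continuousAt.2 fun θ => (hχ θ).continuousAt
  have hχc' : Continuous χ' := continuous_iff_continuousAt.2 fun θ => (hχ' θ).continuousAt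
  have hsplit : ((v.1 ^ 2 + v.2 ^ 2 - c ^ 2 : ℝ) : ℂ) * oscInt f χ c lam v =
      oscInt f (fun θ => (polarPhase c v θ : ℂ) * ((polarPhase c v θ : ℂ) * χ θ)) c lam v +
      (oscInt f (fun θ => (-2 * c : ℂ) * ((polarPhase c v θ : ℂ) * χ θ)) c lam v +
      oscInt f (fun θ => (polarPhaseDeriv v θ : ℂ) * ((polarPhaseDeriv v θ : ℂ) * χ θ))
        c lam v) := by
    rw [← oscInt_add hfc (by fun_prop) (by fun_prop), ← oscInt_add hfc (by fun_prop) (by fun_prop),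
      ← oscInt_const_mul]
    congr 1
    funext θ
    rw [normSq_sub_sq_eq_polarPhase c v θ]
    push_cast
    ring
  have hderiv : ∀ θ, HasDerivAt (fun θ => (polarPhaseDeriv v θ : ℂ) * χ θ)
      (((c : ℂ) * χ θ + (-1) * ((polarPhase c v θ : ℂ) * χ θ)) +
        (polarPhaseDeriv v θ : ℂ) * χ' θ) θ := fun θ =>
    ((hasDerivAt_polarPhaseDeriv c v θ).ofReal_comp.mul (hχ θ)).congr_deriv (by push_cast; ring)
  rw [hsplit, oscInt_polarPhase_mul hf (by fun_prop) c hlam, oscInt_const_mul,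
    oscInt_polarPhase_mul hf hχc c hlam, oscInt_polarPhase_mul hf.radialDeriv hχc c hlam,
    oscInt_polarPhaseDeriv_mul hf hderiv (by fun_prop) (by simp [hper, polarPhaseDeriv]) c hlam,
    oscInt_add hIc (by fun_prop) (by fun_prop), oscInt_add hIc (by fun_prop) (by fun_prop),
    oscInt_const_mul, oscInt_const_mul, oscInt_polarPhase_mul hf.radialDiv hχc c hlam,
    oscInt_polarPhaseDeriv_mul hf.radialDiv hχ' hχ'' hper' c hlam]
  ring

lemma snd_mul_oscInt {f : ℝ → ℂ} (hf : IsBump f) {χ χ' : ℝ → ℂ} (hχ : Continuous χ)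
    (hχ' : ∀ θ, HasDerivAt (fun θ => (cos θ : ℂ) * χ θ) (χ' θ) θ)
    (hχc' : Continuous χ') (hper : χ (-π) = χ π) (c : ℝ) {lam : ℝ}
    (hlam : lam ≠ 0) (v : ℝ × ℝ) :
    (v.2 : ℂ) * oscInt f χ c lam v =
      c * oscInt f (fun θ => (sin θ : ℂ) * χ θ) c lam v -
      (lam : ℂ)⁻¹ * oscInt (radialDeriv f) (fun θ => (sin θ : ℂ) * χ θ) c lam v -
      (lam : ℂ)⁻¹ * oscInt (radialDiv f) χ' c lam v := by
  have hfc := hf.continuous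
  have hsplit : (v.2 : ℂ) * oscInt f χ c lam v =
      oscInt f (fun θ => (c : ℂ) * ((sin θ : ℂ) * χ θ)) c lam v +
      (oscInt f (fun θ => (-1 : ℂ) * ((polarPhase c v θ : ℂ) * ((sin θ : ℂ) * χ θ))) c lam v +
      oscInt f (fun θ => (-1 : ℂ) * ((polarPhaseDeriv v θ : ℂ) * ((cos θ : ℂ) * χ θ)))
        c lam v) := by
    rw [← oscInt_add hfc (by fun_prop) (by fun_prop), ← oscInt_add hfc (by fun_prop) (by fun_prop),
      ← oscInt_const_mul]
    congr 1
    funext θ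
    conv_lhs => rw [snd_eq_polarPhase c v θ]
    push_cast
    ring
  rw [hsplit, oscInt_const_mul, oscInt_const_mul, oscInt_const_mul,
    oscInt_polarPhase_mul hf (by fun_prop) c hlam,
    oscInt_polarPhaseDeriv_mul hf hχ' hχc' (by simp [hper]) c hlam]
  ring

lemma integrable_inv_one_add_mul_sq {a : ℝ} (ha : a ≠ 0) (b : ℝ) :
    Integrable fun x : ℝ => (1 + (a * (x - b)) ^ 2)⁻¹ :=
  (integrable_inv_one_add_sq.comp_mul_left' ha).comp_sub_right b

lemma integral_inv_one_add_mul_sq {a : ℝ} (ha : 0 < a) (b : ℝ) :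
    ∫ x : ℝ, (1 + (a * (x - b)) ^ 2)⁻¹ = π / a := by
  rw [integral_sub_right_eq_self (fun x : ℝ => (1 + (a * x) ^ 2)⁻¹) b,
    Measure.integral_comp_mul_left (fun x : ℝ => (1 + x ^ 2)⁻¹) a, integral_univ_inv_one_add_sq,
    abs_of_pos (inv_pos.2 ha), smul_eq_mul, inv_mul_eq_div]

lemma lintegral_inv_one_add_mul_sq {a : ℝ} (ha : 0 < a) (b : ℝ) :
    ∫⁻ x, ENNReal.ofReal ((1 + (a * (x - b)) ^ 2)⁻¹) = ENNReal.ofReal (π / a) := by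
  rw [← ofReal_integral_eq_lintegral_ofReal (integrable_inv_one_add_mul_sq ha.ne' b)
    (.of_forall fun x => by positivity), integral_inv_one_add_mul_sq ha]

lemma sq_div_five_le_one_sub_cos {x : ℝ} (hx : |x| ≤ π) : x ^ 2 / 5 ≤ 1 - cos x := by
  have hhalf : |x / 2| ≤ π / 2 := by rw [abs_div, abs_two]; linarith
  have hsin : (2 / π * |x / 2|) ^ 2 ≤ |sin (x / 2)| ^ 2 :=
    pow_le_pow_left₀ (by positivity) (mul_abs_le_abs_sin hhalf) 2
  rw [sq_abs, mul_pow, sq_abs] at hsin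
  have hπ : π ^ 2 < 10 := by nlinarith [pi_lt_d2, pi_pos]
  calc x ^ 2 / 5 = 2 / 10 * x ^ 2 := by ring
    _ ≤ 2 / π ^ 2 * x ^ 2 := by gcongr
    _ = 2 * ((2 / π) ^ 2 * (x / 2) ^ 2) := by ring
    _ ≤ 2 * sin (x / 2) ^ 2 := by gcongr
    _ = 1 - cos x := by
        have hcos := cos_sq (x / 2)
        rw [mul_div_cancel₀ x two_ne_zero] at hcos
        linarith [cos_sq' (x / 2)]

lemma IsAngularCutoff.eq_zero_of_four_div_lt {χ : ℝ → ℝ → ℝ} (hχ : IsAngularCutoff χ) {M θ : ℝ}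
    (hM : 0 < M) (hθ : |θ| ≤ π) (hfar : 4 / M < |θ|) : χ M θ = 0 := by
  apply hχ.eq_zero
  have hsq : 16 < M ^ 2 * θ ^ 2 := by
    rw [div_lt_iff₀ hM] at hfar
    have := pow_lt_pow_left₀ hfar (by norm_num) two_ne_zero
    rw [mul_pow, sq_abs] at this
    linarith
  calc (2 + 1 / 1000 : ℝ) < 16 / 5 := by norm_num
    _ ≤ M ^ 2 * θ ^ 2 / 5 := by gcongr
    _ = M ^ 2 * (θ ^ 2 / 5) := by ring
    _ ≤ M ^ 2 * (1 - cos θ) := by gcongr; exact sq_div_five_le_one_sub_cos hθ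

lemma IsAngularCutoff.lintegral_sq_le {χ : ℝ → ℝ → ℝ} (hχ : IsAngularCutoff χ) :
    ∃ C : NNReal, ∀ M, 1 ≤ M →
      ∫⁻ θ in Ioc (-π) π, ‖(χ M θ : ℂ)‖ₑ ^ 2 ≤ C * ENNReal.ofReal M⁻¹ := by
  obtain ⟨a, ha⟩ := hχ.exists_abs_le
  refine ⟨(8 * a ^ 2).toNNReal, fun M hM => ?_⟩
  have hM0 : 0 < M := by linarith
  calc ∫⁻ θ in Ioc (-π) π, ‖(χ M θ : ℂ)‖ₑ ^ 2
      ≤ ∫⁻ θ in Ioc (-π) π,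
          (Icc (-(4 / M)) (4 / M)).indicator (fun _ => ENNReal.ofReal (a ^ 2)) θ := by
        refine setLIntegral_mono' measurableSet_Ioc fun θ hθ => ?_
        by_cases hnear : θ ∈ Icc (-(4 / M)) (4 / M)
        · rw [indicator_of_mem hnear, ← ofReal_norm, ← ENNReal.ofReal_pow (norm_nonneg _),
            Complex.norm_real]
          exact ENNReal.ofReal_le_ofReal (pow_le_pow_left₀ (norm_nonneg _) (ha M θ hM) 2)
        · rw [mem_Icc, ← abs_le, not_le] at hnear
          simp [hχ.eq_zero_of_four_div_lt hM0 (abs_le.2 ⟨hθ.1.le, hθ.2⟩) hnear]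
    _ ≤ ∫⁻ θ, (Icc (-(4 / M)) (4 / M)).indicator (fun _ => ENNReal.ofReal (a ^ 2)) θ :=
        setLIntegral_le_lintegral _ _
    _ = ENNReal.ofReal (8 * a ^ 2) * ENNReal.ofReal M⁻¹ := by
        rw [lintegral_indicator_const measurableSet_Icc, volume_Icc,
          ← ENNReal.ofReal_mul (by positivity), ← ENNReal.ofReal_mul (by positivity)]
        congr 1
        ring

/-! ### The kernel in `L¹` -/

lemma lintegral_comp_polarMeasure_le {lam : ℝ} (hlam : 0 < lam) {F : ℝ × ℝ → ℝ≥0∞}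
    (hF : Measurable F) :
    ∫⁻ z, F (-(lam * z.1 * cos z.2), -(lam * z.1 * sin z.2)) ∂polarMeasure ≤
      ENNReal.ofReal (2 * (lam ^ 2)⁻¹) * ∫⁻ x, F x := by
  have hbox : polarMeasure = volume.restrict (Ioc (1 / 2 : ℝ) 3 ×ˢ Ioo (-π) π) := by
    rw [polarMeasure, Measure.restrict_congr_set (Ioo_ae_eq_Ioc (a := -π) (b := π)).symm,
      Measure.prod_restrict, Measure.volume_eq_prod]
  have hsub : Ioc (1 / 2 : ℝ) 3 ×ˢ Ioo (-π) π ⊆ polarCoord.target := by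
    rw [polarCoord_target]
    exact prod_mono (fun x hx => lt_trans (by norm_num) hx.1) subset_rfl
  have hscale : ∫⁻ x : ℝ × ℝ, F ((-lam) • x) = ENNReal.ofReal ((lam ^ 2)⁻¹) * ∫⁻ x, F x := by
    simpa using lintegral_comp_smul (volume : Measure (ℝ × ℝ)) (neg_ne_zero.2 hlam.ne') hF
  rw [ENNReal.ofReal_mul zero_le_two, mul_assoc, ← hscale,
    ← lintegral_comp_polarCoord_symm (fun x => F ((-lam) • x)), hbox,
    ← lintegral_const_mul' _ _ ENNReal.ofReal_ne_top]
  refine (setLIntegral_mono' (measurableSet_Ioc.prod measurableSet_Ioo) fun z hz => ?_).trans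
    (lintegral_mono_set hsub)
  have hpolar : (-lam) • polarCoord.symm z = (-(lam * z.1 * cos z.2), -(lam * z.1 * sin z.2)) := by
    simp [polarCoord_symm_apply, mul_assoc]
  rw [smul_eq_mul, ← mul_assoc, ← ENNReal.ofReal_mul zero_le_two, hpolar]
  refine le_mul_of_one_le_left zero_le ?_
  rw [ENNReal.one_le_ofReal]
  linarith [hz.1.1]

lemma oscInt_eq_integral_osc_inner (f χ : ℝ → ℂ) (c lam : ℝ) (v : ℝ × ℝ) :
    oscInt f χ c lam v =
      ∫ z, osc (v.1 * -(lam * z.1 * cos z.2) + v.2 * -(lam * z.1 * sin z.2)) *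
        (osc (lam * z.1 * c) * (f z.1 * χ z.2)) ∂polarMeasure := by
  refine integral_congr_ae (.of_forall fun z => ?_)
  dsimp only
  rw [← mul_assoc (osc _) (osc _), ← osc_add]
  congr 2
  simp only [polarPhase]
  ring

lemma lintegral_oscInt_sq_le {f χ : ℝ → ℂ} (hf : Continuous f) (hχ : Continuous χ) (c : ℝ)
    {lam : ℝ} (hlam : 0 < lam) :
    ∫⁻ v, ‖oscInt f χ c lam v‖ₑ ^ 2 ≤
      ENNReal.ofReal ((2 * π) ^ 2) * ENNReal.ofReal (2 * (lam ^ 2)⁻¹) *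
        ((∫⁻ u in Ioc (1 / 2 : ℝ) 3, ‖f u‖ₑ ^ 2) * ∫⁻ θ in Ioc (-π) π, ‖χ θ‖ₑ ^ 2) := by
  simp_rw [oscInt_eq_integral_osc_inner]
  refine (lintegral_oscillatory_sq_le polarMeasure
    (Φ := fun z => (-(lam * z.1 * cos z.2), -(lam * z.1 * sin z.2))) (by fun_prop)
    (integrable_polarMeasure (by fun_prop))
    fun F hF => lintegral_comp_polarMeasure_le hlam hF).trans_eq ?_
  congr 1
  rw [← lintegral_prod_mul (by fun_prop) (by fun_prop)]
  refine lintegral_congr fun z => ?_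
  rw [enorm_mul, enorm_osc, one_mul, enorm_mul, mul_pow]

lemma measurable_oscInt {f χ : ℝ → ℂ} (hf : Continuous f) (hχ : Continuous χ) (c lam : ℝ) :
    Measurable (oscInt f χ c lam) := by
  have hintegrand : Continuous fun z : (ℝ × ℝ) × (ℝ × ℝ) =>
      osc (lam * z.2.1 * polarPhase c z.1 z.2.2) * (f z.2.1 * χ z.2.2) := by
    unfold polarPhase; fun_prop
  exact (hintegrand.stronglyMeasurable.integral_prod_right' (ν := polarMeasure)).measurable

/-- The scales of the kernel: angular width `M⁻¹`, frequency `lam`, and radius `c` of the circle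
near which it concentrates. All bounds below are uniform over `Scales`. -/
structure Scales where
  M : ℝ
  lam : ℝ
  c : ℝ
  one_le_M : 1 ≤ M
  sq_M_le_lam : M ^ 2 ≤ lam
  le_c : 1 / 4 ≤ c
  c_le : c ≤ 20

namespace Scales

variable (s : Scales)

lemma M_pos : 0 < s.M := by linarith [s.one_le_M]

lemma one_le_lam : 1 ≤ s.lam := (one_le_pow₀ s.one_le_M).trans s.sq_M_le_lam

lemma lam_pos : 0 < s.lam := by linarith [s.one_le_lam]

lemma norm_inv_lam_le : ‖(s.lam : ℂ)⁻¹‖ ≤ 1 := by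
  rw [norm_inv, Complex.norm_real, norm_of_nonneg s.lam_pos.le]
  exact inv_le_one_of_one_le₀ s.one_le_lam

lemma norm_inv_lam_mul_sq_M_le : ‖(s.lam : ℂ)⁻¹ * (s.M : ℂ) ^ 2‖ ≤ 1 := by
  rw [norm_mul, norm_inv, norm_pow, Complex.norm_real, Complex.norm_real,
    norm_of_nonneg s.lam_pos.le, norm_of_nonneg s.M_pos.le, inv_mul_le_one₀ s.lam_pos]
  exact s.sq_M_le_lam

lemma norm_c_le : ‖(s.c : ℂ)‖ ≤ 20 := by
  rw [Complex.norm_real, norm_of_nonneg (by linarith [s.le_c])]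
  exact s.c_le

end Scales

/-- The oscillatory integral whose angular profile is the cutoff `χ` at the scale `s.M`. -/
def cutoffOscInt (f : ℝ → ℂ) (χ : ℝ → ℝ → ℝ) (s : Scales) : ℝ × ℝ → ℂ :=
  oscInt f (fun θ => (χ s.M θ : ℂ)) s.c s.lam

lemma measurable_cutoffOscInt {f : ℝ → ℂ} {χ : ℝ → ℝ → ℝ} (hf : IsBump f) (hχ : IsAngularCutoff χ)
    (s : Scales) : Measurable (cutoffOscInt f χ s) := by
  have := hχ.continuous s.M_pos
  exact measurable_oscInt hf.continuous (by fun_prop) _ _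

/-- Finite sums of oscillatory integrals with coefficients bounded uniformly in the scales. -/
inductive IsOscSum : (Scales → ℝ × ℝ → ℂ) → Prop
  | oscInt {f : ℝ → ℂ} {χ : ℝ → ℝ → ℝ} : IsBump f → IsAngularCutoff χ → IsOscSum (cutoffOscInt f χ)
  | add {Y Z : Scales → ℝ × ℝ → ℂ} : IsOscSum Y → IsOscSum Z → IsOscSum fun s v => Y s v + Z s v
  | const_mul {a : Scales → ℂ} {D : ℝ} {Y : Scales → ℝ × ℝ → ℂ} : (∀ s, ‖a s‖ ≤ D) → IsOscSum Y →
      IsOscSum fun s v => a s * Y s v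

/-- The size, in `L²`, of an oscillatory integral at the scales `s`. -/
def Scales.size (s : Scales) : ℝ≥0∞ := ENNReal.ofReal (s.lam * √s.M)⁻¹

lemma Scales.size_sq (s : Scales) : s.size ^ 2 = ENNReal.ofReal (s.lam ^ 2 * s.M)⁻¹ := by
  have := s.lam_pos
  rw [Scales.size, ← ENNReal.ofReal_pow (by positivity), inv_pow, mul_pow, sq_sqrt s.M_pos.le]

lemma exists_eLpNorm_cutoffOscInt_le {f : ℝ → ℂ} {χ : ℝ → ℝ → ℝ} (hf : IsBump f)
    (hχ : IsAngularCutoff χ) :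
    ∃ C : NNReal, ∀ s, eLpNorm (cutoffOscInt f χ s) 2 volume ≤ C * s.size := by
  obtain ⟨a, ha⟩ := hχ.lintegral_sq_le
  obtain ⟨D, hD⟩ := hf.exists_norm_le
  have hradial : ∫⁻ u in Ioc (1 / 2 : ℝ) 3, ‖f u‖ₑ ^ 2 ≤ ENNReal.ofReal (3 * D ^ 2) := by
    calc ∫⁻ u in Ioc (1 / 2 : ℝ) 3, ‖f u‖ₑ ^ 2
        ≤ ∫⁻ u in Ioc (1 / 2 : ℝ) 3, ENNReal.ofReal (D ^ 2) :=
          lintegral_mono fun u => by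
            rw [← ofReal_norm, ← ENNReal.ofReal_pow (norm_nonneg _)]
            exact ENNReal.ofReal_le_ofReal (pow_le_pow_left₀ (norm_nonneg _) (hD u) 2)
      _ ≤ ENNReal.ofReal (3 * D ^ 2) := by
          rw [setLIntegral_const, volume_Ioc, ← ENNReal.ofReal_mul (by positivity)]
          exact ENNReal.ofReal_le_ofReal (by nlinarith [sq_nonneg D])
  refine ⟨NNReal.sqrt (((2 * π) ^ 2 * 2 * (3 * D ^ 2)).toNNReal * a), fun s => ?_⟩
  have := hχ.continuous s.M_pos
  have hlam := s.lam_pos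
  refine (ENNReal.pow_le_pow_left_iff two_ne_zero).1 ?_
  rw [eLpNorm_two_sq, mul_pow, s.size_sq, ← ENNReal.coe_pow, NNReal.sq_sqrt, ENNReal.coe_mul]
  refine (lintegral_oscInt_sq_le hf.continuous (by fun_prop) _ hlam).trans
    ((mul_le_mul_right (mul_le_mul' hradial (ha s.M s.one_le_M)) _).trans_eq ?_)
  rw [show (s.lam ^ 2 * s.M)⁻¹ = (s.lam ^ 2)⁻¹ * s.M⁻¹ from mul_inv _ _]
  rw [ENNReal.ofReal_mul zero_le_two, ENNReal.ofReal_mul (p := (s.lam ^ 2)⁻¹) (by positivity),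
    ← ENNReal.ofReal, ENNReal.ofReal_mul (p := (2 * π) ^ 2 * 2) (by positivity),
    ENNReal.ofReal_mul (p := (2 * π) ^ 2) (by positivity)]
  ring

namespace IsOscSum

variable {Y : Scales → ℝ × ℝ → ℂ}

lemma measurable (hY : IsOscSum Y) (s : Scales) : Measurable (Y s) := by
  induction hY with
  | oscInt hf hχ => exact measurable_cutoffOscInt hf hχ s
  | add _ _ ih₁ ih₂ => exact ih₁.add ih₂
  | const_mul _ _ ih => exact ih.const_mul _

lemma exists_eLpNorm_le (hY : IsOscSum Y) :
    ∃ C : NNReal, ∀ s, eLpNorm (Y s) 2 volume ≤ C * s.size := by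
  induction hY with
  | oscInt hf hχ => exact exists_eLpNorm_cutoffOscInt_le hf hχ
  | @add Y Z hY hZ ih₁ ih₂ =>
    obtain ⟨C₁, hC₁⟩ := ih₁
    obtain ⟨C₂, hC₂⟩ := ih₂
    refine ⟨C₁ + C₂, fun s => ?_⟩
    rw [ENNReal.coe_add, add_mul]
    exact (eLpNorm_add_le (hY.measurable s).aestronglyMeasurable
      (hZ.measurable s).aestronglyMeasurable one_le_two).trans (add_le_add (hC₁ s) (hC₂ s))
  | @const_mul a D Y ha _ ih =>
    obtain ⟨C, hC⟩ := ih
    refine ⟨D.toNNReal * C, fun s => ?_⟩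
    calc eLpNorm (a s • Y s) 2 volume = ‖a s‖ₑ * eLpNorm (Y s) 2 volume := eLpNorm_const_smul ..
      _ ≤ ENNReal.ofReal D * (C * s.size) := by
          rw [← ofReal_norm]
          exact mul_le_mul' (ENNReal.ofReal_le_ofReal (ha s)) (hC s)
      _ = (D.toNNReal * C : NNReal) * s.size := by rw [ENNReal.coe_mul, mul_assoc]; rfl

lemma mul_of_forall_cutoffOscInt {w : Scales → ℝ × ℝ → ℂ}
    (hw : ∀ f χ, IsBump f → IsAngularCutoff χ → IsOscSum fun s v => w s v * cutoffOscInt f χ s v)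
    (hY : IsOscSum Y) : IsOscSum fun s v => w s v * Y s v := by
  induction hY with
  | oscInt hf hχ => exact hw _ _ hf hχ
  | add _ _ ih₁ ih₂ => simpa only [mul_add] using ih₁.add ih₂
  | const_mul ha _ ih => simpa only [mul_left_comm] using ih.const_mul ha

lemma normSq_sub_sq_mul (hY : IsOscSum Y) :
    IsOscSum fun s v => ((s.lam * (v.1 ^ 2 + v.2 ^ 2 - s.c ^ 2) : ℝ) : ℂ) * Y s v := by
  refine mul_of_forall_cutoffOscInt (fun f χ hf hχ => ?_) hY
  obtain ⟨χ₁, hχ₁, hd₁⟩ := hχ.exists_hasDerivAt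
  obtain ⟨χ₂, hχ₂, hd₂⟩ := hχ₁.exists_hasDerivAt
  have hexpand : ∀ s v, ((s.lam * (v.1 ^ 2 + v.2 ^ 2 - s.c ^ 2) : ℝ) : ℂ) * cutoffOscInt f χ s v =
      (s.lam : ℂ)⁻¹ * cutoffOscInt (radialDeriv (radialDeriv f)) χ s v +
      ((-2 * s.c) * cutoffOscInt (radialDeriv f) χ s v +
      (s.c * cutoffOscInt (radialDiv f) χ s v +
      (-(s.lam : ℂ)⁻¹ * cutoffOscInt (radialDeriv (radialDiv f)) χ s v +
      (s.lam : ℂ)⁻¹ * (s.M : ℂ) ^ 2 * cutoffOscInt (radialDiv (radialDiv f)) χ₂ s v))) := by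
    intro s v
    have hcont := hχ₂.continuous s.M_pos
    have hderiv₁ : ∀ θ, HasDerivAt (fun θ => (χ s.M θ : ℂ)) ((s.M * χ₁ s.M θ : ℝ) : ℂ) θ :=
      fun θ => (hd₁ s.M θ s.M_pos).ofReal_comp
    have hderiv₂ : ∀ θ, HasDerivAt (fun θ => ((s.M * χ₁ s.M θ : ℝ) : ℂ))
        ((s.M : ℂ) ^ 2 * (χ₂ s.M θ : ℂ)) θ := fun θ =>
      ((hd₂ s.M θ s.M_pos).const_mul s.M).ofReal_comp.congr_deriv (by push_cast; ring)
    have hparts := normSq_sub_sq_mul_oscInt hf hderiv₁ hderiv₂ (by fun_prop)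
      (by rw [hχ.apply_neg_pi]) (by rw [hχ₁.apply_neg_pi]) s.c s.lam_pos.ne' v
    have hlam : (s.lam : ℂ) ≠ 0 := by exact_mod_cast s.lam_pos.ne'
    rw [oscInt_const_mul] at hparts
    unfold cutoffOscInt
    rw [Complex.ofReal_mul, mul_assoc, hparts, mul_inv_cancel_left₀ hlam]
    ring
  simp_rw [hexpand]
  exact ((oscInt hf.radialDeriv.radialDeriv hχ).const_mul Scales.norm_inv_lam_le).add
    (((oscInt hf.radialDeriv hχ).const_mul (D := 40) fun s => by
        rw [norm_mul, norm_neg, Complex.norm_ofNat]; linarith [s.norm_c_le]).add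
    (((oscInt hf.radialDiv hχ).const_mul Scales.norm_c_le).add
    (((oscInt hf.radialDiv.radialDeriv hχ).const_mul fun s =>
        (norm_neg _).trans_le s.norm_inv_lam_le).add
    ((oscInt hf.radialDiv.radialDiv hχ₂).const_mul Scales.norm_inv_lam_mul_sq_M_le))))

lemma snd_mul (hY : IsOscSum Y) : IsOscSum fun s v => ((s.M * v.2 : ℝ) : ℂ) * Y s v := by
  refine mul_of_forall_cutoffOscInt (fun f χ hf hχ => ?_) hY
  obtain ⟨χ₁, hχ₁, hd₁⟩ := hχ.mul_cos.exists_hasDerivAt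
  have hexpand : ∀ s v, ((s.M * v.2 : ℝ) : ℂ) * cutoffOscInt f χ s v =
      s.c * cutoffOscInt f (fun M θ => M * sin θ * χ M θ) s v +
      (-(s.lam : ℂ)⁻¹ * cutoffOscInt (radialDeriv f) (fun M θ => M * sin θ * χ M θ) s v +
      -((s.lam : ℂ)⁻¹ * (s.M : ℂ) ^ 2) * cutoffOscInt (radialDiv f) χ₁ s v) := by
    intro s v
    have hcont := hχ.continuous s.M_pos
    have hcont₁ := hχ₁.continuous s.M_pos
    have hderiv₁ : ∀ θ, HasDerivAt (fun θ => (cos θ : ℂ) * (χ s.M θ : ℂ))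
        ((s.M : ℂ) * (χ₁ s.M θ : ℂ)) θ := fun θ => by
      simpa using (hd₁ s.M θ s.M_pos).ofReal_comp
    have hparts := snd_mul_oscInt hf (by fun_prop) hderiv₁ (by fun_prop)
      (by rw [hχ.apply_neg_pi]) s.c s.lam_pos.ne' v
    have hsin : ∀ F : ℝ → ℂ, cutoffOscInt F (fun M θ => M * sin θ * χ M θ) s v =
        s.M * _root_.oscInt F (fun θ => (sin θ : ℂ) * (χ s.M θ : ℂ)) s.c s.lam v := fun F => by
      rw [← oscInt_const_mul, cutoffOscInt]
      congr 1
      funext θ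
      push_cast
      ring
    rw [oscInt_const_mul] at hparts
    rw [hsin, hsin, Complex.ofReal_mul, mul_assoc, cutoffOscInt, hparts, cutoffOscInt]
    ring
  simp_rw [hexpand]
  exact ((oscInt hf hχ.mul_sin).const_mul Scales.norm_c_le).add
    (((oscInt hf.radialDeriv hχ.mul_sin).const_mul fun s =>
        (norm_neg _).trans_le s.norm_inv_lam_le).add
    ((oscInt hf.radialDiv hχ₁).const_mul fun s =>
        (norm_neg _).trans_le s.norm_inv_lam_mul_sq_M_le))

end IsOscSum

/-- The weight adapted to the concentration of the kernel at the scales `s`: its inverse has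
integral of order `(λ M)⁻¹`, and oscillatory integrals keep their `L²` bounds against it. -/
def weight (s : Scales) (v : ℝ × ℝ) : ℝ :=
  (1 + (s.lam * (v.1 ^ 2 + v.2 ^ 2 - s.c ^ 2)) ^ 2) * (1 + (s.M * v.2) ^ 2)

lemma weight_pos (s : Scales) (v : ℝ × ℝ) : 0 < weight s v := by
  unfold weight; positivity

@[fun_prop]
lemma continuous_weight (s : Scales) : Continuous (weight s) := by
  unfold weight; fun_prop

lemma inv_one_add_sin_sq_le {B : ℝ} (hB : 0 ≤ B) {θ : ℝ} (hθ : |θ| ≤ π) :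
    (1 + (B * sin θ) ^ 2)⁻¹ ≤ (1 + (2 / π * B * (θ - 0)) ^ 2)⁻¹ +
      (1 + (2 / π * B * (θ - π)) ^ 2)⁻¹ + (1 + (2 / π * B * (θ - -π)) ^ 2)⁻¹ := by
  have near : ∀ a : ℝ, |θ - a| ≤ π / 2 → |sin θ| = |sin (θ - a)| →
      (1 + (B * sin θ) ^ 2)⁻¹ ≤ (1 + (2 / π * B * (θ - a)) ^ 2)⁻¹ := by
    intro a ha hsin
    have hle : |2 / π * B * (θ - a)| ≤ |B * sin θ| := by
      rw [abs_mul, abs_mul B, abs_of_nonneg hB, abs_of_nonneg (show 0 ≤ 2 / π * B by positivity),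
        hsin]
      calc 2 / π * B * |θ - a| = B * (2 / π * |θ - a|) := by ring
        _ ≤ _ := by gcongr; exact mul_abs_le_abs_sin ha
    have := sq_le_sq.2 hle
    gcongr
  have nonneg : ∀ a : ℝ, 0 ≤ (1 + (2 / π * B * (θ - a)) ^ 2)⁻¹ := fun a => by positivity
  obtain ⟨hθ₁, hθ₂⟩ := abs_le.1 hθ
  rcases le_total |θ| (π / 2) with h | h
  · linarith [near 0 (by simpa using h) (by simp), nonneg π, nonneg (-π)]
  rcases le_total 0 θ with h0 | h0
  · rw [abs_of_nonneg h0] at h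
    linarith [near π (abs_le.2 ⟨by linarith, by linarith⟩) (by rw [sin_sub_pi, abs_neg]),
      nonneg 0, nonneg (-π)]
  · rw [abs_of_nonpos h0] at h
    linarith [near (-π) (abs_le.2 ⟨by linarith, by linarith⟩)
      (by rw [sub_neg_eq_add, sin_add_pi, abs_neg]), nonneg 0, nonneg π]

lemma lintegral_inv_one_add_sin_sq_le {B : ℝ} (hB : 0 < B) :
    ∫⁻ θ in Ioo (-π) π, ENNReal.ofReal ((1 + (B * sin θ) ^ 2)⁻¹) ≤
      ENNReal.ofReal (3 * π ^ 2 / (2 * B)) := by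
  have hB' : 0 < 2 / π * B := by positivity
  calc _ ≤ ∫⁻ θ in Ioo (-π) π, (ENNReal.ofReal ((1 + (2 / π * B * (θ - 0)) ^ 2)⁻¹) +
        ENNReal.ofReal ((1 + (2 / π * B * (θ - π)) ^ 2)⁻¹) +
        ENNReal.ofReal ((1 + (2 / π * B * (θ - -π)) ^ 2)⁻¹)) := by
        refine setLIntegral_mono' measurableSet_Ioo fun θ hθ => ?_
        rw [← ENNReal.ofReal_add (by positivity) (by positivity),
          ← ENNReal.ofReal_add (by positivity) (by positivity)]
        exact ENNReal.ofReal_le_ofReal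
          (inv_one_add_sin_sq_le hB.le (abs_le.2 ⟨hθ.1.le, hθ.2.le⟩))
    _ ≤ ∫⁻ θ, (ENNReal.ofReal ((1 + (2 / π * B * (θ - 0)) ^ 2)⁻¹) +
        ENNReal.ofReal ((1 + (2 / π * B * (θ - π)) ^ 2)⁻¹) +
        ENNReal.ofReal ((1 + (2 / π * B * (θ - -π)) ^ 2)⁻¹)) := setLIntegral_le_lintegral _ _
    _ = ENNReal.ofReal (π / (2 / π * B)) + ENNReal.ofReal (π / (2 / π * B)) +
        ENNReal.ofReal (π / (2 / π * B)) := by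
        rw [lintegral_add_left (by fun_prop), lintegral_add_left (by fun_prop)]
        simp only [lintegral_inv_one_add_mul_sq hB']
    _ = _ := by
        rw [← ENNReal.ofReal_add (by positivity) (by positivity),
          ← ENNReal.ofReal_add (by positivity) (by positivity)]
        congr 1
        field_simp
        ring

lemma inv_weight_polarCoord_symm_le (s : Scales) {R : ℝ} (hR : 0 ≤ R) (θ : ℝ) :
    (weight s (polarCoord.symm (R, θ)))⁻¹ ≤
      (1 + (s.lam / 4 * (R - s.c)) ^ 2)⁻¹ * (1 + (s.M * R * sin θ) ^ 2)⁻¹ := by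
  have hfactor : (R * cos θ) ^ 2 + (R * sin θ) ^ 2 - s.c ^ 2 = (R + s.c) * (R - s.c) := by
    linear_combination R ^ 2 * sin_sq_add_cos_sq θ
  have hradial : (s.lam / 4 * (R - s.c)) ^ 2 ≤ (s.lam * ((R + s.c) * (R - s.c))) ^ 2 := by
    have : (1 / 4 : ℝ) ^ 2 ≤ (R + s.c) ^ 2 :=
      pow_le_pow_left₀ (by norm_num) (by linarith [s.le_c]) 2
    calc (s.lam / 4 * (R - s.c)) ^ 2 = (1 / 4) ^ 2 * (s.lam * (R - s.c)) ^ 2 := by ring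
      _ ≤ (R + s.c) ^ 2 * (s.lam * (R - s.c)) ^ 2 := by gcongr
      _ = _ := by ring
  rw [polarCoord_symm_apply, weight, mul_inv, hfactor, mul_assoc s.M R]
  gcongr

lemma lintegral_inv_weight_le (s : Scales) :
    ∫⁻ v, ENNReal.ofReal ((weight s v)⁻¹) ≤ ENNReal.ofReal (6 * π ^ 3 / (s.lam * s.M)) := by
  have hM := s.M_pos
  have hlam := s.lam_pos
  rw [← lintegral_comp_polarCoord_symm, polarCoord_target, Measure.volume_eq_prod]
  calc _ ≤ ∫⁻ p in Ioi (0 : ℝ) ×ˢ Ioo (-π) π,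
        ENNReal.ofReal (p.1 * (1 + (s.lam / 4 * (p.1 - s.c)) ^ 2)⁻¹) *
        ENNReal.ofReal ((1 + (s.M * p.1 * sin p.2) ^ 2)⁻¹) ∂(volume.prod volume) := by
        refine setLIntegral_mono' (measurableSet_Ioi.prod measurableSet_Ioo) fun p hp => ?_
        have hp0 : 0 ≤ p.1 := (mem_Ioi.1 hp.1).le
        rw [smul_eq_mul, ← ENNReal.ofReal_mul hp0, ← ENNReal.ofReal_mul (by positivity), mul_assoc]
        exact ENNReal.ofReal_le_ofReal
          (mul_le_mul_of_nonneg_left (inv_weight_polarCoord_symm_le s hp0 p.2) hp0)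
    _ = ∫⁻ R in Ioi (0 : ℝ), ENNReal.ofReal (R * (1 + (s.lam / 4 * (R - s.c)) ^ 2)⁻¹) *
        ∫⁻ θ in Ioo (-π) π, ENNReal.ofReal ((1 + (s.M * R * sin θ) ^ 2)⁻¹) := by
        rw [← Measure.prod_restrict, lintegral_prod _ (by fun_prop)]
        refine lintegral_congr fun R => ?_
        dsimp only
        rw [lintegral_const_mul _ (by fun_prop)]
    _ ≤ ∫⁻ R in Ioi (0 : ℝ), ENNReal.ofReal (3 * π ^ 2 / (2 * s.M)) *
        ENNReal.ofReal ((1 + (s.lam / 4 * (R - s.c)) ^ 2)⁻¹) := by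
        refine setLIntegral_mono' measurableSet_Ioi fun R hR => ?_
        have hR : 0 < R := hR
        refine (mul_le_mul_right (lintegral_inv_one_add_sin_sq_le (by positivity)) _).trans ?_
        rw [← ENNReal.ofReal_mul (by positivity), ← ENNReal.ofReal_mul (by positivity)]
        refine ENNReal.ofReal_le_ofReal (le_of_eq ?_)
        field_simp
    _ ≤ ∫⁻ R, ENNReal.ofReal (3 * π ^ 2 / (2 * s.M)) *
        ENNReal.ofReal ((1 + (s.lam / 4 * (R - s.c)) ^ 2)⁻¹) := setLIntegral_le_lintegral _ _
    _ = _ := by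
        rw [lintegral_const_mul _ (by fun_prop), lintegral_inv_one_add_mul_sq (by positivity),
          ← ENNReal.ofReal_mul (by positivity)]
        congr 1
        field_simp
        ring

lemma ofReal_weight_mul_enorm_sq (s : Scales) (v : ℝ × ℝ) (y : ℂ) :
    ENNReal.ofReal (weight s v) * ‖y‖ₑ ^ 2 =
      ‖y‖ₑ ^ 2 + ‖((s.lam * (v.1 ^ 2 + v.2 ^ 2 - s.c ^ 2) : ℝ) : ℂ) * y‖ₑ ^ 2 +
        ‖((s.M * v.2 : ℝ) : ℂ) * y‖ₑ ^ 2 +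
        ‖((s.lam * (v.1 ^ 2 + v.2 ^ 2 - s.c ^ 2) : ℝ) : ℂ) *
          (((s.M * v.2 : ℝ) : ℂ) * y)‖ₑ ^ 2 := by
  have hsq : ∀ x : ℝ, ‖(x : ℂ)‖ₑ ^ 2 = ENNReal.ofReal (x ^ 2) := fun x => by
    rw [← ofReal_norm, ← ENNReal.ofReal_pow (norm_nonneg _), Complex.norm_real, norm_eq_abs,
      sq_abs]
  rw [weight, ENNReal.ofReal_mul (by positivity), ENNReal.ofReal_add zero_le_one (by positivity),
    ENNReal.ofReal_add zero_le_one (by positivity), ENNReal.ofReal_one]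
  simp only [enorm_mul, mul_pow, hsq]
  ring

lemma exists_lintegral_weight_mul_le {f : ℝ → ℂ} {χ : ℝ → ℝ → ℝ} (hf : IsBump f)
    (hχ : IsAngularCutoff χ) :
    ∃ C : NNReal, ∀ s,
      ∫⁻ v, ENNReal.ofReal (weight s v) * ‖cutoffOscInt f χ s v‖ₑ ^ 2 ≤ C * s.size ^ 2 := by
  have hsum := IsOscSum.oscInt hf hχ
  obtain ⟨C₁, h₁⟩ := hsum.exists_eLpNorm_le
  obtain ⟨C₂, h₂⟩ := hsum.normSq_sub_sq_mul.exists_eLpNorm_le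
  obtain ⟨C₃, h₃⟩ := hsum.snd_mul.exists_eLpNorm_le
  obtain ⟨C₄, h₄⟩ := hsum.snd_mul.normSq_sub_sq_mul.exists_eLpNorm_le
  refine ⟨C₁ ^ 2 + C₂ ^ 2 + C₃ ^ 2 + C₄ ^ 2, fun s => ?_⟩
  have hmeas := measurable_cutoffOscInt hf hχ s
  simp_rw [ofReal_weight_mul_enorm_sq]
  rw [lintegral_add_left (by fun_prop), lintegral_add_left (by fun_prop),
    lintegral_add_left (by fun_prop)]
  simp only [← eLpNorm_two_sq]
  calc _ ≤ (C₁ * s.size) ^ 2 + (C₂ * s.size) ^ 2 + (C₃ * s.size) ^ 2 + (C₄ * s.size) ^ 2 := by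
        gcongr
        exacts [h₁ s, h₂ s, h₃ s, h₄ s]
    _ = _ := by
        push_cast
        ring

lemma exists_lintegral_cutoffOscInt_le {f : ℝ → ℂ} {χ : ℝ → ℝ → ℝ} (hf : IsBump f)
    (hχ : IsAngularCutoff χ) :
    ∃ C : NNReal, ∀ s,
      ∫⁻ v, ‖cutoffOscInt f χ s v‖ₑ ≤ C * ENNReal.ofReal (s.lam ^ (3 / 2 : ℝ) * s.M)⁻¹ := by
  obtain ⟨C, hC⟩ := exists_lintegral_weight_mul_le hf hχ
  refine ⟨NNReal.sqrt ((6 * π ^ 3).toNNReal * C), fun s => ?_⟩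
  have hM := s.M_pos
  have hlam := s.lam_pos
  have hmeas := measurable_cutoffOscInt hf hχ s
  have hsize : ENNReal.ofReal (6 * π ^ 3 / (s.lam * s.M)) * s.size ^ 2 =
      ENNReal.ofReal (6 * π ^ 3) * ENNReal.ofReal (s.lam ^ (3 / 2 : ℝ) * s.M)⁻¹ ^ 2 := by
    have hpow : (s.lam ^ (3 / 2 : ℝ)) ^ 2 = s.lam ^ 3 := by
      rw [← rpow_mul_natCast hlam.le, ← rpow_natCast s.lam 3]
      norm_num
    rw [s.size_sq, ← ENNReal.ofReal_pow (by positivity), ← ENNReal.ofReal_mul (by positivity),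
      ← ENNReal.ofReal_mul (by positivity), inv_pow, mul_pow, hpow]
    congr 1
    field_simp
  refine (ENNReal.pow_le_pow_left_iff two_ne_zero).1 ?_
  calc (∫⁻ v, ‖cutoffOscInt f χ s v‖ₑ) ^ 2
      ≤ (∫⁻ v, ENNReal.ofReal (weight s v)⁻¹) *
          ∫⁻ v, ENNReal.ofReal (weight s v) * ‖cutoffOscInt f χ s v‖ₑ ^ 2 :=
        sq_lintegral_le_mul_of_weight (weight_pos s) (by fun_prop) (by fun_prop)
    _ ≤ ENNReal.ofReal (6 * π ^ 3 / (s.lam * s.M)) * (C * s.size ^ 2) :=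
        mul_le_mul' (lintegral_inv_weight_le s) (hC s)
    _ = _ := by
        rw [mul_left_comm, hsize, mul_pow, ← ENNReal.coe_pow, NNReal.sq_sqrt, ENNReal.coe_mul,
          ← ENNReal.ofReal, mul_left_comm, mul_assoc]

/-! ### The kernel in `L^∞` -/

lemma exists_norm_integral_osc_mul_le {f : ℝ → ℂ} (hf : IsBump f) :
    ∃ D, 0 ≤ D ∧ ∀ lam s, 0 < lam →
      ‖∫ u in Ioc (1 / 2 : ℝ) 3, osc (lam * u * s) * f u‖ ≤ D * (1 + lam * |s|)⁻¹ := by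
  refine ⟨(∫ u in Ioc (1 / 2 : ℝ) 3, ‖f u‖) + ∫ u in Ioc (1 / 2 : ℝ) 3, ‖radialDeriv f u‖,
    by positivity, fun lam s hlam => ?_⟩
  have htriv : ∀ g : ℝ → ℂ, ‖∫ u in Ioc (1 / 2 : ℝ) 3, osc (lam * u * s) * g u‖ ≤
      ∫ u in Ioc (1 / 2 : ℝ) 3, ‖g u‖ := fun g =>
    (norm_integral_le_integral_norm _).trans_eq (by simp only [norm_mul, norm_osc, one_mul])
  have hparts : lam * |s| * ‖∫ u in Ioc (1 / 2 : ℝ) 3, osc (lam * u * s) * f u‖ ≤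
      ∫ u in Ioc (1 / 2 : ℝ) 3, ‖radialDeriv f u‖ := by
    have h := congrArg norm (integral_osc_mul_radialDeriv hf hlam.ne' s)
    simp only [mul_left_comm _ (s : ℂ), integral_const_mul, norm_mul, norm_inv, Complex.norm_real,
      norm_eq_abs, abs_of_pos hlam] at h
    rw [mul_assoc, h, mul_inv_cancel_left₀ hlam.ne']
    exact htriv _
  rw [← div_eq_mul_inv, le_div_iff₀ (by positivity), mul_comm, add_mul, one_mul]
  exact add_le_add (htriv f) hparts

lemma sq_div_fifteen_le_abs_cos_sub_cos {a x : ℝ} (ha : a ∈ Icc 0 (π / 2)) (hx : x ∈ Icc 0 π) :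
    (x - a) ^ 2 / 15 ≤ |cos x - cos a| := by
  obtain ⟨ha0, ha1⟩ := ha
  obtain ⟨hx0, hx1⟩ := hx
  have hπ := pi_lt_d2
  have hsum : 2 / π * (|x - a| / 6) ≤ |sin ((x + a) / 2)| := by
    have habs : |x - a| ≤ x + a := abs_le.2 ⟨by linarith, by linarith⟩
    refine le_trans ?_ (le_abs_self _)
    rcases le_total ((x + a) / 2) (π / 2) with h | h
    · refine le_trans ?_ (mul_le_sin (by linarith) h)
      gcongr
      linarith
    · rw [← sin_pi_sub]
      refine le_trans ?_ (mul_le_sin (by linarith) (by linarith))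
      gcongr
      linarith
  have hsub : 2 / π * |(x - a) / 2| ≤ |sin ((x - a) / 2)| :=
    mul_abs_le_abs_sin (abs_le.2 ⟨by linarith, by linarith⟩)
  rw [cos_sub_cos, abs_mul, abs_mul, abs_neg, abs_two, mul_assoc]
  calc (x - a) ^ 2 / 15 ≤ (x - a) ^ 2 / (3 / 2 * π ^ 2) := by
        gcongr
        nlinarith [pi_pos]
    _ = 2 * (2 / π * (|x - a| / 6) * (2 / π * |(x - a) / 2|)) := by
        rw [abs_div, abs_two, ← sq_abs (x - a)]
        field_simp
        ring
    _ ≤ _ := by gcongr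

lemma exists_sq_div_sixty_le_abs_sub_mul_cos {c R : ℝ} (hc : 1 / 4 ≤ c) (hR : 0 ≤ R) :
    ∃ θ₀, ∀ x ∈ Icc 0 π, (x - θ₀) ^ 2 / 60 ≤ |c - R * cos x| := by
  rcases le_or_gt c R with hcR | hcR
  · have hR : 0 < R := by linarith
    refine ⟨arccos (c / R), fun x hx => ?_⟩
    have hcos : cos (arccos (c / R)) = c / R :=
      cos_arccos (by linarith [show 0 ≤ c / R by positivity]) (div_le_one_of_le₀ hcR hR.le)
    have hbound := sq_div_fifteen_le_abs_cos_sub_cos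
      ⟨arccos_nonneg (c / R), arccos_le_pi_div_two.2 (by positivity)⟩ hx
    have hfactor : |c - R * cos x| = R * |cos x - c / R| := by
      rw [← abs_of_pos hR, ← abs_mul, abs_of_pos hR, abs_sub_comm]
      congr 1
      field_simp
    rw [hcos] at hbound
    rw [hfactor]
    nlinarith [abs_nonneg (cos x - c / R)]
  · refine ⟨0, fun x hx => le_trans ?_ (le_abs_self _)⟩
    have hcos := sq_div_five_le_one_sub_cos (x := x) (by rw [abs_of_nonneg hx.1]; exact hx.2)
    have := neg_one_le_cos x
    rcases le_total 0 (cos x) with h0 | h0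
    · nlinarith [mul_le_mul_of_nonneg_right hcR.le h0]
    · nlinarith [mul_nonneg hR (neg_nonneg.2 h0)]

lemma integral_comp_polarPhase (G : ℝ → ℝ) (c : ℝ) (v : ℝ × ℝ) :
    ∫ θ in Ioc (-π) π, G (polarPhase c v θ) =
      ∫ θ in Ioc (-π) π, G (c - ‖(⟨v.1, v.2⟩ : ℂ)‖ * cos θ) := by
  set w : ℂ := ⟨v.1, v.2⟩
  have hshift : ∀ θ, polarPhase c v θ = c - ‖w‖ * cos (θ - w.arg) := fun θ => by
    have hre : v.1 = ‖w‖ * cos w.arg := (Complex.norm_mul_cos_arg w).symm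
    have him : v.2 = ‖w‖ * sin w.arg := (Complex.norm_mul_sin_arg w).symm
    rw [polarPhase, hre, him, cos_sub]
    ring
  have hper : Function.Periodic (fun θ => G (c - ‖w‖ * cos θ)) (2 * π) := fun x => by simp
  have hle : -π ≤ π := by linarith [pi_pos]
  rw [← intervalIntegral.integral_of_le hle, ← intervalIntegral.integral_of_le hle]
  simp_rw [hshift]
  rw [intervalIntegral.integral_comp_sub_right (fun θ => G (c - ‖w‖ * cos θ))]
  have h := hper.intervalIntegral_add_eq (-π - w.arg) (-π)
  rwa [show -π - w.arg + 2 * π = π - w.arg by ring, show -π + 2 * π = π by ring] at h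

lemma integral_inv_one_add_sub_mul_cos_le {c lam R : ℝ} (hc : 1 / 4 ≤ c) (hlam : 0 < lam)
    (hR : 0 ≤ R) :
    ∫ θ in Ioc (-π) π, (1 + lam * |c - R * cos θ|)⁻¹ ≤ 2 * (π / √(lam / 60)) := by
  obtain ⟨θ₀, hθ₀⟩ := exists_sq_div_sixty_le_abs_sub_mul_cos hc hR
  set a := √(lam / 60)
  have ha : 0 < a := sqrt_pos.2 (by positivity)
  have near : ∀ x y : ℝ, (y - θ₀) ^ 2 / 60 ≤ |c - R * cos x| →
      (1 + lam * |c - R * cos x|)⁻¹ ≤ (1 + (a * (y - θ₀)) ^ 2)⁻¹ := fun x y hxy => by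
    rw [mul_pow, sq_sqrt (by positivity), div_mul_eq_mul_div, mul_div_assoc]
    gcongr
  have nonneg : ∀ b x : ℝ, 0 ≤ (1 + (a * (x - b)) ^ 2)⁻¹ := fun b x => by positivity
  have hpoint : ∀ x ∈ Ioc (-π) π, (1 + lam * |c - R * cos x|)⁻¹ ≤
      (1 + (a * (x - θ₀)) ^ 2)⁻¹ + (1 + (a * (x - -θ₀)) ^ 2)⁻¹ := fun x hx => by
    rcases le_total 0 x with h0 | h0
    · exact (near x x (hθ₀ x ⟨h0, hx.2⟩)).trans (le_add_of_nonneg_right (nonneg _ _))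
    · have h := near x (-x)
        (by simpa using hθ₀ (-x) ⟨by linarith, by linarith [hx.1]⟩)
      rw [show a * (-x - θ₀) = -(a * (x - -θ₀)) by ring, neg_sq] at h
      exact h.trans (le_add_of_nonneg_left (nonneg _ _))
  have hcont : Continuous fun x => (1 + lam * |c - R * cos x|)⁻¹ :=
    Continuous.inv₀ (by fun_prop) fun x => by positivity
  have hint := (integrable_inv_one_add_mul_sq ha.ne' θ₀).add
    (integrable_inv_one_add_mul_sq ha.ne' (-θ₀))
  calc _ ≤ ∫ x in Ioc (-π) π, ((1 + (a * (x - θ₀)) ^ 2)⁻¹ + (1 + (a * (x - -θ₀)) ^ 2)⁻¹) :=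
        setIntegral_mono_on ((hcont.continuousOn.integrableOn_compact isCompact_Icc).mono_set
          Ioc_subset_Icc_self) hint.integrableOn measurableSet_Ioc hpoint
    _ ≤ ∫ x, ((1 + (a * (x - θ₀)) ^ 2)⁻¹ + (1 + (a * (x - -θ₀)) ^ 2)⁻¹) :=
        setIntegral_le_integral hint (.of_forall fun x => add_nonneg (nonneg _ _) (nonneg _ _))
    _ = _ := by
        rw [integral_add (integrable_inv_one_add_mul_sq ha.ne' _)
          (integrable_inv_one_add_mul_sq ha.ne' _), integral_inv_one_add_mul_sq ha,
          integral_inv_one_add_mul_sq ha]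
        ring

lemma exists_norm_cutoffOscInt_le {f : ℝ → ℂ} {χ : ℝ → ℝ → ℝ} (hf : IsBump f)
    (hχ : IsAngularCutoff χ) :
    ∃ C, 0 ≤ C ∧ ∀ s v, ‖cutoffOscInt f χ s v‖ ≤ C * s.lam ^ (-(1 / 2) : ℝ) := by
  obtain ⟨D, hD, hradial⟩ := exists_norm_integral_osc_mul_le hf
  obtain ⟨a, hangular⟩ := hχ.exists_abs_le
  have ha : 0 ≤ a := (abs_nonneg _).trans (hangular 1 0 le_rfl)
  refine ⟨D * a * (2 * (π * √60)), by positivity, fun s v => ?_⟩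
  have hlam := s.lam_pos
  have hfc := hf.continuous
  have hχc := hχ.continuous s.M_pos
  have hinner : ∀ θ, ‖∫ u in Ioc (1 / 2 : ℝ) 3,
      osc (s.lam * u * polarPhase s.c v θ) * (f u * (χ s.M θ : ℂ))‖ ≤
      D * a * (1 + s.lam * |polarPhase s.c v θ|)⁻¹ := fun θ => by
    simp_rw [← mul_assoc]
    rw [integral_mul_const, norm_mul, Complex.norm_real, mul_right_comm]
    gcongr
    · exact hradial _ _ hlam
    · exact hangular _ _ s.one_le_M
  have hcont : Continuous fun θ => (1 + s.lam * |polarPhase s.c v θ|)⁻¹ :=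
    Continuous.inv₀ (by fun_prop) fun x => by positivity
  unfold cutoffOscInt oscInt polarMeasure
  rw [integral_prod_symm _ (integrable_polarMeasure (by unfold polarPhase; fun_prop))]
  calc _ ≤ ∫ θ in Ioc (-π) π, D * a * (1 + s.lam * |polarPhase s.c v θ|)⁻¹ :=
        norm_integral_le_of_norm_le ((hcont.continuousOn.integrableOn_compact
          isCompact_Icc |>.mono_set Ioc_subset_Icc_self).const_mul _) (.of_forall hinner)
    _ ≤ D * a * (2 * (π / √(s.lam / 60))) := by
        rw [integral_const_mul, integral_comp_polarPhase (fun x => (1 + s.lam * |x|)⁻¹)]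
        gcongr
        exact integral_inv_one_add_sub_mul_cos_le s.le_c hlam (norm_nonneg _)
    _ = _ := by
        rw [rpow_neg hlam.le, ← sqrt_eq_rpow, sqrt_div hlam.le]
        have := sqrt_pos.2 hlam
        field_simp

/-! ### Fourier multipliers -/

lemma ft2_eq (g : ℝ × ℝ → ℂ) (ξ : ℝ × ℝ) :
    ft2 g ξ = ∫ y : ℝ × ℝ, osc (-(y.1 * ξ.1 + y.2 * ξ.2)) * g y := by
  simp only [ft2, osc, Complex.ofReal_neg, neg_mul, mul_neg]

/-- The inverse of `ft2`: the inverse Fourier transform with the factor `(2π)⁻²`. -/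
def invFt2 (Q : ℝ × ℝ → ℂ) (x : ℝ × ℝ) : ℂ :=
  (((2 * π) ^ (-2 : ℤ) : ℝ) : ℂ) * ∫ ξ : ℝ × ℝ, osc (x.1 * ξ.1 + x.2 * ξ.2) * Q ξ

lemma integrable_osc_mul {X : Type*} [MeasurableSpace X] {μ : Measure X} {Θ : X → ℝ}
    (hΘ : Measurable Θ) {g : X → ℂ} (hg : Integrable g μ) :
    Integrable (fun x => osc (Θ x) * g x) μ :=
  hg.bdd_mul (measurable_osc.comp hΘ).aestronglyMeasurable (c := 1)
    (.of_forall fun _ => (norm_osc _).le)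

lemma continuous_integral_osc_mul {X Y : Type*} [TopologicalSpace X] [FirstCountableTopology X]
    [MeasurableSpace Y] {μ : Measure Y} {h : Y → ℂ} (hh : Integrable h μ) {Θ : X → Y → ℝ}
    (hΘ : ∀ x, Measurable (Θ x)) (hΘ' : ∀ ξ, Continuous fun x => Θ x ξ) :
    Continuous fun x => ∫ ξ, osc (Θ x ξ) * h ξ ∂μ :=
  continuous_of_dominated (bound := fun ξ => ‖h ξ‖)
    (fun x => (integrable_osc_mul (hΘ x) hh).1)
    (fun x => .of_forall fun ξ => by rw [norm_mul, norm_osc, one_mul]) hh.norm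
    (.of_forall fun ξ => (continuous_osc.comp (hΘ' ξ)).mul continuous_const)

lemma continuous_ft2 {g : ℝ × ℝ → ℂ} (hg : Integrable g) : Continuous (ft2 g) := by
  rw [funext (ft2_eq g)]
  exact continuous_integral_osc_mul hg (fun ξ => by fun_prop) fun y => by fun_prop

lemma integrable_mul_ft2 {Q : ℝ × ℝ → ℂ} (hQ : Integrable Q) {g : ℝ × ℝ → ℂ} (hg : Integrable g) :
    Integrable fun ξ => Q ξ * ft2 g ξ :=
  hQ.mul_bdd (c := ∫ y, ‖g y‖) (continuous_ft2 hg).aestronglyMeasurable <| .of_forall fun ξ => by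
    rw [ft2_eq]
    exact (norm_integral_le_integral_norm _).trans_eq <| by simp only [norm_mul, norm_osc, one_mul]

lemma lintegral_ft2_sq_le {g : ℝ × ℝ → ℂ} (hg : Integrable g) :
    ∫⁻ ξ, ‖ft2 g ξ‖ₑ ^ 2 ≤ ENNReal.ofReal ((2 * π) ^ 2) * ∫⁻ y, ‖g y‖ₑ ^ 2 := by
  have h := lintegral_oscillatory_sq_le volume (Φ := fun y : ℝ × ℝ => -y) measurable_neg hg
    (M := 1) (fun f _ => by rw [lintegral_neg_eq_self, one_mul])
  rw [mul_one] at h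
  refine le_of_eq_of_le (lintegral_congr fun ξ => ?_) h
  simp only [ft2_eq, Prod.fst_neg, Prod.snd_neg]
  congr! 6
  ring

section Inversion

open FourierTransform

lemma integral_complex_eq_integral_prod {E : Type*} [NormedAddCommGroup E] [NormedSpace ℝ E]
    (F : ℂ → E) : ∫ z : ℂ, F z = ∫ x : ℝ × ℝ, F ⟨x.1, x.2⟩ :=
  (Complex.volume_preserving_equiv_real_prod.symm.integral_comp
    Complex.measurableEquivRealProd.symm.measurableEmbedding F).symm

lemma invFt2_eq_fourier (Q : ℝ × ℝ → ℂ) (x : ℝ × ℝ) :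
    invFt2 Q x = (((2 * π) ^ (-2 : ℤ) : ℝ) : ℂ) *
      𝓕 (fun z : ℂ => Q (z.re, z.im)) (-(2 * π)⁻¹ • (⟨x.1, x.2⟩ : ℂ)) := by
  rw [invFt2, Real.fourier_eq', integral_complex_eq_integral_prod]
  congr! 3 with ξ
  rw [osc, smul_eq_mul, mul_comm Complex.I]
  congr 4
  simp [Complex.inner]
  field_simp
  ring

lemma fourierInv_eq_integral_osc (F : ℂ → ℂ) (η : ℝ × ℝ) :
    𝓕⁻ F (⟨η.1, η.2⟩ : ℂ) = ∫ w : ℂ, osc (2 * π * (w.re * η.1 + w.im * η.2)) * F w := by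
  rw [Real.fourierInv_eq']
  congr! 2 with w
  rw [osc, smul_eq_mul, mul_comm Complex.I]
  simp [Complex.inner, mul_comm]

lemma exists_schwartzMap_eq {Q : ℝ × ℝ → ℂ} (hQ : ContDiff ℝ (⊤ : ℕ∞) Q)
    (hc : HasCompactSupport Q) : ∃ S : SchwartzMap ℂ ℂ, ⇑S = fun z => Q (z.re, z.im) :=
  ⟨(hc.comp_homeomorph Complex.equivRealProdCLM.toHomeomorph).toSchwartzMap
    (hQ.comp Complex.equivRealProdCLM.contDiff), rfl⟩

lemma integrable_invFt2 {Q : ℝ × ℝ → ℂ} (hQ : ContDiff ℝ (⊤ : ℕ∞) Q)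
    (hc : HasCompactSupport Q) : Integrable (invFt2 Q) := by
  obtain ⟨S, hS⟩ := exists_schwartzMap_eq hQ hc
  have hint : Integrable fun z : ℂ => 𝓕 (S : ℂ → ℂ) (-(2 * π)⁻¹ • z) := by
    rw [← SchwartzMap.fourier_coe]
    exact (𝓕 S).integrable.comp_smul (neg_ne_zero.2 (inv_ne_zero two_pi_pos.ne'))
  rw [funext (invFt2_eq_fourier Q), ← hS]
  exact ((Complex.volume_preserving_equiv_real_prod.symm.integrable_comp_emb
    Complex.measurableEquivRealProd.symm.measurableEmbedding).2 hint).const_mul _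

lemma ft2_invFt2 {Q : ℝ × ℝ → ℂ} (hQ : ContDiff ℝ (⊤ : ℕ∞) Q) (hc : HasCompactSupport Q)
    (η : ℝ × ℝ) : ft2 (invFt2 Q) η = Q η := by
  obtain ⟨S, hS⟩ := exists_schwartzMap_eq hQ hc
  set F : ℂ → ℂ := fun w => osc (2 * π * (w.re * η.1 + w.im * η.2)) * 𝓕 (S : ℂ → ℂ) w with hF
  calc ft2 (invFt2 Q) η
      = (((2 * π) ^ (-2 : ℤ) : ℝ) : ℂ) * ∫ z : ℂ, F (-(2 * π)⁻¹ • z) := by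
        rw [ft2_eq, integral_complex_eq_integral_prod, ← integral_const_mul]
        congr! 2
        rw [invFt2_eq_fourier, ← hS, hF, mul_left_comm]
        congr 3
        simp
        field_simp
        ring
    _ = (((2 * π) ^ (-2 : ℤ) : ℝ) : ℂ) * (((2 * π) ^ 2 : ℝ) • ∫ w : ℂ, F w) := by
        rw [Measure.integral_comp_smul, Complex.finrank_real_complex, neg_sq, inv_pow, inv_inv,
          abs_of_pos (by positivity)]
    _ = 𝓕⁻ (𝓕 (S : ℂ → ℂ)) ⟨η.1, η.2⟩ := by
        rw [fourierInv_eq_integral_osc, Complex.real_smul, ← mul_assoc, ← Complex.ofReal_mul,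
          zpow_neg, zpow_ofNat, inv_mul_cancel₀ (by positivity), Complex.ofReal_one, one_mul]
    _ = Q η := by
        rw [← SchwartzMap.fourier_coe, ← SchwartzMap.fourierInv_coe,
          FourierTransform.fourierInv_fourier_eq, hS]

end Inversion

lemma integral_mul_ft2 {Q : ℝ × ℝ → ℂ} (hQ : Integrable Q) {g : ℝ × ℝ → ℂ} (hg : Integrable g)
    {Θ : ℝ × ℝ → ℝ} (hΘ : Measurable Θ) (a b : ℝ) :
    ∫ ξ : ℝ × ℝ, osc (a * ξ.1 + b * ξ.2 + Θ ξ) * Q ξ * ft2 g ξ =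
      ∫ y : ℝ × ℝ, (∫ ξ : ℝ × ℝ, osc ((a - y.1) * ξ.1 + (b - y.2) * ξ.2 + Θ ξ) * Q ξ) * g y := by
  have hosc (ξ y : ℝ × ℝ) : osc (a * ξ.1 + b * ξ.2 + Θ ξ) * Q ξ *
      (osc (-(y.1 * ξ.1 + y.2 * ξ.2)) * g y) =
      osc ((a - y.1) * ξ.1 + (b - y.2) * ξ.2 + Θ ξ) * (Q ξ * g y) := by
    rw [mul_mul_mul_comm, ← osc_add]
    congr 2
    ring
  simp_rw [ft2_eq, ← integral_const_mul, ← integral_mul_const, hosc]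
  rw [integral_integral_swap]
  · simp only [mul_assoc]
  · exact integrable_osc_mul (by fun_prop) (hQ.mul_prod hg)

lemma ft2_convolution {κ g : ℝ × ℝ → ℂ} (hκ : Integrable κ) (hg : Integrable g) (η : ℝ × ℝ) :
    ft2 (fun x => ∫ y, g y * κ (x - y)) η = ft2 κ η * ft2 g η := by
  have htranslate (y : ℝ × ℝ) :
      ∫ x : ℝ × ℝ, osc (-(x.1 * η.1 + x.2 * η.2)) * (g y * κ (x - y)) =
        ft2 κ η * (osc (-(y.1 * η.1 + y.2 * η.2)) * g y) := by
    rw [ft2_eq, ← integral_mul_const,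
      ← integral_sub_right_eq_self (fun x : ℝ × ℝ => osc (-(x.1 * η.1 + x.2 * η.2)) * κ x *
        (osc (-(y.1 * η.1 + y.2 * η.2)) * g y)) y]
    congr! 2
    rw [mul_mul_mul_comm, ← osc_add, mul_comm (κ _)]
    congr 2
    simp only [Prod.fst_sub, Prod.snd_sub]
    ring
  simp_rw [ft2_eq (fun x => ∫ y, g y * κ (x - y)), ← integral_const_mul]
  rw [integral_integral_swap]
  · simp_rw [htranslate, integral_const_mul, ft2_eq]
  · exact integrable_osc_mul (by fun_prop)
      (hg.convolution_integrand (ContinuousLinearMap.mul ℝ ℂ) hκ)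

lemma ft2_invFt2_mul_ft2 {Q : ℝ × ℝ → ℂ} (hQ : ContDiff ℝ (⊤ : ℕ∞) Q)
    (hc : HasCompactSupport Q) {g : ℝ × ℝ → ℂ} (hg : Integrable g) (η : ℝ × ℝ) :
    ft2 (invFt2 fun ξ => Q ξ * ft2 g ξ) η = Q η * ft2 g η := by
  have hconv : (invFt2 fun ξ => Q ξ * ft2 g ξ) = fun x => ∫ y, g y * invFt2 Q (x - y) := by
    ext x
    have hQg := integral_mul_ft2 (hQ.continuous.integrable_of_hasCompactSupport hc) hg
      (Θ := fun _ => 0) measurable_const x.1 x.2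
    simp only [add_zero, mul_assoc] at hQg
    rw [invFt2, hQg, ← integral_const_mul]
    simp only [invFt2, Prod.fst_sub, Prod.snd_sub]
    congr! 2
    ring
  rw [hconv, ft2_convolution (integrable_invFt2 hQ hc) hg, ft2_invFt2 hQ hc]

lemma ft2_eq_zero_of_not_integrable {g : ℝ × ℝ → ℂ} (hg : ¬ Integrable g) (ξ : ℝ × ℝ) :
    ft2 g ξ = 0 := by
  rw [ft2_eq]
  refine integral_undef fun h => hg ?_
  have hmod := integrable_osc_mul (Θ := fun y : ℝ × ℝ => y.1 * ξ.1 + y.2 * ξ.2) (by fun_prop) h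
  refine hmod.congr (.of_forall fun y => ?_)
  simp only [← mul_assoc, ← osc_add, add_neg_cancel]
  simp [osc]

/-! ### Frequency localization -/

lemma enorm2_nonneg (ξ : ℝ × ℝ) : 0 ≤ enorm2 ξ := Real.sqrt_nonneg _

lemma enorm2_sq (ξ : ℝ × ℝ) : enorm2 ξ ^ 2 = ξ.1 ^ 2 + ξ.2 ^ 2 :=
  Real.sq_sqrt (by positivity)

lemma continuous_enorm2 : Continuous enorm2 := by unfold enorm2; fun_prop

@[fun_prop]
lemma measurable_enorm2 : Measurable enorm2 := continuous_enorm2.measurable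

lemma abs_fst_le_enorm2 (ξ : ℝ × ℝ) : |ξ.1| ≤ enorm2 ξ :=
  Real.abs_le_sqrt (by linarith [sq_nonneg ξ.2])

lemma abs_snd_le_enorm2 (ξ : ℝ × ℝ) : |ξ.2| ≤ enorm2 ξ :=
  Real.abs_le_sqrt (by linarith [sq_nonneg ξ.1])

lemma enorm2_pos {ξ : ℝ × ℝ} (hξ : ξ ≠ 0) : 0 < enorm2 ξ :=
  (enorm2_nonneg ξ).lt_of_ne' fun h => hξ <| Prod.ext
    (abs_nonpos_iff.1 (h ▸ abs_fst_le_enorm2 ξ)) (abs_nonpos_iff.1 (h ▸ abs_snd_le_enorm2 ξ))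

lemma contDiffAt_enorm2 {ξ : ℝ × ℝ} (hξ : ξ ≠ 0) : ContDiffAt ℝ (⊤ : ℕ∞) enorm2 ξ := by
  refine ContDiffAt.sqrt (by fun_prop) ?_
  rw [← enorm2_sq]
  exact (pow_pos (enorm2_pos hξ) 2).ne'

lemma neg_one_le_fst_div_enorm2 (ξ : ℝ × ℝ) : -1 ≤ ξ.1 / enorm2 ξ :=
  (abs_le.1 (abs_div ξ.1 (enorm2 ξ) ▸ div_le_one_of_le₀
    ((abs_fst_le_enorm2 ξ).trans (le_abs_self _)) (abs_nonneg _))).1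

/-- The smooth cutoff to the frequencies with `|ξ| ∼ lam` and `1 + ξ₁ / |ξ| ∼ M⁻²`. -/
def freqCutoff (f h : ℝ → ℝ) (lam M : ℝ) (ξ : ℝ × ℝ) : ℂ :=
  (f (lam⁻¹ * enorm2 ξ) * h (M ^ 2 * (ξ.1 / enorm2 ξ + 1)) : ℝ)

section FreqCutoff

variable {f h : ℝ → ℝ} (hf : IsBump f) (hh : IsBump h)

include hf

lemma freqCutoff_eq_zero {lam M : ℝ} {ξ : ℝ × ℝ}
    (hξ : lam⁻¹ * enorm2 ξ ∉ Icc (1 - 1 / 1000 : ℝ) (2 + 1 / 1000)) :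
    freqCutoff f h lam M ξ = 0 := by
  simp [freqCutoff, hf.eq_zero _ hξ]

lemma hasCompactSupport_freqCutoff {lam : ℝ} (hl : 0 < lam) (M : ℝ) :
    HasCompactSupport (freqCutoff f h lam M) := by
  refine HasCompactSupport.intro
    (K := Icc (-(3 * lam)) (3 * lam) ×ˢ Icc (-(3 * lam)) (3 * lam))
    (isCompact_Icc.prod isCompact_Icc) fun ξ hξ => freqCutoff_eq_zero hf fun hmem => hξ ?_
  have hle : enorm2 ξ ≤ 3 * lam := by
    have := (inv_mul_le_iff₀ hl).1 hmem.2
    linarith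
  exact ⟨abs_le.1 ((abs_fst_le_enorm2 ξ).trans hle), abs_le.1 ((abs_snd_le_enorm2 ξ).trans hle)⟩

lemma freqCutoff_eventuallyEq_zero (lam M : ℝ) :
    freqCutoff f h lam M =ᶠ[nhds 0] fun _ => 0 := by
  have hcont : Continuous fun ξ => lam⁻¹ * enorm2 ξ := continuous_const.mul continuous_enorm2
  have htends : Filter.Tendsto (fun ξ => lam⁻¹ * enorm2 ξ) (nhds 0) (nhds 0) := by
    simpa [enorm2] using hcont.tendsto 0
  filter_upwards [htends.eventually_lt_const (by norm_num : (0 : ℝ) < 1 - 1 / 1000)] with ξ hξ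
  exact freqCutoff_eq_zero hf fun hmem => hξ.not_ge hmem.1

include hh

lemma contDiff_freqCutoff (lam M : ℝ) : ContDiff ℝ (⊤ : ℕ∞) (freqCutoff f h lam M) := by
  refine contDiff_iff_contDiffAt.2 fun ξ => ?_
  rcases eq_or_ne ξ 0 with rfl | hξ
  · exact contDiffAt_const.congr_of_eventuallyEq (freqCutoff_eventuallyEq_zero hf lam M)
  · have hnorm := contDiffAt_enorm2 hξ
    have hangle : ContDiffAt ℝ (⊤ : ℕ∞) (fun ξ : ℝ × ℝ => ξ.1 / enorm2 ξ + 1) ξ :=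
      (contDiffAt_fst.div hnorm (enorm2_pos hξ).ne').add contDiffAt_const
    exact Complex.ofRealCLM.contDiff.contDiffAt.comp ξ
      ((hf.contDiff.contDiffAt.comp ξ (contDiffAt_const.mul hnorm)).mul
        (hh.contDiff.contDiffAt.comp ξ (contDiffAt_const.mul hangle)))

lemma integrable_freqCutoff {lam : ℝ} (hl : 0 < lam) (M : ℝ) :
    Integrable (freqCutoff f h lam M) :=
  (contDiff_freqCutoff hf hh lam M).continuous.integrable_of_hasCompactSupport
    (hasCompactSupport_freqCutoff hf hl M)

lemma exists_norm_freqCutoff_le : ∃ C, ∀ lam M ξ, ‖freqCutoff f h lam M ξ‖ ≤ C := by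
  obtain ⟨C₁, hC₁⟩ := hf.exists_norm_le
  obtain ⟨C₂, hC₂⟩ := hh.exists_norm_le
  refine ⟨C₁ * C₂, fun lam M ξ => ?_⟩
  rw [freqCutoff, Complex.norm_real, norm_mul]
  exact mul_le_mul (hC₁ _) (hC₂ _) (norm_nonneg _) ((norm_nonneg _).trans (hC₁ 0))

end FreqCutoff

lemma smul_osc_mul_freqCutoff_polarCoord_symm (f h : ℝ → ℝ) {lam : ℝ} (hl : 0 < lam) (M c : ℝ)
    (v : ℝ × ℝ) {p ξ : ℝ × ℝ} (hp : 0 < p.1) (hξ : ξ = -lam • polarCoord.symm p) :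
    p.1 • (osc (v.1 * ξ.1 + v.2 * ξ.2 + c * enorm2 ξ) * freqCutoff f h lam M ξ) =
      osc (lam * p.1 * polarPhase c v p.2) *
        (((p.1 * f p.1 : ℝ) : ℂ) * (h (M ^ 2 * (1 - cos p.2)) : ℂ)) := by
  obtain ⟨hξ₁, hξ₂⟩ : ξ.1 = -lam * (p.1 * cos p.2) ∧ ξ.2 = -lam * (p.1 * sin p.2) := by
    simp [hξ, polarCoord_symm_apply]
  have hnorm : enorm2 ξ = lam * p.1 := by
    rw [enorm2, Real.sqrt_eq_iff_mul_self_eq_of_pos (by positivity), hξ₁, hξ₂]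
    linear_combination (-(lam ^ 2 * p.1 ^ 2)) * sin_sq_add_cos_sq p.2
  have hradius : lam⁻¹ * (lam * p.1) = p.1 := inv_mul_cancel_left₀ hl.ne' _
  have hangle : -lam * (p.1 * cos p.2) / (lam * p.1) + 1 = 1 - cos p.2 := by
    field_simp
    ring
  have hphase : v.1 * (-lam * (p.1 * cos p.2)) + v.2 * (-lam * (p.1 * sin p.2)) +
      c * (lam * p.1) = lam * p.1 * polarPhase c v p.2 := by
    rw [polarPhase]
    ring
  rw [freqCutoff, hnorm, hξ₁, hξ₂, hradius, hangle, hphase, Complex.real_smul]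
  push_cast
  ring

lemma setIntegral_polarCoord_target {F : ℝ × ℝ → ℂ}
    (hF : ∀ p : ℝ × ℝ, p.1 ∉ Icc (1 - 1 / 1000 : ℝ) (2 + 1 / 1000) → F p = 0) :
    ∫ p in polarCoord.target, F p = ∫ p, F p ∂polarMeasure := by
  have htarget : (polarCoord.target : Set (ℝ × ℝ)) =ᵐ[volume] (Ioi (0 : ℝ) ×ˢ Ioc (-π) π) := by
    rw [polarCoord_target, Measure.volume_eq_prod]
    exact Measure.set_prod_ae_eq (Filter.EventuallyEq.refl _ _) Ioo_ae_eq_Ioc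
  rw [polarMeasure, Measure.prod_restrict, ← Measure.volume_eq_prod,
    Measure.restrict_congr_set htarget]
  refine setIntegral_eq_of_subset_of_forall_sdiff_eq_zero (measurableSet_Ioi.prod measurableSet_Ioc)
    (prod_mono (fun x hx => lt_trans (by norm_num) hx.1) le_rfl) fun p hp => hF p fun hp₁ => ?_
  exact hp.2 ⟨⟨by linarith [hp₁.1], by linarith [hp₁.2]⟩, hp.1.2⟩

lemma integral_osc_mul_freqCutoff {f : ℝ → ℝ} (hf : IsBump f) (h : ℝ → ℝ) {lam : ℝ}
    (hl : 0 < lam) (M c : ℝ) (v : ℝ × ℝ) :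
    ∫ ξ : ℝ × ℝ, osc (v.1 * ξ.1 + v.2 * ξ.2 + c * enorm2 ξ) * freqCutoff f h lam M ξ =
      (lam ^ 2 : ℝ) * oscInt (fun u => ((u * f u : ℝ) : ℂ))
        (fun θ => (h (M ^ 2 * (1 - cos θ)) : ℂ)) c lam v := by
  set F : ℝ × ℝ → ℂ := fun ξ =>
    osc (v.1 * ξ.1 + v.2 * ξ.2 + c * enorm2 ξ) * freqCutoff f h lam M ξ
  have hscale : ∫ ξ, F ξ = (lam ^ 2 : ℝ) * ∫ ξ, F (-lam • ξ) := by
    rw [Measure.integral_comp_smul volume F (-lam), Complex.real_smul, ← mul_assoc,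
      ← Complex.ofReal_mul]
    simp [hl.ne']
  have hpolar : ∀ p ∈ polarCoord.target, p.1 • F (-lam • polarCoord.symm p) =
      osc (lam * p.1 * polarPhase c v p.2) *
        (((p.1 * f p.1 : ℝ) : ℂ) * (h (M ^ 2 * (1 - cos p.2)) : ℂ)) := fun p hp =>
    smul_osc_mul_freqCutoff_polarCoord_symm f h hl M c v hp.1 rfl
  rw [hscale, ← integral_comp_polarCoord_symm,
    setIntegral_congr_fun polarCoord.open_target.measurableSet hpolar,
    setIntegral_polarCoord_target fun p hp => by simp [hf.eq_zero _ hp], oscInt]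

/-! ### The `L²` bound near the diagonal `r = t` -/

/-- The cone of frequencies with `1 + ξ₁ / |ξ| ≥ a`. -/
def coneRegion (a : ℝ) : Set (ℝ × ℝ) := {ξ | 0 < enorm2 ξ ∧ a ≤ ξ.1 / enorm2 ξ + 1}

lemma measurableSet_coneRegion (a : ℝ) : MeasurableSet (coneRegion a) :=
  (measurableSet_lt measurable_const measurable_enorm2).inter
    (measurableSet_le measurable_const
      ((measurable_fst.div measurable_enorm2).add measurable_const))

lemma hasDerivAt_fst_add_enorm2 {x b : ℝ} (h : 0 < enorm2 (x, b)) :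
    HasDerivAt (fun x => x + enorm2 (x, b)) (x / enorm2 (x, b) + 1) x := by
  have hsq : x ^ 2 + b ^ 2 ≠ 0 := (enorm2_sq (x, b)).symm.trans_ne (pow_pos h 2).ne'
  have hsqrt := (((hasDerivAt_id' x).fun_pow 2).add_const (b ^ 2)).sqrt hsq
  refine ((hasDerivAt_id' x).add hsqrt).congr_deriv ?_
  rw [show √(x ^ 2 + b ^ 2) = enorm2 (x, b) from rfl]
  field_simp
  ring

lemma injOn_fst_add_enorm2 {a : ℝ} (ha : 0 < a) (b : ℝ) :
    InjOn (fun x => x + enorm2 (x, b)) {x | (x, b) ∈ coneRegion a} := by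
  intro x ⟨(hx : 0 < enorm2 (x, b)), (hxa : a ≤ x / enorm2 (x, b) + 1)⟩ y _ hxy
  have hpos : 0 < x + enorm2 (x, b) := by
    have : 0 < (x / enorm2 (x, b) + 1) * enorm2 (x, b) := mul_pos (ha.trans_le hxa) hx
    rwa [add_mul, div_mul_cancel₀ _ hx.ne', one_mul] at this
  have hy : enorm2 (y, b) = x + enorm2 (x, b) - y := eq_sub_of_add_eq' hxy.symm
  have hxs : enorm2 (x, b) ^ 2 = x ^ 2 + b ^ 2 := enorm2_sq (x, b)
  have hys : enorm2 (y, b) ^ 2 = y ^ 2 + b ^ 2 := enorm2_sq (y, b)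
  rw [hy] at hys
  have hmul : (x + enorm2 (x, b)) * (x - y) = 0 := by
    linear_combination (hys - hxs) / 2
  exact sub_eq_zero.1 ((mul_eq_zero.1 hmul).resolve_left hpos.ne')

lemma setLIntegral_coneRegion_le {a : ℝ} (ha : 0 < a) {F : ℝ × ℝ → ℝ≥0∞} (hF : Measurable F) :
    ∫⁻ ξ in coneRegion a, F (ξ.1 + enorm2 ξ, ξ.2) ≤ ENNReal.ofReal a⁻¹ * ∫⁻ x, F x := by
  have hcomp : Measurable fun ξ : ℝ × ℝ => F (ξ.1 + enorm2 ξ, ξ.2) := hF.comp (by fun_prop)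
  rw [← lintegral_indicator (measurableSet_coneRegion a), Measure.volume_eq_prod,
    lintegral_prod_symm' _ (hcomp.indicator (measurableSet_coneRegion a)),
    lintegral_prod_symm' _ hF, ← lintegral_const_mul' _ _ ENNReal.ofReal_ne_top]
  refine lintegral_mono fun b => ?_
  have hslice : MeasurableSet {x | (x, b) ∈ coneRegion a} :=
    measurable_prodMk_right (measurableSet_coneRegion a)
  change ∫⁻ x, {x | (x, b) ∈ coneRegion a}.indicator (fun x => F (x + enorm2 (x, b), b)) x ≤ _
  rw [lintegral_indicator hslice]
  exact lintegral_comp_le_of_deriv_ge hslice (fun x hx => hasDerivAt_fst_add_enorm2 hx.1)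
    (injOn_fst_add_enorm2 ha b) (inv_pos.2 ha)
    (fun x hx => (inv_inv a).trans_le (hx.2.trans (le_abs_self _))) (fun u => F (u, b))

lemma lintegral_integral_osc_coneRegion_sq_le {a : ℝ} (ha : 0 < a) {H : ℝ × ℝ → ℂ}
    (hH : Integrable H) (h₀ : ∀ ξ ∉ coneRegion a, H ξ = 0) :
    ∫⁻ x : ℝ × ℝ, ‖∫ ξ : ℝ × ℝ, osc (x.1 * (ξ.1 + enorm2 ξ) + x.2 * ξ.2) * H ξ‖ₑ ^ 2 ≤
      ENNReal.ofReal ((2 * π) ^ 2) * ENNReal.ofReal a⁻¹ * ∫⁻ ξ, ‖H ξ‖ₑ ^ 2 := by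
  have hcone := lintegral_oscillatory_sq_le (volume.restrict (coneRegion a))
    (Φ := fun ξ : ℝ × ℝ => (ξ.1 + enorm2 ξ, ξ.2)) (by fun_prop) hH.restrict
    fun F hF => setLIntegral_coneRegion_le ha hF
  refine le_of_eq_of_le (lintegral_congr fun x => ?_) (hcone.trans ?_)
  · rw [setIntegral_eq_integral_of_forall_compl_eq_zero fun ξ hξ => by simp [h₀ ξ hξ]]
  · gcongr
    exact Measure.restrict_le_self

/-- The part of space-time within `δ` of the singular set `r = t`, in the coordinates
`z = ((r, x₃), t)`. -/
def tube (δ : ℝ) : Set ((ℝ × ℝ) × ℝ) :=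
  {z | z.2 ∈ Icc (1 : ℝ) 2 ∧ |z.1.1 - z.2| ≤ δ ∧ 0 < z.1.1}

lemma measurableSet_tube (δ : ℝ) : MeasurableSet (tube δ) :=
  (measurable_snd measurableSet_Icc).inter
    ((measurableSet_le (f := fun z : (ℝ × ℝ) × ℝ => |z.1.1 - z.2|) (by fun_prop)
      measurable_const).inter
      (measurableSet_lt (g := fun z : (ℝ × ℝ) × ℝ => z.1.1) measurable_const (by fun_prop)))

/-- The oscillatory integral `∫ e^{i((r² + t²)/2 ξ₁ + x₃ ξ₂ + t r |ξ|)} H(ξ) dξ` at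
`z = ((r, x₃), t)`. -/
def waveInt (H : ℝ × ℝ → ℂ) (z : (ℝ × ℝ) × ℝ) : ℂ :=
  ∫ ξ : ℝ × ℝ,
    osc ((z.1.1 ^ 2 + z.2 ^ 2) / 2 * ξ.1 + z.1.2 * ξ.2 + z.2 * z.1.1 * enorm2 ξ) * H ξ

lemma continuous_waveInt {H : ℝ × ℝ → ℂ} (hH : Integrable H) : Continuous (waveInt H) :=
  continuous_integral_osc_mul hH (fun z => by fun_prop) fun ξ => by fun_prop

/- With `r = t + w` the phase is `t (t + w) (ξ₁ + |ξ|) + x₃ ξ₂` up to `w² ξ₁ / 2`, which does not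
depend on `(t, x₃)`. -/
lemma waveInt_add (H : ℝ × ℝ → ℂ) (t w x : ℝ) :
    waveInt H ((t + w, x), t) = ∫ ξ : ℝ × ℝ, osc (t * (t + w) * (ξ.1 + enorm2 ξ) + x * ξ.2) *
      (osc (w ^ 2 / 2 * ξ.1) * H ξ) := by
  refine integral_congr_ae (.of_forall fun ξ => ?_)
  simp only [← mul_assoc (osc _) (osc _), ← osc_add]
  congr 2
  ring

lemma setLIntegral_comp_mul_add_le (w : ℝ) (F : ℝ → ℝ≥0∞) :
    ∫⁻ t in Icc 1 2 ∩ {t | 0 < t + w}, F (t * (t + w)) ≤ ∫⁻ u, F u := by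
  have hs : MeasurableSet (Icc 1 2 ∩ {t | 0 < t + w}) :=
    measurableSet_Icc.inter (measurableSet_lt measurable_const (by fun_prop))
  have hderiv (t : ℝ) : HasDerivAt (fun t => t * (t + w)) (2 * t + w) t :=
    ((hasDerivAt_id' t).mul ((hasDerivAt_id' t).add_const w)).congr_deriv (by ring)
  have hinj : InjOn (fun t => t * (t + w)) (Icc 1 2 ∩ {t | 0 < t + w}) := by
    intro t ⟨_, (ht : 0 < t + w)⟩ t' ⟨ht', _⟩ (heq : t * (t + w) = t' * (t' + w))
    have hmul : (t - t') * (t + t' + w) = 0 := by linear_combination heq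
    exact sub_eq_zero.1 ((mul_eq_zero.1 hmul).resolve_right (by linarith [ht'.1]))
  have hge : ∀ t ∈ Icc 1 2 ∩ {t | 0 < t + w}, (1 : ℝ)⁻¹ ≤ |2 * t + w| := fun t ht => by
    have ht' : 0 < t + w := ht.2
    exact inv_one.trans_le (le_trans (by linarith [ht.1.1]) (le_abs_self _))
  simpa using lintegral_comp_le_of_deriv_ge hs (fun t _ => hderiv t) hinj one_pos hge F

lemma lintegral_tube_slice_le {a : ℝ} (ha : 0 < a) {H : ℝ × ℝ → ℂ} (hH : Integrable H)
    (h₀ : ∀ ξ ∉ coneRegion a, H ξ = 0) (w : ℝ) :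
    ∫⁻ t in Icc 1 2 ∩ {t | 0 < t + w}, ∫⁻ x : ℝ, ‖waveInt H ((t + w, x), t)‖ₑ ^ 2 ≤
      ENNReal.ofReal ((2 * π) ^ 2) * ENNReal.ofReal a⁻¹ * ∫⁻ ξ, ‖H ξ‖ₑ ^ 2 := by
  set Hw : ℝ × ℝ → ℂ := fun ξ => osc (w ^ 2 / 2 * ξ.1) * H ξ with hHw
  have hHwi : Integrable Hw := integrable_osc_mul (by fun_prop) hH
  set G : ℝ × ℝ → ℝ≥0∞ := fun x =>
    ‖∫ ξ : ℝ × ℝ, osc (x.1 * (ξ.1 + enorm2 ξ) + x.2 * ξ.2) * Hw ξ‖ₑ ^ 2 with hG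
  have hGm : Measurable G :=
    (continuous_integral_osc_mul hHwi (fun x => by fun_prop)
      fun ξ => by fun_prop).measurable.enorm.pow_const 2
  calc ∫⁻ t in Icc 1 2 ∩ {t | 0 < t + w}, ∫⁻ x : ℝ, ‖waveInt H ((t + w, x), t)‖ₑ ^ 2
      = ∫⁻ t in Icc 1 2 ∩ {t | 0 < t + w}, ∫⁻ x : ℝ, G (t * (t + w), x) := by
        simp only [waveInt_add, hG, hHw]
    _ ≤ ∫⁻ u : ℝ, ∫⁻ x : ℝ, G (u, x) :=
        setLIntegral_comp_mul_add_le w fun u => ∫⁻ x : ℝ, G (u, x)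
    _ = ∫⁻ x : ℝ × ℝ, G x := by
        rw [Measure.volume_eq_prod, lintegral_prod _ hGm.aemeasurable]
    _ ≤ ENNReal.ofReal ((2 * π) ^ 2) * ENNReal.ofReal a⁻¹ * ∫⁻ ξ, ‖Hw ξ‖ₑ ^ 2 :=
        lintegral_integral_osc_coneRegion_sq_le ha hHwi fun ξ hξ => by simp [hHw, h₀ ξ hξ]
    _ = ENNReal.ofReal ((2 * π) ^ 2) * ENNReal.ofReal a⁻¹ * ∫⁻ ξ, ‖H ξ‖ₑ ^ 2 := by
        simp only [hHw, enorm_mul, enorm_osc, one_mul]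

lemma lintegral_eq_lintegral_shear {F : (ℝ × ℝ) × ℝ → ℝ≥0∞} (hF : Measurable F) :
    ∫⁻ z, F z = ∫⁻ w : ℝ, ∫⁻ t : ℝ, ∫⁻ x : ℝ, F ((t + w, x), t) :=
  calc ∫⁻ z, F z = ∫⁻ t : ℝ, ∫⁻ r : ℝ, ∫⁻ x : ℝ, F ((r, x), t) := by
        rw [Measure.volume_eq_prod, lintegral_prod_symm' _ hF]
        refine lintegral_congr fun t => ?_
        have hFt : Measurable fun y : ℝ × ℝ => F (y, t) := hF.comp measurable_prodMk_right
        rw [Measure.volume_eq_prod, lintegral_prod _ hFt.aemeasurable]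
    _ = ∫⁻ t : ℝ, ∫⁻ w : ℝ, ∫⁻ x : ℝ, F ((t + w, x), t) :=
        lintegral_congr fun t =>
          (lintegral_add_left_eq_self (fun r => ∫⁻ x : ℝ, F ((r, x), t)) t).symm
    _ = ∫⁻ w : ℝ, ∫⁻ t : ℝ, ∫⁻ x : ℝ, F ((t + w, x), t) := by
        have hshear : Measurable fun p : (ℝ × ℝ) × ℝ => F ((p.1.1 + p.1.2, p.2), p.1.1) :=
          hF.comp (by fun_prop)
        exact lintegral_lintegral_swap hshear.lintegral_prod_right'.aemeasurable

lemma lintegral_tube_waveInt_sq_le {a : ℝ} (ha : 0 < a) {H : ℝ × ℝ → ℂ} (hH : Integrable H)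
    (h₀ : ∀ ξ ∉ coneRegion a, H ξ = 0) (δ : ℝ) :
    ∫⁻ z in tube δ, ‖waveInt H z‖ₑ ^ 2 ≤ ENNReal.ofReal (2 * δ) *
      (ENNReal.ofReal ((2 * π) ^ 2) * ENNReal.ofReal a⁻¹ * ∫⁻ ξ, ‖H ξ‖ₑ ^ 2) := by
  set K := ENNReal.ofReal ((2 * π) ^ 2) * ENNReal.ofReal a⁻¹ * ∫⁻ ξ, ‖H ξ‖ₑ ^ 2
  set F := (tube δ).indicator fun z => ‖waveInt H z‖ₑ ^ 2
  have hF : Measurable F :=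
    ((continuous_waveInt hH).measurable.enorm.pow_const 2).indicator (measurableSet_tube δ)
  have hslice (w : ℝ) : ∫⁻ t : ℝ, ∫⁻ x : ℝ, F ((t + w, x), t) ≤
      (Icc (-δ) δ).indicator (fun _ => K) w := by
    have htube (t x : ℝ) : ((t + w, x), t) ∈ tube δ ↔
        w ∈ Icc (-δ) δ ∧ t ∈ Icc 1 2 ∩ {t | 0 < t + w} := by
      simp only [tube, mem_ofPred_eq, add_sub_cancel_left, abs_le, mem_inter_iff, mem_Icc]
      tauto
    by_cases hw : w ∈ Icc (-δ) δ
    · have hs : MeasurableSet (Icc 1 2 ∩ {t | 0 < t + w}) :=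
        measurableSet_Icc.inter (measurableSet_lt measurable_const (by fun_prop))
      rw [indicator_of_mem hw]
      refine le_of_eq_of_le ?_ (lintegral_tube_slice_le ha hH h₀ w)
      rw [← lintegral_indicator hs]
      refine lintegral_congr fun t => ?_
      by_cases ht : t ∈ Icc 1 2 ∩ {t | 0 < t + w}
      · simp only [indicator_of_mem ht, F, indicator_of_mem ((htube t _).2 ⟨hw, ht⟩)]
      · simp only [indicator_of_notMem ht, F,
          indicator_of_notMem fun hz => ht ((htube t _).1 hz).2, lintegral_zero]
    · simp only [F, indicator_of_notMem fun hz => hw ((htube _ _).1 hz).1, lintegral_zero, zero_le]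
  calc ∫⁻ z in tube δ, ‖waveInt H z‖ₑ ^ 2 = ∫⁻ z, F z :=
        (lintegral_indicator (measurableSet_tube δ) _).symm
    _ = ∫⁻ w : ℝ, ∫⁻ t : ℝ, ∫⁻ x : ℝ, F ((t + w, x), t) := lintegral_eq_lintegral_shear hF
    _ ≤ ∫⁻ w : ℝ, (Icc (-δ) δ).indicator (fun _ => K) w := lintegral_mono hslice
    _ = ENNReal.ofReal (2 * δ) * K := by
        rw [lintegral_indicator_const measurableSet_Icc, Real.volume_Icc, mul_comm,
          sub_neg_eq_add, ← two_mul]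

lemma freqCutoff_eq_zero_of_notMem_coneRegion {f h : ℝ → ℝ} (hf : IsBump f) (hh : IsBump h)
    {lam M : ℝ} (hM : 0 < M) {ξ : ℝ × ℝ} (hξ : ξ ∉ coneRegion (999 / 1000 * (M ^ 2)⁻¹)) :
    freqCutoff f h lam M ξ = 0 := by
  rcases (enorm2_nonneg ξ).eq_or_lt' with h₀ | hpos
  · exact freqCutoff_eq_zero hf fun hmem => by
      have := hmem.1
      rw [h₀, mul_zero] at this
      norm_num at this
  · have hout : M ^ 2 * (ξ.1 / enorm2 ξ + 1) ∉ Icc (1 - 1 / 1000 : ℝ) (2 + 1 / 1000) :=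
      fun hmem => hξ ⟨hpos, by
        rw [mul_inv_le_iff₀ (by positivity)]
        linarith [hmem.1]⟩
    simp [freqCutoff, hh.eq_zero _ hout]

/-! ### The localized operator -/

lemma ft2_add {f g : ℝ × ℝ → ℂ} (hf : Integrable f) (hg : Integrable g) (ξ : ℝ × ℝ) :
    ft2 (f + g) ξ = ft2 f ξ + ft2 g ξ := by
  simp only [ft2_eq, Pi.add_apply, mul_add]
  exact integral_add (integrable_osc_mul (by fun_prop) hf) (integrable_osc_mul (by fun_prop) hg)

lemma lintegral_mul_ft2_sq_le {Q : ℝ × ℝ → ℂ} {b : ℝ} (hb : ∀ ξ, ‖Q ξ‖ ≤ b) {g : ℝ × ℝ → ℂ}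
    (hg : Integrable g) :
    ∫⁻ ξ, ‖Q ξ * ft2 g ξ‖ₑ ^ 2 ≤ ENNReal.ofReal (b ^ 2 * (2 * π) ^ 2) * ∫⁻ y, ‖g y‖ₑ ^ 2 :=
  calc ∫⁻ ξ, ‖Q ξ * ft2 g ξ‖ₑ ^ 2 ≤ ∫⁻ ξ, ENNReal.ofReal (b ^ 2) * ‖ft2 g ξ‖ₑ ^ 2 := by
        refine lintegral_mono fun ξ => ?_
        rw [enorm_mul, mul_pow, ← ofReal_norm (Q ξ), ← ENNReal.ofReal_pow (norm_nonneg _)]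
        gcongr
        exact hb ξ
    _ = ENNReal.ofReal (b ^ 2) * ∫⁻ ξ, ‖ft2 g ξ‖ₑ ^ 2 :=
        lintegral_const_mul' _ _ ENNReal.ofReal_ne_top
    _ ≤ ENNReal.ofReal (b ^ 2) * (ENNReal.ofReal ((2 * π) ^ 2) * ∫⁻ y, ‖g y‖ₑ ^ 2) := by
        gcongr
        exact lintegral_ft2_sq_le hg
    _ = ENNReal.ofReal (b ^ 2 * (2 * π) ^ 2) * ∫⁻ y, ‖g y‖ₑ ^ 2 := by
        rw [← mul_assoc, ← ENNReal.ofReal_mul (sq_nonneg b)]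

/-- The Fourier integral operator with frequency cutoff `Q` and space-time weight `a`. -/
def waveOp (a : (ℝ × ℝ) × ℝ → ℝ) (Q g : ℝ × ℝ → ℂ) (z : (ℝ × ℝ) × ℝ) : ℂ :=
  a z * waveInt (fun ξ => Q ξ * ft2 g ξ) z

/-- The integral kernel of `waveOp a Q`. -/
def waveKernel (a : (ℝ × ℝ) × ℝ → ℝ) (Q : ℝ × ℝ → ℂ) (z : (ℝ × ℝ) × ℝ) (x : ℝ × ℝ) : ℂ :=
  a z * ∫ ξ : ℝ × ℝ, osc (((z.1.1 ^ 2 + z.2 ^ 2) / 2 - x.1) * ξ.1 + (z.1.2 - x.2) * ξ.2 +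
    z.2 * z.1.1 * enorm2 ξ) * Q ξ

section WaveOp

variable {a : (ℝ × ℝ) × ℝ → ℝ} {Q : ℝ × ℝ → ℂ}

lemma waveOp_eq_integral (hQ : Integrable Q) {g : ℝ × ℝ → ℂ} (hg : Integrable g)
    (z : (ℝ × ℝ) × ℝ) : waveOp a Q g z = ∫ x, waveKernel a Q z x * g x := by
  have hfubini := integral_mul_ft2 hQ hg (Θ := fun ξ => z.2 * z.1.1 * enorm2 ξ) (by fun_prop)
    ((z.1.1 ^ 2 + z.2 ^ 2) / 2) z.1.2
  simp only [waveOp, waveInt, ← mul_assoc, hfubini, ← integral_const_mul, waveKernel]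

lemma enorm_waveOp_le (hQ : Integrable Q) {g : ℝ × ℝ → ℂ} (hg : Integrable g)
    (z : (ℝ × ℝ) × ℝ) : ‖waveOp a Q g z‖ₑ ≤ ∫⁻ x, ‖waveKernel a Q z x‖ₑ * ‖g x‖ₑ := by
  rw [waveOp_eq_integral hQ hg]
  exact (enorm_integral_le_lintegral_enorm _).trans_eq (by simp only [enorm_mul])

lemma waveOp_add (hQ : Integrable Q) {f g : ℝ × ℝ → ℂ} (hf : Integrable f) (hg : Integrable g) :
    waveOp a Q (f + g) = waveOp a Q f + waveOp a Q g := by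
  funext z
  simp only [waveOp, waveInt, ft2_add hf hg, mul_add, Pi.add_apply]
  rw [integral_add, mul_add]
  · exact integrable_osc_mul (by fun_prop) (integrable_mul_ft2 hQ hf)
  · exact integrable_osc_mul (by fun_prop) (integrable_mul_ft2 hQ hg)

lemma measurable_waveOp (ha : Measurable a) (hQ : Integrable Q) {g : ℝ × ℝ → ℂ}
    (hg : Integrable g) : Measurable (waveOp a Q g) :=
  (Complex.measurable_ofReal.comp ha).mul
    (continuous_waveInt (integrable_mul_ft2 hQ hg)).measurable

lemma measurable_waveKernel (hQ : Integrable Q) (z : (ℝ × ℝ) × ℝ) :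
    Measurable (waveKernel a Q z) :=
  (continuous_integral_osc_mul hQ (fun x => by fun_prop)
    fun ξ => by fun_prop).measurable.const_mul _

end WaveOp

/-- Weights of size at most `B`, supported where `|r - t| ≤ δ`, `t ∈ [1, 2]` and `r ∼ 1`. -/
structure IsTubeWeight (δ B : ℝ) (a : (ℝ × ℝ) × ℝ → ℝ) : Prop where
  measurable : Measurable a
  mem_tube : ∀ z, a z ≠ 0 → z ∈ tube δ
  radius_mem : ∀ z, a z ≠ 0 → z.1.1 ∈ Icc (1 / 4) 10
  abs_le : ∀ z, |a z| ≤ B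

namespace IsTubeWeight

variable {δ B : ℝ} {a : (ℝ × ℝ) × ℝ → ℝ}

lemma const_mul (ha : IsTubeWeight δ B a) {c : ℝ} (hc : 0 ≤ c) :
    IsTubeWeight δ (c * B) fun z => c * a z where
  measurable := ha.measurable.const_mul c
  mem_tube z hz := ha.mem_tube z (right_ne_zero_of_mul hz)
  radius_mem z hz := ha.radius_mem z (right_ne_zero_of_mul hz)
  abs_le z := by
    rw [abs_mul, abs_of_nonneg hc]
    exact mul_le_mul_of_nonneg_left (ha.abs_le z) hc

lemma lintegral_waveOp_sq_le (ha : IsTubeWeight δ B a) (hδ : 0 ≤ δ) {Q : ℝ × ℝ → ℂ}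
    (hQ : Integrable Q) {b c : ℝ} (hb : ∀ ξ, ‖Q ξ‖ ≤ b) (hc : 0 < c)
    (h₀ : ∀ ξ ∉ coneRegion c, Q ξ = 0) {g : ℝ × ℝ → ℂ} (hg : Integrable g) :
    ∫⁻ z, ‖waveOp a Q g z‖ₑ ^ 2 ≤
      ENNReal.ofReal (2 * (2 * π) ^ 4 * b ^ 2 * (B ^ 2 * δ * c⁻¹)) * ∫⁻ x, ‖g x‖ₑ ^ 2 := by
  set H : ℝ × ℝ → ℂ := fun ξ => Q ξ * ft2 g ξ
  have hpointwise (z : (ℝ × ℝ) × ℝ) : ‖waveOp a Q g z‖ₑ ^ 2 ≤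
      (tube δ).indicator (fun z => ENNReal.ofReal (B ^ 2) * ‖waveInt H z‖ₑ ^ 2) z := by
    by_cases hz : a z = 0
    · simp [waveOp, hz]
    · rw [indicator_of_mem (ha.mem_tube z hz), waveOp, enorm_mul, mul_pow, ← ofReal_norm (a z : ℂ),
        ← ENNReal.ofReal_pow (norm_nonneg _), Complex.norm_real]
      gcongr
      exact ha.abs_le z
  calc ∫⁻ z, ‖waveOp a Q g z‖ₑ ^ 2
      ≤ ∫⁻ z, (tube δ).indicator (fun z => ENNReal.ofReal (B ^ 2) * ‖waveInt H z‖ₑ ^ 2) z :=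
        lintegral_mono hpointwise
    _ = ENNReal.ofReal (B ^ 2) * ∫⁻ z in tube δ, ‖waveInt H z‖ₑ ^ 2 := by
        rw [lintegral_indicator (measurableSet_tube δ),
          lintegral_const_mul' _ _ ENNReal.ofReal_ne_top]
    _ ≤ ENNReal.ofReal (B ^ 2) * (ENNReal.ofReal (2 * δ) *
          (ENNReal.ofReal ((2 * π) ^ 2) * ENNReal.ofReal c⁻¹ *
            (ENNReal.ofReal (b ^ 2 * (2 * π) ^ 2) * ∫⁻ y, ‖g y‖ₑ ^ 2))) := by
        gcongr
        refine (lintegral_tube_waveInt_sq_le hc (integrable_mul_ft2 hQ hg)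
          (fun ξ hξ => by simp [h₀ ξ hξ]) δ).trans ?_
        gcongr
        exact lintegral_mul_ft2_sq_le hb hg
    _ = ENNReal.ofReal (2 * (2 * π) ^ 4 * b ^ 2 * (B ^ 2 * δ * c⁻¹)) * ∫⁻ x, ‖g x‖ₑ ^ 2 := by
        simp only [← mul_assoc]
        rw [← ENNReal.ofReal_mul (by positivity), ← ENNReal.ofReal_mul (by positivity),
          ← ENNReal.ofReal_mul (by positivity), ← ENNReal.ofReal_mul (by positivity)]
        congr 2
        ring

/-- The parameters of the oscillatory integral representing `waveKernel` at `z`. -/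
def scales (ha : IsTubeWeight δ B a) {z : (ℝ × ℝ) × ℝ} (hz : a z ≠ 0) {lam M : ℝ} (hM : 1 ≤ M)
    (hMl : M ^ 2 ≤ lam) : Scales where
  M := M
  lam := lam
  c := z.2 * z.1.1
  one_le_M := hM
  sq_M_le_lam := hMl
  le_c := by nlinarith [(ha.mem_tube z hz).1.1, (ha.radius_mem z hz).1]
  c_le := by nlinarith [(ha.mem_tube z hz).1.2, (ha.mem_tube z hz).2.2, (ha.radius_mem z hz).2]

variable {f h : ℝ → ℝ}

lemma waveKernel_freqCutoff_eq (ha : IsTubeWeight δ B a) (hf : IsBump f) {z : (ℝ × ℝ) × ℝ}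
    (hz : a z ≠ 0) {lam M : ℝ} (hM : 1 ≤ M) (hMl : M ^ 2 ≤ lam) (x : ℝ × ℝ) :
    waveKernel a (freqCutoff f h lam M) z x = ((a z * lam ^ 2 : ℝ) : ℂ) *
      cutoffOscInt (fun u => ((u * f u : ℝ) : ℂ)) (fun M θ => h (M ^ 2 * (1 - cos θ)))
        (ha.scales hz hM hMl) (((z.1.1 ^ 2 + z.2 ^ 2) / 2, z.1.2) - x) := by
  have hlam : 0 < lam := (ha.scales hz hM hMl).lam_pos
  have hpolar := integral_osc_mul_freqCutoff hf h hlam M (z.2 * z.1.1)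
    (((z.1.1 ^ 2 + z.2 ^ 2) / 2, z.1.2) - x)
  rw [Prod.fst_sub, Prod.snd_sub] at hpolar
  rw [waveKernel, hpolar, Complex.ofReal_mul, mul_assoc]
  rfl

end IsTubeWeight

section KernelBounds

variable {f h : ℝ → ℝ}

lemma exists_lintegral_waveKernel_le (hf : IsBump f) (hh : IsBump h) :
    ∃ C, 0 ≤ C ∧ ∀ {δ B a}, IsTubeWeight δ B a → ∀ {lam M}, 1 ≤ M → M ^ 2 ≤ lam → ∀ z,
      ∫⁻ x, ‖waveKernel a (freqCutoff f h lam M) z x‖ₑ ≤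
        ENNReal.ofReal (C * (B * lam ^ (1 / 2 : ℝ) * M⁻¹)) := by
  obtain ⟨C, hC⟩ := exists_lintegral_cutoffOscInt_le
    (hf.smul fun _ _ => contDiffAt_id).ofReal (IsAngularCutoff.bump hh)
  refine ⟨C, C.coe_nonneg, fun {δ B a} ha {lam M} hM hMl z => ?_⟩
  rcases eq_or_ne (a z) 0 with hz | hz
  · simp [waveKernel, hz]
  have hlam : 0 < lam := (ha.scales hz hM hMl).lam_pos
  simp only [ha.waveKernel_freqCutoff_eq hf hz hM hMl, enorm_mul]
  rw [lintegral_const_mul' _ _ enorm_ne_top, lintegral_sub_left_eq_self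
    (fun v => ‖cutoffOscInt _ _ _ v‖ₑ)]
  calc _ ≤ ENNReal.ofReal (B * lam ^ 2) * (C * ENNReal.ofReal (lam ^ (3 / 2 : ℝ) * M)⁻¹) := by
        gcongr
        · rw [← ofReal_norm, Complex.norm_real, norm_mul, norm_of_nonneg (sq_nonneg lam)]
          gcongr
          exact ha.abs_le z
        · exact hC (ha.scales hz hM hMl)
    _ = ENNReal.ofReal (C * (B * lam ^ (1 / 2 : ℝ) * M⁻¹)) := by
        have hB : 0 ≤ B := (abs_nonneg _).trans (ha.abs_le z)
        have hpow : lam ^ 2 * (lam ^ (3 / 2 : ℝ))⁻¹ = lam ^ (1 / 2 : ℝ) := by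
          rw [← Real.rpow_natCast, ← Real.rpow_neg hlam.le, ← Real.rpow_add hlam]
          norm_num
        rw [← ENNReal.ofReal_coe_nnreal, ← ENNReal.ofReal_mul C.coe_nonneg,
          ← ENNReal.ofReal_mul (by positivity), mul_inv, ← hpow]
        congr 1
        ring

lemma exists_enorm_waveKernel_le (hf : IsBump f) (hh : IsBump h) :
    ∃ C, 0 ≤ C ∧ ∀ {δ B a}, IsTubeWeight δ B a → ∀ {lam M}, 1 ≤ M → M ^ 2 ≤ lam → ∀ z x,
      ‖waveKernel a (freqCutoff f h lam M) z x‖ₑ ≤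
        ENNReal.ofReal (C * (B * lam ^ (3 / 2 : ℝ))) := by
  obtain ⟨C, hC₀, hC⟩ := exists_norm_cutoffOscInt_le
    (hf.smul fun _ _ => contDiffAt_id).ofReal (IsAngularCutoff.bump hh)
  refine ⟨C, hC₀, fun {δ B a} ha {lam M} hM hMl z x => ?_⟩
  rcases eq_or_ne (a z) 0 with hz | hz
  · simp [waveKernel, hz]
  have hlam : 0 < lam := (ha.scales hz hM hMl).lam_pos
  have hpow : lam ^ 2 * lam ^ (-(1 / 2) : ℝ) = lam ^ (3 / 2 : ℝ) := by
    rw [← Real.rpow_natCast, ← Real.rpow_add hlam]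
    norm_num
  rw [ha.waveKernel_freqCutoff_eq hf hz hM hMl, ← ofReal_norm, norm_mul, Complex.norm_real,
    norm_mul, norm_of_nonneg (sq_nonneg lam)]
  refine ENNReal.ofReal_le_ofReal ?_
  calc _ ≤ B * lam ^ 2 * (C * lam ^ (-(1 / 2) : ℝ)) := by
        have hB : 0 ≤ B := (abs_nonneg _).trans (ha.abs_le z)
        gcongr
        · exact ha.abs_le z
        · exact hC (ha.scales hz hM hMl) _
    _ = C * (B * lam ^ (3 / 2 : ℝ)) := by
        rw [← hpow]
        ring

theorem exists_isKernelDominated_waveOp (hf : IsBump f) (hh : IsBump h) :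
    ∃ C, 0 < C ∧ ∀ {δ B a}, 0 < δ → 0 < B → IsTubeWeight δ B a →
      ∀ {lam M}, 1 ≤ M → M ^ 2 ≤ lam →
        IsKernelDominated (waveOp a (freqCutoff f h lam M))
          (fun z x => ‖waveKernel a (freqCutoff f h lam M) z x‖ₑ) volume volume
          (C * (B * lam ^ (1 / 2 : ℝ) * M⁻¹)) (C * (B * lam ^ (3 / 2 : ℝ)))
          (C * (B ^ 2 * δ * M ^ 2)) := by
  obtain ⟨C₁, hC₁, hschur⟩ := exists_lintegral_waveKernel_le hf hh
  obtain ⟨C₂, hC₂, hsup⟩ := exists_enorm_waveKernel_le hf hh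
  obtain ⟨b, hb⟩ := exists_norm_freqCutoff_le hf hh
  set C₃ := 2 * (2 * π) ^ 4 * b ^ 2 * (1000 / 999)
  refine ⟨C₁ + C₂ + C₃ + 1, by positivity, fun {δ B a} hδ hB ha {lam M} hM hMl => ?_⟩
  have hM₀ : 0 < M := by linarith
  have hlam : 0 < lam := (pow_pos hM₀ 2).trans_le hMl
  have hQ := integrable_freqCutoff hf hh hlam M
  have hC₃ : 0 ≤ C₃ := by positivity
  exact {
    schur_pos := by positivity
    sup_pos := by positivity
    sq_pos := by positivity
    map_add := fun f g hf hg => waveOp_add hQ hf hg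
    aemeasurable := fun g hg => (measurable_waveOp ha.measurable hQ hg).aemeasurable
    measurable_kernel := fun z => (measurable_waveKernel hQ z).enorm
    lintegral_kernel_le := fun z => (hschur ha hM hMl z).trans <| by gcongr; linarith
    kernel_le := fun z x => (hsup ha hM hMl z x).trans <| by gcongr; linarith
    enorm_le := fun g hg z => enorm_waveOp_le hQ hg z
    lintegral_sq_le := fun g hg => by
      refine (ha.lintegral_waveOp_sq_le hδ.le hQ (hb lam M)
        (c := 999 / 1000 * (M ^ 2)⁻¹) (by positivity)
        (fun ξ hξ => freqCutoff_eq_zero_of_notMem_coneRegion hf hh hM₀ hξ) hg).trans ?_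
      refine mul_le_mul_left (ENNReal.ofReal_le_ofReal ?_) _
      calc _ = C₃ * (B ^ 2 * δ * M ^ 2) := by
            rw [mul_inv, inv_inv]
            ring
        _ ≤ (C₁ + C₂ + C₃ + 1) * (B ^ 2 * δ * M ^ 2) := by gcongr; linarith }

end KernelBounds

/-! ### Estimates for `φ_{k,l} 𝒰_t 𝒫_{j,m}` -/

/-- The frequency cutoff `φ_j(|ξ|) ψ_m(ξ)` of `𝒫_{j,m}`, multiplied by `(2^{-j} |ξ|)^{-1/2}`. -/
def normalizedCutoff (φ : ℝ → ℝ) (j m : ℤ) : ℝ × ℝ → ℂ :=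
  freqCutoff (fun u => u ^ (-(1 : ℝ) / 2) * φ u) φ ((2 : ℝ) ^ (j : ℝ)) ((2 : ℝ) ^ ((m : ℝ) / 2))

/-- The space-time weight `φ_{k,l}(r, t) |r|^{-1/2}`, restricted to `t ∈ [1, 2]`. -/
def dyadicWeight (φ : ℝ → ℝ) (k l : ℤ) (z : (ℝ × ℝ) × ℝ) : ℝ :=
  (Icc (1 : ℝ) 2).indicator (fun t => phikl φ k l z.1.1 t * |z.1.1| ^ (-(1 : ℝ) / 2)) z.2

lemma two_rpow_half_sq (m : ℝ) : ((2 : ℝ) ^ (m / 2)) ^ 2 = (2 : ℝ) ^ m := by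
  rw [← Real.rpow_natCast, ← Real.rpow_mul zero_le_two, Nat.cast_two, div_mul_cancel₀ m two_ne_zero]

section DyadicPieces

variable {φ : ℝ → ℝ} (hφ : IsBump φ)

lemma ofReal_mul_psiA_eq_freqCutoff (φ : ℝ → ℝ) (j m : ℤ) (ξ : ℝ × ℝ) :
    ((φ ((2 : ℝ) ^ (-j) * enorm2 ξ) * psiA φ m ξ : ℝ) : ℂ) =
      freqCutoff φ φ ((2 : ℝ) ^ (j : ℝ)) ((2 : ℝ) ^ ((m : ℝ) / 2)) ξ := by
  rw [freqCutoff, psiA, abs_of_nonneg (by linarith [neg_one_le_fst_div_enorm2 ξ]),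
    two_rpow_half_sq, Real.rpow_intCast, Real.rpow_intCast, zpow_neg]

lemma freqCutoff_rpow_mul {f h : ℝ → ℝ} (s lam M : ℝ) (ξ : ℝ × ℝ) :
    freqCutoff (fun u => u ^ s * f u) h lam M ξ =
      (((lam⁻¹ * enorm2 ξ) ^ s : ℝ) : ℂ) * freqCutoff f h lam M ξ := by
  simp only [freqCutoff, mul_assoc, Complex.ofReal_mul]

include hφ

lemma IsBump.rpow_mul (s : ℝ) : IsBump fun u => u ^ s * φ u :=
  hφ.smul fun _ hu => Real.contDiffAt_rpow_const_of_ne hu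

lemma ft2_projJM (j m : ℤ) {g : ℝ × ℝ → ℂ} (hg : Integrable g) (η : ℝ × ℝ) :
    ft2 (projJM φ j m g) η =
      freqCutoff φ φ ((2 : ℝ) ^ (j : ℝ)) ((2 : ℝ) ^ ((m : ℝ) / 2)) η * ft2 g η := by
  have hproj : projJM φ j m g = invFt2 fun ξ =>
      freqCutoff φ φ ((2 : ℝ) ^ (j : ℝ)) ((2 : ℝ) ^ ((m : ℝ) / 2)) ξ * ft2 g ξ := by
    funext x
    simp only [projJM, invFt2, ofReal_mul_psiA_eq_freqCutoff, osc, mul_assoc]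
  rw [hproj]
  exact ft2_invFt2_mul_ft2 (contDiff_freqCutoff hφ hφ _ _)
    (hasCompactSupport_freqCutoff hφ (by positivity) _) hg η

lemma Uop_projJM (j m : ℤ) {g : ℝ × ℝ → ℂ} (hg : Integrable g) (z : (ℝ × ℝ) × ℝ) :
    Uop (projJM φ j m g) z.2 z.1.1 z.1.2 =
      ((((2 : ℝ) ^ (j : ℝ)) ^ (-(1 : ℝ) / 2) * |z.1.1| ^ (-(1 : ℝ) / 2) : ℝ) : ℂ) *
        waveInt (fun ξ => normalizedCutoff φ j m ξ * ft2 g ξ) z := by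
  rw [Uop, waveInt, ← integral_const_mul]
  refine integral_congr_ae (.of_forall fun ξ => ?_)
  have hlam : (0 : ℝ) < (2 : ℝ) ^ (j : ℝ) := by positivity
  have hsplit : (|z.1.1| * enorm2 ξ) ^ (-(1 : ℝ) / 2) =
      ((2 : ℝ) ^ (j : ℝ)) ^ (-(1 : ℝ) / 2) * |z.1.1| ^ (-(1 : ℝ) / 2) *
        (((2 : ℝ) ^ (j : ℝ))⁻¹ * enorm2 ξ) ^ (-(1 : ℝ) / 2) := by
    rw [mul_comm (_ ^ _) (|z.1.1| ^ _), mul_assoc, ← Real.mul_rpow hlam.le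
      (mul_nonneg (inv_nonneg.2 hlam.le) (enorm2_nonneg ξ)), mul_inv_cancel_left₀ hlam.ne',
      Real.mul_rpow (abs_nonneg _) (enorm2_nonneg ξ)]
  simp only [ft2_projJM hφ j m hg, normalizedCutoff, freqCutoff_rpow_mul, osc, hsplit]
  push_cast
  ring

lemma phikl_mul_Uop_projJM (k l j m : ℤ) {g : ℝ × ℝ → ℂ} (hg : Integrable g) {z : (ℝ × ℝ) × ℝ}
    (hz : z.2 ∈ Icc (1 : ℝ) 2) :
    (phikl φ k l z.1.1 z.2 : ℂ) * Uop (projJM φ j m g) z.2 z.1.1 z.1.2 =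
      waveOp (fun z => ((2 : ℝ) ^ (j : ℝ)) ^ (-(1 : ℝ) / 2) * dyadicWeight φ k l z)
        (normalizedCutoff φ j m) g z := by
  rw [Uop_projJM hφ j m hg, waveOp, dyadicWeight, indicator_of_mem hz]
  push_cast
  ring

lemma measurable_dyadicWeight (k l : ℤ) : Measurable (dyadicWeight φ k l) := by
  have hmeas := hφ.continuous.measurable
  have hweight : Measurable fun z : (ℝ × ℝ) × ℝ =>
      phikl φ k l z.1.1 z.2 * |z.1.1| ^ (-(1 : ℝ) / 2) := by
    unfold phikl
    fun_prop
  exact hweight.indicator (measurable_snd measurableSet_Icc)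

lemma mem_Icc_of_dyadicWeight_ne_zero {k l : ℤ} {z : (ℝ × ℝ) × ℝ} (hz : dyadicWeight φ k l z ≠ 0) :
    z.2 ∈ Icc (1 : ℝ) 2 ∧
      (2 : ℝ) ^ (-k) * z.1.1 ∈ Icc (1 - 1 / 1000 : ℝ) (2 + 1 / 1000) ∧
      (2 : ℝ) ^ l * |z.1.1 - z.2| ∈ Icc (1 - 1 / 1000 : ℝ) (2 + 1 / 1000) := by
  have ht : z.2 ∈ Icc (1 : ℝ) 2 := mem_of_indicator_ne_zero hz
  rw [dyadicWeight, indicator_of_mem ht, phikl] at hz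
  exact ⟨ht, not_imp_comm.1 (hφ.eq_zero _) (left_ne_zero_of_mul (left_ne_zero_of_mul hz)),
    not_imp_comm.1 (hφ.eq_zero _) (right_ne_zero_of_mul (left_ne_zero_of_mul hz))⟩

lemma mem_tube_of_dyadicWeight_ne_zero {k : ℤ} (hk : k = -1 ∨ k = 0 ∨ k = 1) {l : ℤ}
    {z : (ℝ × ℝ) × ℝ} (hz : dyadicWeight φ k l z ≠ 0) :
    z ∈ tube (3 * (2 : ℝ) ^ (-l)) ∧ z.1.1 ∈ Icc (1 / 4) 10 := by
  obtain ⟨ht, hr, hw⟩ := mem_Icc_of_dyadicWeight_ne_zero hφ hz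
  have hr' : z.1.1 ∈ Icc (1 / 4) 10 := by
    rcases hk with rfl | rfl | rfl <;> norm_num at hr <;> constructor <;> linarith [hr.1, hr.2]
  refine ⟨⟨ht, ?_, by linarith [hr'.1]⟩, hr'⟩
  rw [zpow_neg, ← div_eq_mul_inv, le_div_iff₀ (by positivity), mul_comm]
  linarith [hw.2]

lemma exists_isTubeWeight_dyadicWeight {k : ℤ} (hk : k = -1 ∨ k = 0 ∨ k = 1) :
    ∃ B, 0 < B ∧ ∀ l, IsTubeWeight (3 * (2 : ℝ) ^ (-l)) B (dyadicWeight φ k l) := by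
  obtain ⟨b, hb⟩ := hφ.exists_norm_le
  have hb₀ : 0 ≤ b := (norm_nonneg _).trans (hb 0)
  refine ⟨b * b * 2 + 1, by positivity, fun l => ⟨measurable_dyadicWeight hφ k l,
    fun z hz => (mem_tube_of_dyadicWeight_ne_zero hφ hk hz).1,
    fun z hz => (mem_tube_of_dyadicWeight_ne_zero hφ hk hz).2, fun z => ?_⟩⟩
  by_cases hz : dyadicWeight φ k l z = 0
  · rw [hz, abs_zero]
    positivity
  obtain ⟨htube, hr⟩ := mem_tube_of_dyadicWeight_ne_zero hφ hk hz
  have hquarter : (1 / 4 : ℝ) ^ (-(1 : ℝ) / 2) = 2 := by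
    rw [show (1 / 4 : ℝ) = 2 ^ (-2 : ℝ) by norm_num [Real.rpow_neg], ← Real.rpow_mul zero_le_two]
    norm_num
  have hradius : |z.1.1| ^ (-(1 : ℝ) / 2) ≤ 2 := by
    rw [abs_of_pos htube.2.2]
    exact (Real.rpow_le_rpow_of_nonpos (by norm_num) hr.1 (by norm_num)).trans_eq hquarter
  rw [dyadicWeight, indicator_of_mem htube.1, phikl, abs_mul, abs_mul,
    abs_of_nonneg (Real.rpow_nonneg (abs_nonneg z.1.1) _)]
  have hprod : |φ ((2 : ℝ) ^ (-k) * z.1.1)| * |φ ((2 : ℝ) ^ l * |z.1.1 - z.2|)| *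
      |z.1.1| ^ (-(1 : ℝ) / 2) ≤ b * b * 2 :=
    mul_le_mul (mul_le_mul (hb _) (hb _) (abs_nonneg _) hb₀) hradius
      (Real.rpow_nonneg (abs_nonneg _) _) (by positivity)
  linarith

end DyadicPieces

lemma interpolation_constants_mul_two_rpow {A N₁ N₂ : ℝ} (hA : 0 ≤ A) (hN₁ : 0 ≤ N₁) (hN₂ : 0 ≤ N₂)
    (a n₁ n₂ s u v : ℝ) :
    (A * 2 ^ a) ^ s * (N₁ * 2 ^ n₁) ^ u * (N₂ * 2 ^ n₂) ^ v =
      A ^ s * N₁ ^ u * N₂ ^ v * (2 : ℝ) ^ (a * s + n₁ * u + n₂ * v) := by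
  have hsplit {b : ℝ} (hb : 0 ≤ b) (x y : ℝ) : (b * 2 ^ x) ^ y = b ^ y * (2 : ℝ) ^ (x * y) := by
    rw [Real.mul_rpow hb (by positivity), ← Real.rpow_mul zero_le_two]
  rw [hsplit hA, hsplit hN₁, hsplit hN₂, Real.rpow_add two_pos, Real.rpow_add two_pos]
  ring

section DyadicEstimate

variable {φ : ℝ → ℝ} (hφ : IsBump φ) {k : ℤ} (hk : k = -1 ∨ k = 0 ∨ k = 1)
include hφ hk

lemma exists_isKernelDominated_dyadicWeight :
    ∃ N A : ℝ, 0 < N ∧ 0 < A ∧ ∀ j l m : ℤ, 0 ≤ m → m ≤ j → ∃ K : (ℝ × ℝ) × ℝ → ℝ × ℝ → ℝ≥0∞,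
      IsKernelDominated
        (waveOp (fun z => ((2 : ℝ) ^ (j : ℝ)) ^ (-(1 : ℝ) / 2) * dyadicWeight φ k l z)
          (normalizedCutoff φ j m)) K volume volume
        (N * 2 ^ (-(m : ℝ) / 2)) (N * 2 ^ (j : ℝ)) (A * 2 ^ ((m : ℝ) - l - j)) := by
  obtain ⟨C, hC, hdom⟩ := exists_isKernelDominated_waveOp (hφ.rpow_mul (-(1 : ℝ) / 2)) hφ
  obtain ⟨B, hB, hweight⟩ := exists_isTubeWeight_dyadicWeight hφ hk
  refine ⟨C * B, C * B ^ 2 * 3, by positivity, by positivity, fun j l m hm hmj => ?_⟩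
  have hm' : (0 : ℝ) ≤ m := mod_cast hm
  have hmj' : (m : ℝ) ≤ j := mod_cast hmj
  have hM : (1 : ℝ) ≤ (2 : ℝ) ^ ((m : ℝ) / 2) :=
    Real.one_le_rpow one_le_two (div_nonneg hm' zero_le_two)
  have hMlam : ((2 : ℝ) ^ ((m : ℝ) / 2)) ^ 2 ≤ (2 : ℝ) ^ (j : ℝ) := by
    rw [two_rpow_half_sq]
    exact Real.rpow_le_rpow_of_exponent_le one_le_two hmj'
  have hschur : ((2 : ℝ) ^ (j : ℝ)) ^ (-(1 : ℝ) / 2) * B * ((2 : ℝ) ^ (j : ℝ)) ^ (1 / 2 : ℝ) *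
      ((2 : ℝ) ^ ((m : ℝ) / 2))⁻¹ = B * 2 ^ (-(m : ℝ) / 2) := by
    rw [mul_right_comm _ B, ← Real.rpow_add (by positivity), neg_div, neg_div, neg_add_cancel,
      Real.rpow_zero, one_mul, Real.rpow_neg zero_le_two]
  have hsup : ((2 : ℝ) ^ (j : ℝ)) ^ (-(1 : ℝ) / 2) * B * ((2 : ℝ) ^ (j : ℝ)) ^ (3 / 2 : ℝ) =
      B * 2 ^ (j : ℝ) := by
    rw [mul_right_comm, ← Real.rpow_add (by positivity), mul_comm]
    norm_num
  have hsq : (((2 : ℝ) ^ (j : ℝ)) ^ (-(1 : ℝ) / 2) * B) ^ 2 * (3 * (2 : ℝ) ^ (-l)) *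
      ((2 : ℝ) ^ ((m : ℝ) / 2)) ^ 2 = B ^ 2 * 3 * 2 ^ ((m : ℝ) - l - j) := by
    have hlam : (((2 : ℝ) ^ (j : ℝ)) ^ (-(1 : ℝ) / 2)) ^ 2 = ((2 : ℝ) ^ (j : ℝ))⁻¹ := by
      rw [← Real.rpow_natCast, ← Real.rpow_mul (by positivity)]
      norm_num [Real.rpow_neg_one]
    rw [two_rpow_half_sq, mul_pow, hlam, Real.rpow_sub two_pos, Real.rpow_sub two_pos, zpow_neg,
      Real.rpow_intCast _ l]
    ring
  have hlam : (0 : ℝ) < ((2 : ℝ) ^ (j : ℝ)) ^ (-(1 : ℝ) / 2) := by positivity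
  have hpiece := hdom (by positivity) (by positivity) ((hweight l).const_mul hlam.le) hM hMlam
  rw [hschur, hsup, hsq, ← mul_assoc, ← mul_assoc, ← mul_assoc, ← mul_assoc] at hpiece
  exact ⟨_, hpiece⟩

lemma exists_eLpNorm_waveOp_dyadicWeight_le {p q : ℝ≥0∞} (hp : 1 ≤ p) (hpq : p ≤ q)
    (hpq1 : p⁻¹ + q⁻¹ ≤ 1) :
    ∃ C : ℝ, 0 < C ∧ ∀ j l m : ℤ, 0 ≤ m → m ≤ j → ∀ {g : ℝ × ℝ → ℂ}, Integrable g → Measurable g →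
      eLpNorm g p volume ≠ ⊤ →
      eLpNorm (waveOp (fun z => ((2 : ℝ) ^ (j : ℝ)) ^ (-(1 : ℝ) / 2) * dyadicWeight φ k l z)
          (normalizedCutoff φ j m) g) q volume ≤
        ENNReal.ofReal (C * (2 : ℝ) ^ (((m : ℝ) - l - j) * q.toReal⁻¹ +
          -(m : ℝ) / 2 * (1 - p.toReal⁻¹ - q.toReal⁻¹) + (j : ℝ) * (p.toReal⁻¹ - q.toReal⁻¹))) *
        eLpNorm g p volume := by
  obtain ⟨N, A, hN, hA, hdom⟩ := exists_isKernelDominated_dyadicWeight hφ hk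
  obtain ⟨C, hC, hinterp⟩ := IsKernelDominated.exists_eLpNorm_le
    (μ := (volume : Measure (ℝ × ℝ))) (ν := (volume : Measure ((ℝ × ℝ) × ℝ))) hp hpq hpq1
  refine ⟨C * (A ^ q.toReal⁻¹ * N ^ (1 - p.toReal⁻¹ - q.toReal⁻¹) *
    N ^ (p.toReal⁻¹ - q.toReal⁻¹)), by positivity, fun j l m hm hmj g hg hgm hgp => ?_⟩
  obtain ⟨K, hK⟩ := hdom j l m hm hmj
  refine (hinterp hK hg hgm hgp).trans_eq ?_
  rw [interpolation_constants_mul_two_rpow hA.le hN.le hN.le, ← mul_assoc C]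

end DyadicEstimate

lemma projJM_congr {φ : ℝ → ℝ} {j m : ℤ} {f g : ℝ × ℝ → ℂ} (h : ∀ ξ, ft2 f ξ = ft2 g ξ) :
    projJM φ j m f = projJM φ j m g := by
  funext x
  simp only [projJM, h]

lemma Uop_projJM_of_ft2_eq_zero {φ : ℝ → ℝ} {j m : ℤ} {g : ℝ × ℝ → ℂ} (h : ∀ ξ, ft2 g ξ = 0)
    (t r x : ℝ) : Uop (projJM φ j m g) t r x = 0 := by
  have hproj : projJM φ j m g = 0 := by
    funext x
    simp [projJM, h]
  simp [Uop, ft2, hproj]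

theorem singular_local_smoothing_Uop_large_j_general {φ : ℝ → ℝ} (hφ : IsBump φ) {p q : ℝ≥0∞}
    (hp : 1 ≤ p) (hpq : p ≤ q) (hpq1 : 1 / p + 1 / q ≤ 1)
    {k : ℤ} (hk : k = -1 ∨ k = 0 ∨ k = 1) :
    ∃ C : ℝ, 0 < C ∧ ∀ j l m : ℤ, 0 ≤ m → m ≤ j → ∀ g : ℝ × ℝ → ℂ,
      eLpNorm (fun z : (ℝ × ℝ) × ℝ =>
          (phikl φ k l z.1.1 z.2 : ℂ) * Uop (projJM φ j m g) z.2 z.1.1 z.1.2) q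
          (volume.restrict (univ ×ˢ Icc (1 : ℝ) 2)) ≤
        ENNReal.ofReal (C * (2 : ℝ) ^
            (-(j : ℝ) / 2 + (l : ℝ) * (1 / q).toReal +
              2 * (1 / q).toReal * ((m : ℝ) / 2 - (l : ℝ)) +
              ((j : ℝ) - (m : ℝ)) / 2 * (1 - (1 / p).toReal - (1 / q).toReal) +
              3 * (j : ℝ) / 2 * ((1 / p).toReal - (1 / q).toReal))) *
          eLpNorm g p volume := by
  simp only [one_div, ENNReal.toReal_inv] at hpq1 ⊢
  obtain ⟨C, hC, hwave⟩ := exists_eLpNorm_waveOp_dyadicWeight_le hφ hk hp hpq hpq1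
  refine ⟨C, hC, fun j l m hm hmj g => ?_⟩
  by_cases hg : Integrable g
  swap
  · simp only [Uop_projJM_of_ft2_eq_zero (ft2_eq_zero_of_not_integrable hg), mul_zero]
    rw [eLpNorm_zero']
    exact zero_le
  by_cases hgp : eLpNorm g p volume = ⊤
  · rw [hgp, ENNReal.mul_top (ENNReal.ofReal_pos.2 (by positivity)).ne']
    exact le_top
  have hae := hg.1.ae_eq_mk
  have hft : ∀ ξ, ft2 g ξ = ft2 (hg.1.mk g) ξ := fun ξ =>
    integral_congr_ae (hae.mono fun y hy => by simp only [hy])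
  rw [projJM_congr hft, eLpNorm_congr_ae hae]
  rw [eLpNorm_congr_ae hae] at hgp
  calc _ = eLpNorm (waveOp (fun z => ((2 : ℝ) ^ (j : ℝ)) ^ (-(1 : ℝ) / 2) * dyadicWeight φ k l z)
          (normalizedCutoff φ j m) (hg.1.mk g)) q (volume.restrict (univ ×ˢ Icc (1 : ℝ) 2)) := by
        refine eLpNorm_congr_ae ?_
        filter_upwards [ae_restrict_mem (MeasurableSet.univ.prod measurableSet_Icc)] with z hz
        exact phikl_mul_Uop_projJM hφ k l j m (hg.congr hae) hz.2
    _ ≤ eLpNorm (waveOp (fun z => ((2 : ℝ) ^ (j : ℝ)) ^ (-(1 : ℝ) / 2) * dyadicWeight φ k l z)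
          (normalizedCutoff φ j m) (hg.1.mk g)) q volume :=
        eLpNorm_mono_measure _ Measure.restrict_le_self
    _ ≤ _ := hwave j l m hm hmj (hg.congr hae) hg.1.stronglyMeasurable_mk.measurable hgp
    _ = _ := by
        congr 4
        ring

/-- Proposition 3.10 (improvement for `j > m`): for `j ≥ −1`, `k ∈ {−1,0,1}`, `l ≥ 0`,
`0 ≤ m < j`, `1 ≤ p ≤ q` and `1/p + 1/q ≤ 1`:
`‖φ_{k,l} 𝒰_t 𝒫_{j,m} g‖_{L^q(ℝ²×[1,2])} ≲
2^{−j/2} 2^{l/q} 2^{(2/q)(m/2−l)+((j−m)/2)(1−1/p−1/q)+(3j/2)(1/p−1/q)} ‖g‖_{L^p}`,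
with constant independent of `j, l, m, g`. -/
theorem singular_local_smoothing_Uop_large_j
    (φ : ℝ → ℝ) (hφ : IsLPBump φ) (p q : ℝ≥0∞)
    (hp : 1 ≤ p) (hpq : p ≤ q) (hpq1 : 1/p + 1/q ≤ 1)
    (k : ℤ) (hk : k = -1 ∨ k = 0 ∨ k = 1) :
    ∃ C : ℝ, 0 < C ∧ ∀ j l m : ℤ, -1 ≤ j → 0 ≤ l → 0 ≤ m → m < j → ∀ g : ℝ × ℝ → ℂ,
      eLpNorm (fun z : (ℝ × ℝ) × ℝ =>
          ((phikl φ k l z.1.1 z.2 : ℝ) : ℂ) * Uop (projJM φ j m g) z.2 z.1.1 z.1.2) q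
          (volume.restrict (Set.univ ×ˢ Set.Icc (1:ℝ) 2)) ≤
        ENNReal.ofReal (C * (2:ℝ) ^
            (-(j:ℝ)/2 + (l:ℝ) * (1/q).toReal +
              2 * (1/q).toReal * ((m:ℝ)/2 - (l:ℝ)) +
              ((j:ℝ) - (m:ℝ))/2 * (1 - (1/p).toReal - (1/q).toReal) +
              3 * (j:ℝ)/2 * ((1/p).toReal - (1/q).toReal))) *
          eLpNorm g p volume := by
  obtain ⟨C, hC, hbound⟩ := singular_local_smoothing_Uop_large_j_general hφ.isBump hp hpq hpq1 hk
  exact ⟨C, hC, fun j l m _ _ hm hmj => hbound j l m hm hmj.le⟩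

end
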